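/- Every subshift of quasi-finite type Σ admits at least one and at most finitely many maximum measures. -/

import Mathlib

open Filter Set MeasureTheory

namespace QFTPaper

variable {A : Type*} {B : Type*}

/-- The left shift on bi-infinite sequences over the alphabet `A`. -/
def shift (x : ℤ → A) : ℤ → A := fun n => x (n + 1)

/-- A subshift: a closed, shift-invariant subset of `A^ℤ`. -/
def IsSubshift [TopologicalSpace A] (X : Set (ℤ → A)) : Prop :=
  IsClosed X ∧ shift '' X = X

/-- The finite word `w` occurs in `x` at position `k`. -/
def OccursAt (w : List A) (x : ℤ → A) (k : ℤ) : Prop :=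
  ∀ i : Fin w.length, x (k + (i : ℕ)) = w.get i

/-- The language of `X`: words of length `n` occurring in elements of `X`
(at position `0`, which is no restriction by shift-invariance). -/
def Lang (X : Set (ℤ → A)) (n : ℕ) : Set (List A) :=
  { w | w.length = n ∧ ∃ x ∈ X, OccursAt w x 0 }

/-- Topological entropy of a subshift. -/
noncomputable def hTop (X : Set (ℤ → A)) : ℝ :=
  limsup (fun n : ℕ => Real.log (Nat.card ↥(Lang X n)) / (n : ℝ)) atTop

/-- Follower set of the finite word `w = A₋ₙ…A₀` (listed from `A₋ₙ` to `A₀`):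
the set of one-sided sequences `B₀B₁B₂…` with `B ∈ X` and `B₋ₙ…B₀ = A₋ₙ…A₀`,
realized by requiring `w` to occur in `B` at positions `0,…,n` and reading off
the tail of `B` starting at the position of the last letter of `w`.
For the empty word this gives `X₊` (by shift-invariance). -/
def fol (X : Set (ℤ → A)) (w : List A) : Set (ℕ → A) :=
  { y | ∃ B ∈ X, (∀ i : Fin w.length, B ((i : ℕ) : ℤ) = w.get i) ∧
        ∀ k : ℕ, y k = B ((w.length : ℤ) - 1 + (k : ℤ)) }

/-- `w = A₋ₙ…A₀` is a left constraint:
`∅ ≠ fol(A₋ₙ…A₀) ⊊ fol(A₋ₙ₊₁…A₀)`. -/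
def IsLeftConstraint (X : Set (ℤ → A)) (w : List A) : Prop :=
  w ≠ [] ∧ fol X w ≠ ∅ ∧ fol X w ⊂ fol X w.tail

/-- `𝒞(X, n)`: the set of left constraints of length `n`. -/
def LC (X : Set (ℤ → A)) (n : ℕ) : Set (List A) :=
  { w | w.length = n ∧ IsLeftConstraint X w }

/-- The left constraint entropy `h_𝒞(X) = limsup (1/n) log⁺ #𝒞(X,n)`. -/
noncomputable def hC (X : Set (ℤ → A)) : ℝ :=
  limsup (fun n : ℕ => max 0 (Real.log (Nat.card ↥(LC X n))) / (n : ℝ)) atTop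

/-- The time-reversed subshift `X̄`. -/
def rev (X : Set (ℤ → A)) : Set (ℤ → A) :=
  (fun x : ℤ → A => fun n : ℤ => x (-n)) '' X

/-- The symmetric constraint entropy `h_𝒮𝒞(X) = min (h_𝒞(X), h_𝒞(X̄))`. -/
noncomputable def hSC (X : Set (ℤ → A)) : ℝ := min (hC X) (hC (rev X))

/-- Subshift of quasi-finite type: `h_𝒮𝒞(X) < h_top(X)`. -/
def IsQFT [TopologicalSpace A] (X : Set (ℤ → A)) : Prop :=
  IsSubshift X ∧ hSC X < hTop X

/-- The word `B₋ₘ…B₀` read off from a one-sided past `b` (where `b j = B₋ⱼ`). -/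
def wordOf (b : ℕ → A) (m : ℕ) : List A :=
  (List.range (m + 1)).map fun j => b (m - j)

/-- An extendable left constraint: a left constraint `A₋ₙ…A₀` which admits a
one-sided past `B` extending it such that `B₋ₘ…B₀` is again a left constraint
for infinitely many `m`. -/
def IsExtendable (X : Set (ℤ → A)) (w : List A) : Prop :=
  IsLeftConstraint X w ∧
  ∃ b : ℕ → A, wordOf b (w.length - 1) = w ∧
    ∀ N : ℕ, ∃ m, N ≤ m ∧ IsLeftConstraint X (wordOf b m)

/-- `𝒞*(X, n)`: the set of extendable left constraints of length `n`. -/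
def ELC (X : Set (ℤ → A)) (n : ℕ) : Set (List A) :=
  { w | w.length = n ∧ IsExtendable X w }

/-- The extendable left constraint entropy `h*_𝒞(X)`. -/
noncomputable def hCstar (X : Set (ℤ → A)) : ℝ :=
  limsup (fun n : ℕ => Real.log (Nat.card ↥(ELC X n)) / (n : ℝ)) atTop

/-- `h*_𝒮𝒞(X) = min (h*_𝒞(X), h*_𝒞(X̄))`. -/
noncomputable def hSCstar (X : Set (ℤ → A)) : ℝ := min (hCstar X) (hCstar (rev X))

/-- Subshift of weak quasi-finite type: `h*_𝒮𝒞(X) < h_top(X)`. -/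
def IsWeakQFT [TopologicalSpace A] (X : Set (ℤ → A)) : Prop :=
  IsSubshift X ∧ hSCstar X < hTop X

/-- Subshift of finite type: defined by excluding a finite set of finite words. -/
def IsSFT (X : Set (ℤ → A)) : Prop :=
  ∃ F : Finset (List A), X = { x | ∀ w ∈ F, ∀ k : ℤ, ¬ OccursAt w x k }

/-- Sofic subshift: the image of an SFT under a continuous shift-commuting map. -/
def IsSofic [TopologicalSpace A] (X : Set (ℤ → A)) : Prop :=
  ∃ (B : Type) (_ : Fintype B) (Y : Set (ℤ → B)) (π : (ℤ → B) → (ℤ → A)),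
    IsSFT Y ∧
    (letI : TopologicalSpace B := ⊥
     Continuous π) ∧
    (∀ x : ℤ → B, π (shift x) = shift (π x)) ∧ π '' Y = X


/-- Topological conjugacy of subshifts: a homeomorphism commuting with the shifts. -/
def Conjugate [TopologicalSpace A] [TopologicalSpace B]
    (X : Set (ℤ → A)) (Y : Set (ℤ → B)) : Prop :=
  ∃ φ : X ≃ₜ Y, ∀ x x' : X, (x' : ℤ → A) = shift (x : ℤ → A) →
    (φ x' : ℤ → B) = shift (φ x : ℤ → B)

/-- The cylinder of a word of length `n` placed at positions `0,…,n-1`. -/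
def cylSet (n : ℕ) (w : Fin n → A) : Set (ℤ → A) :=
  { x | ∀ i : Fin n, x ((i : ℕ) : ℤ) = w i }

/-- Entropy of the partition of `A^ℤ` into cylinders of length `n`. -/
noncomputable def blockEntropy [Fintype A] [MeasurableSpace A]
    (μ : Measure (ℤ → A)) (n : ℕ) : ℝ :=
  ∑ w : Fin n → A, Real.negMulLog ((μ (cylSet n w)).toReal)

/-- Kolmogorov–Sinai entropy of a shift-invariant measure on `A^ℤ`,
computed with the natural (generating) partition into cylinders. -/
noncomputable def KSEntropy [Fintype A] [MeasurableSpace A]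
    (μ : Measure (ℤ → A)) : ℝ :=
  ⨅ n : ℕ, blockEntropy μ (n + 1) / (n + 1)

/-- A maximum measure: an ergodic shift-invariant Borel probability measure
carried by `X` whose Kolmogorov–Sinai entropy equals the topological entropy of `X`. -/
def IsMaxMeasure [Fintype A] [MeasurableSpace A]
    (X : Set (ℤ → A)) (μ : Measure (ℤ → A)) : Prop :=
  IsProbabilityMeasure μ ∧ μ Xᶜ = 0 ∧ Ergodic shift μ ∧ KSEntropy μ = hTop X

/-- The number of points of `X` fixed by the `n`-th power of the shift. -/
noncomputable def perCount (X : Set (ℤ → A)) (n : ℕ) : ℕ :=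
  Nat.card {x : ℤ → A | x ∈ X ∧ shift^[n] x = x}


section Part1
open scoped ENNReal
variable {A : Type*}

/-- Two-sided shift by `t`. -/
def sh (t : ℤ) (x : ℤ → A) : ℤ → A := fun n => x (n + t)

/-- The word of length `n` read at position `a`. -/
def blk (x : ℤ → A) (a : ℤ) (n : ℕ) : List A := List.ofFn (fun i : Fin n => x (a + (i : ℕ)))

/-- The word of length `n` ending at `0`. -/
def past (x : ℤ → A) (n : ℕ) : List A := blk x (1 - (n : ℤ)) n

/-- Futures in `S` after reading `u`. -/
def der (S : Set (ℕ → A)) (u : List A) : Set (ℕ → A) :=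
  {z | ∃ y ∈ S, (∀ i : Fin u.length, y ((i : ℕ) + 1) = u.get i) ∧ ∀ k, z k = y (k + u.length)}

lemma sh_one : (sh 1 : (ℤ → A) → (ℤ → A)) = shift := rfl

lemma sh_sh (s t : ℤ) (x : ℤ → A) : sh s (sh t x) = sh (s + t) x := by
  funext n; simp [sh, add_assoc]

lemma sh_zero (x : ℤ → A) : sh 0 x = x := by funext n; simp [sh]

lemma sh_iter (n : ℕ) (x : ℤ → A) : (shift^[n]) x = sh n x := by
  induction n with
  | zero => simp [sh_zero]
  | succ k ih => 
    rw [Function.iterate_succ_apply', ih, ← sh_one, sh_sh]; push_cast; rw [add_comm]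

lemma sh_iter' (t : ℤ) (n : ℕ) (x : ℤ → A) : ((sh t)^[n]) x = sh (n * t) x := by
  induction n with
  | zero => simp [sh_zero]
  | succ k ih => 
    rw [Function.iterate_succ_apply', ih, sh_sh]; push_cast; congr 1; ring

@[simp] lemma blk_length (x : ℤ → A) (a : ℤ) (n : ℕ) : (blk x a n).length = n := by simp [blk]

@[simp] lemma blk_zero (x : ℤ → A) (a : ℤ) : blk x a 0 = [] := by simp [blk]

@[simp] lemma past_length (x : ℤ → A) (n : ℕ) : (past x n).length = n := by simp [past]

lemma blk_getElem (x : ℤ → A) (a : ℤ) (n : ℕ) (i : ℕ) (h : i < (blk x a n).length) :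
    (blk x a n)[i] = x (a + i) := by simp [blk]

lemma blk_eq_iff (x : ℤ → A) (a : ℤ) (w : List A) :
    blk x a w.length = w ↔ ∀ i : Fin w.length, x (a + (i : ℕ)) = w.get i := by
  constructor
  · intro h i
    have := blk_getElem x a w.length i (by simp)
    rw [← this]
    simp [h]
  · intro h
    apply List.ext_getElem (by simp)
    intro i h1 h2
    rw [blk_getElem]
    exact h ⟨i, h2⟩

lemma blk_eq_blk_iff (x y : ℤ → A) (a b : ℤ) (n : ℕ) :
    blk x a n = blk y b n ↔ ∀ i : ℕ, i < n → x (a + i) = y (b + i) := by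
  unfold blk
  rw [List.ofFn_inj, funext_iff]
  exact ⟨fun h i hi => h ⟨i, hi⟩, fun h i => h i i.2⟩

lemma blk_add (x : ℤ → A) (a : ℤ) (m n : ℕ) : blk x a (m + n) = blk x a m ++ blk x (a + m) n := by
  apply List.ext_getElem (by simp)
  intro i h1 h2
  rw [blk_getElem, List.getElem_append]
  split_ifs with h
  · rw [blk_getElem]
  · rw [blk_getElem]
    congr 1
    simp at h h1 ⊢
    omega

lemma blk_succ (x : ℤ → A) (a : ℤ) (n : ℕ) : blk x a (n + 1) = blk x a n ++ [x (a + n)] := by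
  rw [blk_add]; simp [blk]

lemma blk_sh (t : ℤ) (x : ℤ → A) (a : ℤ) (n : ℕ) : blk (sh t x) a n = blk x (a + t) n := by
  rw [blk_eq_blk_iff]; intro i _; simp only [sh]; congr 1; ring

lemma blk_take (x : ℤ → A) (a : ℤ) (m n : ℕ) (h : m ≤ n) : (blk x a n).take m = blk x a m := by
  obtain ⟨k, rfl⟩ := Nat.exists_eq_add_of_le h
  rw [blk_add]; simp

lemma blk_drop (x : ℤ → A) (a : ℤ) (m n : ℕ) : (blk x a (m + n)).drop m = blk x (a + m) n := by
  rw [blk_add]; simp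

lemma past_sh (x : ℤ → A) (n m : ℕ) : past (sh m x) (n + m) = past x n ++ blk x 1 m := by
  unfold past
  rw [blk_sh, blk_add]; congr 2 <;> (push_cast; ring)

lemma past_sh_self (x : ℤ → A) (m : ℕ) : past (sh m x) m = blk x 1 m := by
  have := past_sh x 0 m
  simpa [past] using this

lemma past_succ_tail (x : ℤ → A) (n : ℕ) : (past x (n + 1)).tail = past x n := by
  unfold past
  rw [← List.drop_one, add_comm n 1, blk_drop]; congr 1; push_cast; ring

lemma past_drop (x : ℤ → A) (m n : ℕ) (h : m ≤ n) : (past x n).drop (n - m) = past x m := by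
  unfold past
  obtain ⟨k, rfl⟩ := Nat.exists_eq_add_of_le h
  have : m + k - m = k := by omega
  rw [this, add_comm m k, blk_drop]; congr 1; push_cast; ring

lemma sh_mem [TopologicalSpace A] {X : Set (ℤ → A)} (hX : IsSubshift X) (t : ℤ) (x : ℤ → A) :
    sh t x ∈ X ↔ x ∈ X := by
  have h1 : ∀ x, x ∈ X → sh 1 x ∈ X := by
    intro x hx
    rw [← hX.2]; exact ⟨x, hx, rfl⟩
  have h2 : ∀ x, x ∈ X → sh (-1) x ∈ X := by
    intro x hx
    rw [← hX.2] at hx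
    obtain ⟨y, hy, rfl⟩ := hx
    rw [← sh_one, sh_sh]; simpa [sh_zero] using hy
  have h3 : ∀ (n : ℕ) x, x ∈ X → sh n x ∈ X := by
    intro n
    induction n with
    | zero => intro x hx; simpa [sh_zero] using hx
    | succ k ih => intro x hx; have := h1 _ (ih x hx); rw [sh_sh] at this; convert this using 2; push_cast; ring
  have h4 : ∀ (n : ℕ) x, x ∈ X → sh (-n) x ∈ X := by
    intro n
    induction n with
    | zero => intro x hx; simpa [sh_zero] using hx
    | succ k ih => intro x hx; have := h2 _ (ih x hx); rw [sh_sh] at this; convert this using 2; push_cast; ring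
  have h5 : ∀ (t : ℤ) x, x ∈ X → sh t x ∈ X := by
    intro t x hx
    obtain ⟨n, rfl | rfl⟩ := Int.eq_nat_or_neg t
    · exact h3 n x hx
    · exact h4 n x hx
  refine ⟨fun h => ?_, h5 t x⟩
  have := h5 (-t) _ h
  rw [sh_sh] at this; simpa [sh_zero] using this

lemma mem_fol [TopologicalSpace A] {X : Set (ℤ → A)} (hX : IsSubshift X) (w : List A) (y : ℕ → A) :
    y ∈ fol X w ↔ ∃ B ∈ X, past B w.length = w ∧ ∀ k : ℕ, y k = B k := by
  constructor
  · rintro ⟨B, hB, h1, h2⟩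
    refine ⟨sh (w.length - 1) B, (sh_mem hX _ _).2 hB, ?_, ?_⟩
    · unfold past
      rw [blk_sh, blk_eq_iff]
      intro i; rw [← h1 i]; congr 1; ring
    · intro k; rw [h2]; simp only [sh]; congr 1; ring
  · rintro ⟨B, hB, h1, h2⟩
    refine ⟨sh (1 - w.length) B, (sh_mem hX _ _).2 hB, ?_, ?_⟩
    · unfold past at h1
      rw [blk_eq_iff] at h1
      intro i; rw [← h1 i]; simp only [sh]; congr 1; ring
    · intro k; rw [h2]; simp only [sh]; congr 1; ring

lemma fol_append (X : Set (ℤ → A)) (w u : List A) :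
    fol X (w ++ u) = der (fol X w) u := by
  ext z
  constructor
  · rintro ⟨B, hB, h1, h2⟩
    refine ⟨fun k => B ((w.length : ℤ) - 1 + k), ⟨B, hB, ?_, fun k => rfl⟩, ?_, ?_⟩
    · intro i
      rw [h1 ⟨i, by simp; omega⟩]
      simp
    · intro i
      have := h1 ⟨w.length + i, by simp⟩
      simp at this
      simp only [List.get_eq_getElem]
      rw [← this]; congr 1; push_cast; ring
    · intro k; rw [h2]; congr 1; simp; ring
  · rintro ⟨y, ⟨B, hB, h1, h2⟩, h3, h4⟩
    refine ⟨B, hB, ?_, ?_⟩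
    · rintro ⟨i, hi⟩
      by_cases h : i < w.length
      · have := h1 ⟨i, h⟩
        simp only [List.get_eq_getElem] at this ⊢
        rw [List.getElem_append_left h]; exact this
      · simp at hi
        have := h3 ⟨i - w.length, by omega⟩
        rw [h2] at this
        simp only [List.get_eq_getElem] at this ⊢
        rw [List.getElem_append_right (by omega), ← this]
        congr 1; push_cast; rw [Nat.cast_sub (by omega)]; ring
    · intro k; rw [h4, h2]; congr 1; simp; ring

lemma der_append (S : Set (ℕ → A)) (u v : List A) : der S (u ++ v) = der (der S u) v := by
  ext z
  constructor
  · rintro ⟨y, hy, h1, h2⟩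
    refine ⟨fun k => y (k + u.length), ⟨y, hy, ?_, fun k => rfl⟩, ?_, ?_⟩
    · intro i
      have := h1 ⟨i, by simp; omega⟩
      simpa using this
    · intro i
      have := h1 ⟨u.length + i, by simp⟩
      simp at this
      simp only [List.get_eq_getElem]
      rw [← this]; congr 1; ring
    · intro k; rw [h2]; congr 1; simp; ring
  · rintro ⟨y', ⟨y, hy, h1, h2⟩, h3, h4⟩
    refine ⟨y, hy, ?_, ?_⟩
    · rintro ⟨i, hi⟩
      by_cases h : i < u.length
      · have := h1 ⟨i, h⟩
        simp only [List.get_eq_getElem] at this ⊢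
        rw [List.getElem_append_left h]; exact this
      · simp at hi
        have := h3 ⟨i - u.length, by omega⟩
        rw [h2] at this
        simp only [List.get_eq_getElem] at this ⊢
        rw [List.getElem_append_right (by omega), ← this]
        congr 1; omega
    · intro k; rw [h4, h2]; congr 1; simp; ring

lemma der_nil (S : Set (ℕ → A)) : der S [] = S := by
  ext z
  constructor
  · rintro ⟨y, hy, _, h⟩
    have : z = y := by funext k; simpa using h k
    rwa [this]
  · intro h; exact ⟨z, h, by simp, by simp⟩

lemma fol_cons_subset [TopologicalSpace A] {X : Set (ℤ → A)} (hX : IsSubshift X) (w : List A) :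
    fol X w ⊆ fol X w.tail := by
  intro y hy
  rw [mem_fol hX] at hy ⊢
  obtain ⟨B, hB, h1, h2⟩ := hy
  refine ⟨B, hB, ?_, h2⟩
  cases w with
  | nil => simpa using h1
  | cons a w =>
    have := past_succ_tail B w.length
    simp only [List.length_cons] at h1
    rw [h1] at this
    exact this.symm

lemma fol_past_nonempty [TopologicalSpace A] {X : Set (ℤ → A)} (hX : IsSubshift X) {x : ℤ → A}
    (hx : x ∈ X) (n : ℕ) : (fol X (past x n)).Nonempty :=
  ⟨fun k => x k, (mem_fol hX _ _).2 ⟨x, hx, by simp, fun _ => rfl⟩⟩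

lemma mem_Lang [TopologicalSpace A] {X : Set (ℤ → A)} (hX : IsSubshift X) {x : ℤ → A}
    (hx : x ∈ X) (a : ℤ) (n : ℕ) : blk x a n ∈ Lang X n := by
  refine ⟨by simp, sh a x, (sh_mem hX _ _).2 hx, ?_⟩
  unfold OccursAt
  rw [← blk_eq_iff, blk_sh]; simp

lemma Lang_iff {X : Set (ℤ → A)} (n : ℕ) (w : List A) :
    w ∈ Lang X n ↔ w.length = n ∧ ∃ x ∈ X, blk x 0 n = w := by
  constructor
  · rintro ⟨h, x, hx, h2⟩
    subst h
    exact ⟨rfl, x, hx, (blk_eq_iff _ _ _).2 h2⟩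
  · rintro ⟨h, x, hx, h2⟩
    subst h
    exact ⟨rfl, x, hx, (blk_eq_iff _ _ _).1 h2⟩

lemma Lang_of_fol_append [TopologicalSpace A] {X : Set (ℤ → A)} (hX : IsSubshift X) (w u : List A)
    (h : (fol X (w ++ u)).Nonempty) : u ∈ Lang X u.length := by
  obtain ⟨y, hy⟩ := h
  obtain ⟨B, hB, h1, -⟩ := (mem_fol hX _ _).1 hy
  have h2 : past B u.length = u := by
    rw [← past_drop B u.length (w ++ u).length (by simp), h1]; simp
  have := mem_Lang hX hB (1 - (u.length : ℤ)) u.length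
  change past B u.length ∈ _ at this
  rwa [h2] at this

section meas
variable [Fintype A] [TopologicalSpace A] [DiscreteTopology A] [MeasurableSpace A] [BorelSpace A]

lemma measurable_sh (t : ℤ) : Measurable (sh t : (ℤ → A) → (ℤ → A)) := by
  unfold sh
  exact measurable_pi_lambda _ (fun n => measurable_pi_apply _)

lemma measurableSet_blk (a : ℤ) (n : ℕ) (P : List A → Prop) :
    MeasurableSet {x : ℤ → A | P (blk x a n)} := by
  have h1 : Measurable (fun x : ℤ → A => fun i : Fin n => x (a + (i : ℕ))) :=
    measurable_pi_lambda _ (fun n => measurable_pi_apply _)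
  exact h1 (Set.toFinite {f : Fin n → A | P (List.ofFn f)}).measurableSet

lemma cylSet_eq (n : ℕ) (w : Fin n → A) : cylSet n w = {x | blk x 0 n = List.ofFn w} := by
  ext x
  simp [cylSet, blk, List.ofFn_inj, funext_iff]

/-- shift-invariant probability measures -/
structure Inv (μ : Measure (ℤ → A)) : Prop where
  prob : IsProbabilityMeasure μ
  mp : MeasurePreserving shift μ μ

lemma Inv.sh {μ : Measure (ℤ → A)} (h : Inv μ) (t : ℤ) : MeasurePreserving (sh t) μ μ := by
  have h1 : ∀ n : ℕ, MeasurePreserving (QFTPaper.sh (n : ℤ)) μ μ := by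
    intro n
    have := h.mp.iterate n
    have e : (shift^[n] : (ℤ → A) → _) = QFTPaper.sh n := by funext x; exact sh_iter n x
    rwa [e] at this
  obtain ⟨n, rfl | rfl⟩ := Int.eq_nat_or_neg t
  · exact h1 n
  · refine ⟨measurable_sh _, ?_⟩
    conv_lhs => rw [← (h1 n).map_eq]
    rw [Measure.map_map (measurable_sh _) (measurable_sh _)]
    have : (QFTPaper.sh (-(n : ℤ)) ∘ QFTPaper.sh (n : ℤ) : (ℤ → A) → _) = id := by
      funext x; simp [sh_sh, sh_zero]
    rw [this, Measure.map_id]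

lemma Inv.measure_sh {μ : Measure (ℤ → A)} (h : Inv μ) (t : ℤ) {s : Set (ℤ → A)}
    (hs : MeasurableSet s) : μ {x | QFTPaper.sh t x ∈ s} = μ s :=
  (h.sh t).measure_preimage hs.nullMeasurableSet
end meas

end Part1

section Part2
open scoped ENNReal
set_option linter.unusedSectionVars false
variable {A : Type*}

/-- Weight of a factorization, with history dependent weights. -/
noncomputable def wt (W : List A → List A → ℝ≥0∞) : List A → List (List A) → ℝ≥0∞
  | _, [] => 1
  | hist, w :: ws => W hist w * wt W (hist ++ w) ws

/-- Kraft condition. -/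
def IsKraft (W : List A → List A → ℝ≥0∞) : Prop :=
  ∀ hist, W hist [] = 0 ∧ ∑' u, W hist u ≤ 1

lemma wt_append (W : List A → List A → ℝ≥0∞) (hist : List A) (ws : List (List A)) (u : List A) :
    wt W hist (ws ++ [u]) = wt W hist ws * W (hist ++ ws.flatten) u := by
  induction ws generalizing hist with
  | nil => simp [wt]
  | cons w ws ih => simp [wt, ih, mul_assoc]

/-- Total weight of all factorizations. -/
noncomputable def kq (W : List A → List A → ℝ≥0∞) (n : ℕ) (hist v : List A) : ℝ≥0∞ :=
  if n = 0 then 1 else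
    ∑ i : Fin n, W hist (v.take (i + 1)) *
      kq W (n - (i + 1)) (hist ++ v.take (i + 1)) (v.drop (i + 1))
termination_by n

lemma kq_zero (W : List A → List A → ℝ≥0∞) (hist v : List A) : kq W 0 hist v = 1 := by
  rw [kq]; simp

lemma kq_ge (W : List A → List A → ℝ≥0∞) (hW : IsKraft W) (ws : List (List A)) (hist : List A) :
    wt W hist ws ≤ kq W ws.flatten.length hist ws.flatten := by
  induction ws generalizing hist with
  | nil => simp [wt, kq_zero]
  | cons w ws ih =>
    by_cases hw : w = []
    · subst hw; simp [wt, (hW hist).1]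
    · have hl : 0 < w.length := List.length_pos_iff.2 hw
      have hl2 : w.length - 1 + 1 = w.length := by omega
      rw [kq, if_neg (by simp; intro h; exact absurd h hw)]
      have hi : w.length - 1 < (w :: ws).flatten.length := by simp; omega
      refine le_trans ?_ (Finset.single_le_sum (fun _ _ => zero_le)
        (Finset.mem_univ (⟨w.length - 1, hi⟩ : Fin _)))
      simp only [wt, hl2]
      have e1 : (w :: ws).flatten.take w.length = w := by simp
      have e2 : (w :: ws).flatten.drop w.length = ws.flatten := by simp
      have e3 : (w :: ws).flatten.length - w.length = ws.flatten.length := by simp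
      rw [e1, e2, e3]
      gcongr
      exact ih _

open Classical in
lemma kq_sum (W : List A → List A → ℝ≥0∞) (hW : IsKraft W) (n : ℕ) (hist : List A) :
    ∑' v : List A, (if v.length = n then kq W n hist v else 0) ≤ 1 := by
  induction n using Nat.strong_induction_on generalizing hist with
  | _ n ih =>
  by_cases hn : n = 0
  · subst hn
    rw [tsum_eq_single []]
    · simp [kq_zero]
    · intro b hb; simp [hb]
  · have h1 : ∀ v : List A, (if v.length = n then kq W n hist v else 0) ≤
        ∑ i : Fin n, (fun p : List A × List A => 
          (if p.1.length = i + 1 then W hist p.1 else 0) *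
          (if p.2.length = n - (i + 1) then kq W (n - (i+1)) (hist ++ p.1) p.2 else 0))
          (v.take (i + 1), v.drop (i + 1)) := by
      intro v
      split_ifs with hv
      · rw [kq, if_neg hn]
        apply Finset.sum_le_sum
        intro i _
        have := i.2
        have e1 : (v.take (i + 1)).length = i + 1 := by simp; omega
        have e2 : (v.drop (i + 1)).length = n - (i + 1) := by simp; omega
        simp only [e1, e2, if_true]
        exact le_rfl
      · exact zero_le
    refine (ENNReal.tsum_le_tsum h1).trans ?_
    rw [Summable.tsum_finsetSum (fun _ _ => ENNReal.summable)]
    have h2 : ∀ i : Fin n, (∑' v : List A, (fun p : List A × List A => 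
          (if p.1.length = i + 1 then W hist p.1 else 0) *
          (if p.2.length = n - (i + 1) then kq W (n - (i+1)) (hist ++ p.1) p.2 else 0))
          (v.take (i + 1), v.drop (i + 1))) ≤ 
          ∑' u : List A, (if u.length = i + 1 then W hist u else 0) := by
      intro i
      have hinj : Function.Injective (fun v : List A => (v.take (i + 1), v.drop (i + 1))) := by
        intro v v' h
        simp only [Prod.mk.injEq] at h
        rw [← List.take_append_drop (i + 1) v, h.1, h.2, List.take_append_drop]
      refine (ENNReal.tsum_comp_le_tsum_of_injective hinj (fun p : List A × List A =>
          (if p.1.length = i + 1 then W hist p.1 else 0) *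
          (if p.2.length = n - (i + 1) then kq W (n - (i+1)) (hist ++ p.1) p.2 else 0))).trans ?_
      rw [ENNReal.tsum_prod']
      apply ENNReal.tsum_le_tsum
      intro u
      dsimp only
      calc _ = (if u.length = i + 1 then W hist u else 0) * ∑' b : List A,
              (if b.length = n - (i + 1) then kq W (n - (i+1)) (hist ++ u) b else 0) :=
            ENNReal.tsum_mul_left
        _ ≤ (if u.length = i + 1 then W hist u else 0) * 1 := by
            gcongr
            exact ih _ (by have := i.2; omega) _
        _ = _ := mul_one _
    refine (Finset.sum_le_sum (fun i _ => h2 i)).trans ?_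
    rw [← Summable.tsum_finsetSum (fun _ _ => ENNReal.summable)]
    refine le_trans (ENNReal.tsum_le_tsum ?_) (hW hist).2
    intro u
    by_cases h : ∃ i : Fin n, u.length = i + 1
    · obtain ⟨i, hi⟩ := h
      rw [Finset.sum_eq_single i]
      · simp [hi]
      · intro b _ hb
        rw [if_neg]
        intro h; apply hb; ext; omega
      · simp
    · push Not at h
      rw [Finset.sum_eq_zero]
      · exact zero_le
      · intro i _; rw [if_neg (h i)]

section meas
variable [Fintype A] [TopologicalSpace A] [DiscreteTopology A] [MeasurableSpace A] [BorelSpace A]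

lemma measurableSet_blk_eq (a : ℤ) (n : ℕ) (w : List A) :
    MeasurableSet {x : ℤ → A | blk x a n = w} := measurableSet_blk a n (fun v => v = w)

/-- Entropy of the window of length `n` at `a`. -/
noncomputable def He (μ : Measure (ℤ → A)) (a : ℤ) (n : ℕ) : ℝ :=
  ∑ w : Fin n → A, Real.negMulLog (μ.real {x | blk x a n = List.ofFn w})

lemma He_zero (μ : Measure (ℤ → A)) (n : ℕ) : blockEntropy μ n = He μ 0 n := by
  unfold blockEntropy He
  simp [cylSet_eq, Measure.real]

lemma He_inv {μ : Measure (ℤ → A)} (h : Inv μ) (a : ℤ) (n : ℕ) : blockEntropy μ n = He μ a n := by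
  rw [He_zero]
  unfold He
  congr 1; funext w; congr 1
  unfold Measure.real
  congr 1
  rw [← h.measure_sh a (measurableSet_blk_eq 0 n _)]
  simp [blk_sh]

lemma sum_real_blk (μ : Measure (ℤ → A)) [IsProbabilityMeasure μ] (a : ℤ) (n : ℕ) (f : (ℤ → A) → ℝ)
    (hf : Integrable f μ) :
    ∑ w : Fin n → A, ∫ x in {x | blk x a n = List.ofFn w}, f x ∂μ = ∫ x, f x ∂μ := by
  rw [← integral_iUnion_fintype]
  · have : (⋃ w : Fin n → A, {x : ℤ → A | blk x a n = List.ofFn w}) = univ := by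
      ext x; simp [blk, List.ofFn_inj]
    rw [this]; simp
  · intro w; exact measurableSet_blk_eq a n _
  · intro w w' hww
    rw [Function.onFun, Set.disjoint_left]
    intro x hx hx'
    exact hww (List.ofFn_injective (hx.symm.trans hx'))
  · intro w; exact hf.integrableOn

lemma gibbs_term (p q I : ℝ) (hp : 0 ≤ p) (hq : 0 < p → 0 < q) (hq0 : 0 ≤ q)
    (h : 0 < p → -p * Real.log q ≤ I) (h0 : p = 0 → 0 ≤ I) :
    Real.negMulLog p ≤ I + (q - p) := by
  rcases hp.eq_or_lt with h1 | h1
  · subst h1; simp; linarith [h0 rfl]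
  · have h2 := h h1
    have h3 := hq h1
    have h4 : Real.log (q / p) ≤ q / p - 1 := Real.log_le_sub_one_of_pos (by positivity)
    rw [Real.log_div h3.ne' h1.ne'] at h4
    have h5 : p * (Real.log q - Real.log p) ≤ p * (q / p - 1) := by gcongr
    have h6 : p * (q / p - 1) = q - p := by field_simp
    unfold Real.negMulLog
    linarith

open Classical in
lemma gibbs (μ : Measure (ℤ → A)) [IsProbabilityMeasure μ] (a : ℤ) (n : ℕ) (q : List A → ℝ≥0∞)
    (hq : ∑' v : List A, (if v.length = n then q v else 0) ≤ 1)
    (f : (ℤ → A) → ℝ) (hf : Integrable f μ)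
    (h : ∀ᵐ x ∂μ, ENNReal.ofReal (Real.exp (- f x)) ≤ q (blk x a n)) :
    He μ a n ≤ ∫ x, f x ∂μ := by
  have hqs : ∑ w : Fin n → A, q (List.ofFn w) ≤ 1 := by
    refine le_trans ?_ hq
    have : ∑ w : Fin n → A, q (List.ofFn w) = ∑' w : Fin n → A, (fun v : List A => if v.length = n then q v else 0) (List.ofFn w) := by
      rw [tsum_fintype]; simp
    rw [this]
    exact ENNReal.tsum_comp_le_tsum_of_injective List.ofFn_injective _
  have hqf : ∀ w : Fin n → A, q (List.ofFn w) ≠ ∞ := by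
    intro w
    have := Finset.single_le_sum (f := fun w : Fin n → A => q (List.ofFn w)) (fun _ _ => zero_le) (Finset.mem_univ w)
    exact ne_top_of_le_ne_top ENNReal.one_ne_top (this.trans hqs)
  have hqs' : ∑ w : Fin n → A, (q (List.ofFn w)).toReal ≤ 1 := by
    rw [← ENNReal.toReal_sum (fun w _ => hqf w)]
    exact ENNReal.toReal_le_of_le_ofReal zero_le_one (by simpa using hqs)
  have hps : ∑ w : Fin n → A, μ.real {x | blk x a n = List.ofFn w} = 1 := by
    have := sum_real_blk μ a n (fun _ => 1) (integrable_const _)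
    simpa using this
  have key : ∀ w : Fin n → A, Real.negMulLog (μ.real {x | blk x a n = List.ofFn w}) ≤
      (∫ x in {x | blk x a n = List.ofFn w}, f x ∂μ) + 
      ((q (List.ofFn w)).toReal - μ.real {x | blk x a n = List.ofFn w}) := by
    intro w
    set C := {x : ℤ → A | blk x a n = List.ofFn w} with hC
    have hCm : MeasurableSet C := measurableSet_blk_eq a n _
    have hpos : 0 < μ.real C → 0 < (q (List.ofFn w)).toReal := by
      intro hp
      by_contra hcon
      have h0 : q (List.ofFn w) = 0 := by
        have h1 : (q (List.ofFn w)).toReal = 0 := le_antisymm (not_lt.1 hcon) ENNReal.toReal_nonneg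
        rcases (ENNReal.toReal_eq_zero_iff _).1 h1 with h | h
        · exact h
        · exact absurd h (hqf w)
      have : μ C = 0 := by
        refine measure_mono_null ?_ (ae_iff.1 h)
        intro x hx
        simp only [mem_ofPred_eq]
        rw [show blk x a n = List.ofFn w from hx, h0, not_le]
        simp [Real.exp_pos]
      simp [Measure.real, this] at hp
    apply gibbs_term _ _ _ measureReal_nonneg hpos ENNReal.toReal_nonneg
    · intro hp
      have hq' := hpos hp
      have : ∫ x in C, (- Real.log (q (List.ofFn w)).toReal) ∂μ ≤ ∫ x in C, f x ∂μ := by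
        apply integral_mono_ae
        · exact integrable_const _
        · exact hf.integrableOn
        · rw [Filter.EventuallyLE, ae_restrict_iff' hCm]
          filter_upwards [h] with x hx hxC
          rw [show blk x a n = List.ofFn w from hxC] at hx
          have := (ENNReal.ofReal_le_iff_le_toReal (hqf w)).1 hx
          have h3 := Real.log_le_log (Real.exp_pos _) this
          rw [Real.log_exp] at h3
          linarith
      simp at this
      linarith
    · intro hp
      have : μ C = 0 := by
        simpa [Measure.real, ENNReal.toReal_eq_zero_iff] using hp
      rw [Measure.restrict_eq_zero.2 this]; simp
  unfold He
  refine (Finset.sum_le_sum (fun w _ => key w)).trans ?_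
  rw [Finset.sum_add_distrib, sum_real_blk μ a n f hf, Finset.sum_sub_distrib, hps]
  linarith

lemma code_bound (μ : Measure (ℤ → A)) [IsProbabilityMeasure μ] (a : ℤ) (n : ℕ) 
    (W : List A → List A → ℝ≥0∞) (hW : IsKraft W)
    (f : (ℤ → A) → ℝ) (hf : Integrable f μ)
    (h : ∀ᵐ x ∂μ, ∃ ws : List (List A), ws.flatten = blk x a n ∧
      ENNReal.ofReal (Real.exp (- f x)) ≤ wt W [] ws) :
    He μ a n ≤ ∫ x, f x ∂μ := by
  apply gibbs μ a n (kq W n []) (kq_sum W hW n []) f hf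
  filter_upwards [h] with x hx
  obtain ⟨ws, h1, h2⟩ := hx
  have := kq_ge W hW ws []
  rw [h1] at this
  simp only [blk_length] at this
  exact h2.trans this

/-- Cost formulation: `v` can be coded with cost at most `c`. -/
def Codes (W : List A → List A → ℝ≥0∞) (v : List A) (c : ℝ) : Prop :=
  ∃ ws : List (List A), ws.flatten = v ∧ ENNReal.ofReal (Real.exp (- c)) ≤ wt W [] ws

lemma Codes.nil (W : List A → List A → ℝ≥0∞) : Codes W [] 0 := ⟨[], by simp, by simp [wt]⟩

lemma Codes.mono {W : List A → List A → ℝ≥0∞} {v : List A} {c c' : ℝ} (h : Codes W v c) (hc : c ≤ c') :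
    Codes W v c' := by
  obtain ⟨ws, h1, h2⟩ := h
  refine ⟨ws, h1, le_trans ?_ h2⟩
  gcongr

lemma Codes.append {W : List A → List A → ℝ≥0∞} {v u : List A} {c d : ℝ} (h : Codes W v c)
    (hu : ENNReal.ofReal (Real.exp (- d)) ≤ W v u) : Codes W (v ++ u) (c + d) := by
  obtain ⟨ws, h1, h2⟩ := h
  refine ⟨ws ++ [u], by simp [h1], ?_⟩
  rw [wt_append, h1, List.nil_append, neg_add, Real.exp_add, ENNReal.ofReal_mul (Real.exp_pos _).le]
  gcongr

end meas

end Part2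

section Part3
open scoped ENNReal
set_option linter.unusedSectionVars false
variable {A : Type*}

open Classical in
lemma tsum_length [Fintype A] (n : ℕ) (f : List A → ℝ≥0∞) :
    ∑' u : List A, (if u.length = n then f u else 0) = ∑ w : Fin n → A, f (List.ofFn w) := by
  have h := (List.ofFn_injective (α := A) (n := n)).tsum_eq (f := fun u : List A => if u.length = n then f u else 0) ?_
  · rw [← h, tsum_fintype]; simp
  · intro u hu
    have : u.length = n := by by_contra hcon; simp [hcon] at hu
    subst this
    exact ⟨u.get, by simp⟩

open Classical in
lemma tsum_by_length (f : List A → ℝ≥0∞) :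
    ∑' u : List A, f u = ∑' n : ℕ, ∑' u : List A, (if u.length = n then f u else 0) := by
  rw [ENNReal.tsum_comm]
  congr 1; funext u
  rw [tsum_eq_single u.length]
  · simp
  · intro b hb; rw [if_neg hb.symm]

open Classical in
lemma tsum_set_const (s : Set (List A)) (hs : s.Finite) (c : ℝ≥0∞) :
    ∑' u : List A, (if u ∈ s then c else 0) = (Nat.card s : ℝ≥0∞) * c := by
  have : Fintype s := hs.fintype
  have h1 : (fun u : List A => if u ∈ s then c else 0) = s.indicator (fun _ => c) := by
    funext u; simp [Set.indicator]
  rw [h1, ← tsum_subtype, tsum_fintype]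
  simp

lemma finite_of_length [Fintype A] (n : ℕ) (s : Set (List A)) (h : ∀ w ∈ s, w.length = n) : s.Finite :=
  (List.finite_length_eq A n).subset h

lemma card_of_length [Fintype A] (n : ℕ) (s : Set (List A)) (h : ∀ w ∈ s, w.length = n) :
    Nat.card s ≤ Fintype.card A ^ n := by
  have h1 : Nat.card s ≤ Nat.card {l : List A | l.length = n} :=
    Nat.card_mono (List.finite_length_eq A n) h
  refine h1.trans ?_
  have : Nat.card {l : List A | l.length = n} = Fintype.card (List.Vector A n) := by
    rw [← Nat.card_eq_fintype_card]; rfl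
  rw [this, card_vector]

lemma log_card_nonneg (n : ℕ) : 0 ≤ Real.log (n : ℝ) := Real.log_natCast_nonneg n

lemma log_card_le [Fintype A] (n : ℕ) (s : Set (List A)) (h : ∀ w ∈ s, w.length = n) :
    Real.log (Nat.card s) ≤ n * Real.log (Fintype.card A) := by
  rcases Nat.eq_zero_or_pos (Nat.card s) with h0 | h0
  · rw [h0]; simp; have := log_card_nonneg (Fintype.card A); positivity
  · rw [← Real.log_pow]
    apply Real.log_le_log (by exact_mod_cast h0)
    exact_mod_cast card_of_length n s h

lemma Lang_len {X : Set (ℤ → A)} (n : ℕ) : ∀ w ∈ Lang X n, w.length = n := fun _ h => h.1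
lemma LC_len {X : Set (ℤ → A)} (n : ℕ) : ∀ w ∈ LC X n, w.length = n := fun _ h => h.1

lemma div_n_le {a b : ℝ} (n : ℕ) (hb : 0 ≤ b) (h : a ≤ n * b) : a / n ≤ b := by
  rcases Nat.eq_zero_or_pos n with h0 | h0
  · subst h0; simpa using hb
  · rw [div_le_iff₀ (by exact_mod_cast h0)]; linarith

lemma Lang_upper [Fintype A] (X : Set (ℤ → A)) {ε : ℝ} (hε : 0 < ε) :
    ∀ᶠ n : ℕ in atTop, Real.log (Nat.card (Lang X n)) ≤ (hTop X + ε) * n := by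
  have hlt : limsup (fun n : ℕ => Real.log (Nat.card ↥(Lang X n)) / (n : ℝ)) atTop < hTop X + ε := by
    change hTop X < _; linarith
  have := eventually_lt_of_limsup_lt hlt ?_
  · filter_upwards [this, eventually_gt_atTop 0] with n hn h0
    rw [div_lt_iff₀ (by exact_mod_cast h0)] at hn
    exact hn.le
  · exact isBoundedUnder_of ⟨Real.log (Fintype.card A), fun n =>
      div_n_le n (log_card_nonneg _) (log_card_le n _ (Lang_len n))⟩

lemma Lang_lower [Fintype A] (X : Set (ℤ → A)) {ε : ℝ} (hε : 0 < ε) :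
    ∃ᶠ n : ℕ in atTop, (hTop X - ε) * n ≤ Real.log (Nat.card (Lang X n)) := by
  have hlt : hTop X - ε < limsup (fun n : ℕ => Real.log (Nat.card ↥(Lang X n)) / (n : ℝ)) atTop := by
    change _ < hTop X; linarith
  have := frequently_lt_of_lt_limsup ?_ hlt
  · refine (this.and_eventually (eventually_gt_atTop 0)).mono ?_
    rintro n ⟨hn, h0⟩
    rw [lt_div_iff₀ (by exact_mod_cast h0)] at hn
    exact hn.le
  · exact IsBoundedUnder.isCoboundedUnder_le (isBoundedUnder_of ⟨0, fun n => div_nonneg (log_card_nonneg _) (Nat.cast_nonneg _)⟩)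

lemma LC_upper [Fintype A] (X : Set (ℤ → A)) {r : ℝ} (hr : hC X < r) :
    0 < r ∧ ∀ᶠ n : ℕ in atTop, (Nat.card (LC X n) : ℝ) ≤ Real.exp (r * n) := by
  have := eventually_lt_of_limsup_lt hr ?_
  · have h2 : ∀ᶠ n : ℕ in atTop, 0 < r ∧ (Nat.card (LC X n) : ℝ) ≤ Real.exp (r * n) := by
      filter_upwards [this, eventually_gt_atTop 0] with n hn h0
      have hr : 0 < r := lt_of_le_of_lt (div_nonneg (le_max_left _ _) (Nat.cast_nonneg _)) hn
      refine ⟨hr, ?_⟩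
      rw [div_lt_iff₀ (by exact_mod_cast h0)] at hn
      have h3 := (le_max_right _ _).trans hn.le
      rcases Nat.eq_zero_or_pos (Nat.card (LC X n)) with h0 | h0
      · rw [h0]; simp; positivity
      · rw [← Real.log_le_iff_le_exp (by exact_mod_cast h0)]; exact h3
    obtain ⟨n, hn⟩ := h2.exists
    exact ⟨hn.1, h2.mono fun _ h => h.2⟩
  · refine isBoundedUnder_of ⟨Real.log (Fintype.card A), fun n => ?_⟩
    apply div_n_le n (log_card_nonneg _)
    apply max_le
    · have := log_card_nonneg (Fintype.card A); positivity
    · exact log_card_le n _ (LC_len n)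

open Classical in
lemma exists_N [Fintype A] (X : Set (ℤ → A)) {r s : ℝ} (hr : hC X < r) (hrs : r < s) :
    ∃ N : ℕ, 1 ≤ N ∧ ∑' u : List A, (if N ≤ u.length ∧ IsLeftConstraint X u then
      ENNReal.ofReal (Real.exp (- (s * u.length))) else 0) ≤ 1 / 2 := by
  obtain ⟨-, h2⟩ := LC_upper X hr
  obtain ⟨N0, h2⟩ := eventually_atTop.1 h2
  set g : ℕ → ℝ≥0∞ := fun n => ENNReal.ofReal (Real.exp (-(s - r)) ^ n) with hg
  have hgs : ∑' n, g n ≠ ∞ := by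
    rw [← ENNReal.ofReal_tsum_of_nonneg]
    · exact ENNReal.ofReal_ne_top
    · intro n; positivity
    · apply summable_geometric_of_lt_one (by positivity)
      rw [Real.exp_lt_one_iff]; linarith
  have ht := ENNReal.tendsto_sum_nat_add g hgs
  have hev := ht.eventually (gt_mem_nhds (show (0 : ℝ≥0∞) < 1 / 2 by simp))
  obtain ⟨N, hN1, hN2⟩ := (hev.and (eventually_ge_atTop (max N0 1))).exists
  refine ⟨N, le_trans (le_max_right _ _) hN2, le_trans ?_ hN1.le⟩
  rw [tsum_by_length]
  have h3 : ∀ n, (∑' u : List A, (if u.length = n then (if N ≤ u.length ∧ IsLeftConstraint X u then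
      ENNReal.ofReal (Real.exp (- (s * u.length))) else 0) else 0)) ≤ if N ≤ n then g n else 0 := by
    intro n
    split_ifs with hn
    · calc _ ≤ ∑' u : List A, (if u ∈ LC X n then ENNReal.ofReal (Real.exp (- (s * n))) else 0) := by
            apply ENNReal.tsum_le_tsum
            intro u
            by_cases h1 : u.length = n
            · by_cases h4 : IsLeftConstraint X u
              · have : u ∈ LC X n := ⟨h1, h4⟩
                simp [this, h1, h4, hn]
              · simp [h4]
            · simp [h1]
        _ = (Nat.card (LC X n) : ℝ≥0∞) * ENNReal.ofReal (Real.exp (- (s * n))) :=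
            tsum_set_const _ (finite_of_length n _ (LC_len n)) _
        _ ≤ ENNReal.ofReal (Real.exp (r * n)) * ENNReal.ofReal (Real.exp (- (s * n))) := by
            gcongr
            rw [← ENNReal.ofReal_natCast]
            apply ENNReal.ofReal_le_ofReal
            exact h2 n (le_trans (le_max_left _ _) (hN2.trans hn))
        _ = g n := by
            rw [← ENNReal.ofReal_mul (by positivity), ← Real.exp_add, hg]
            simp only
            rw [← Real.exp_nat_mul]; congr 2; ring
    · apply le_of_eq
      rw [ENNReal.tsum_eq_zero]
      intro u
      by_cases h1 : u.length = n
      · rw [if_pos h1, if_neg]; rintro ⟨h, -⟩; omega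
      · simp [h1]
  refine (ENNReal.tsum_le_tsum h3).trans ?_
  have h4 := (add_left_injective N).tsum_eq (f := fun n => if N ≤ n then g n else 0) ?_
  · rw [← h4]; simp
  · intro n hn
    have : N ≤ n := by by_contra hcon; simp [hcon] at hn
    exact ⟨n - N, by simp; omega⟩

/-- elementary: linear comparison -/
lemma le_of_forall_nat_mul {a b c : ℝ} (h : ∀ n : ℕ, n * a ≤ n * b + c) : a ≤ b := by
  by_contra hcon
  push Not at hcon
  obtain ⟨n, hn⟩ := exists_nat_gt (c / (a - b))
  rw [div_lt_iff₀ (by linarith)] at hn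
  have := h n
  nlinarith

section meas
variable [Fintype A] [TopologicalSpace A] [DiscreteTopology A] [MeasurableSpace A] [BorelSpace A]

/-- number of visits to `B` -/
noncomputable def cnt (B : Set (ℤ → A)) (n : ℕ) (x : ℤ → A) : ℝ :=
  ∑ s ∈ Finset.range n, B.indicator (fun _ => (1 : ℝ)) (sh s x)

lemma integrable_indicator_sh {μ : Measure (ℤ → A)} (hμ : Inv μ) {B : Set (ℤ → A)} (hB : MeasurableSet B) (t : ℤ) :
    Integrable (fun x => B.indicator (fun _ => (1 : ℝ)) (sh t x)) μ := by
  have := hμ.prob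
  have h1 : Integrable (B.indicator (fun _ => (1 : ℝ))) μ := (integrable_const _).indicator hB
  exact (hμ.sh t).integrable_comp_of_integrable h1

lemma integral_indicator_sh {μ : Measure (ℤ → A)} (hμ : Inv μ) {B : Set (ℤ → A)} (hB : MeasurableSet B) (t : ℤ) :
    ∫ x, B.indicator (fun _ => (1 : ℝ)) (sh t x) ∂μ = μ.real B := by
  have := hμ.prob
  have h1 : (fun x => B.indicator (fun _ => (1 : ℝ)) (sh t x)) = (sh t ⁻¹' B).indicator (fun _ => 1) := by
    funext x; rfl
  rw [h1, integral_indicator (measurable_sh t hB)]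
  simp only [integral_const, smul_eq_mul, mul_one, MeasurableSet.univ, measureReal_restrict_apply, univ_inter]
  unfold Measure.real
  congr 1
  exact hμ.measure_sh t hB

lemma cnt_integrable {μ : Measure (ℤ → A)} (hμ : Inv μ) {B : Set (ℤ → A)} (hB : MeasurableSet B) (n : ℕ) :
    Integrable (cnt B n) μ := by
  unfold cnt
  exact integrable_finsetSum _ (fun s _ => integrable_indicator_sh hμ hB s)

lemma cnt_integral {μ : Measure (ℤ → A)} (hμ : Inv μ) {B : Set (ℤ → A)} (hB : MeasurableSet B) (n : ℕ) :
    ∫ x, cnt B n x ∂μ = n * μ.real B := by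
  unfold cnt
  rw [integral_finsetSum _ (fun (s : ℕ) _ => integrable_indicator_sh hμ hB (s : ℤ))]
  simp [integral_indicator_sh hμ hB]

lemma cnt_succ (B : Set (ℤ → A)) (n : ℕ) (x : ℤ → A) :
    cnt B (n + 1) x = cnt B n x + B.indicator (fun _ => (1 : ℝ)) (sh n x) := by
  simp [cnt, Finset.sum_range_succ]

lemma cnt_mono (B : Set (ℤ → A)) {m n : ℕ} (h : m ≤ n) (x : ℤ → A) : cnt B m x ≤ cnt B n x := by
  unfold cnt
  apply Finset.sum_le_sum_of_subset_of_nonneg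
  · intro i hi; simp at hi ⊢; omega
  · intro i _ _; exact Set.indicator_nonneg (fun _ _ => zero_le_one) _

lemma cnt_nonneg (B : Set (ℤ → A)) (n : ℕ) (x : ℤ → A) : 0 ≤ cnt B n x := by
  unfold cnt
  exact Finset.sum_nonneg (fun i _ => Set.indicator_nonneg (fun _ _ => zero_le_one) _)

open Classical in
/-- weights for the covering by constraints -/
noncomputable def W1 (X : Set (ℤ → A)) (N : ℕ) (s : ℝ) (_ u : List A) : ℝ≥0∞ :=
  (if u.length = 1 then ENNReal.ofReal (1 / (2 * Fintype.card A)) else 0) +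
  (if N ≤ u.length ∧ IsLeftConstraint X u then ENNReal.ofReal (Real.exp (- (s * u.length))) else 0)

open Classical in
lemma W1_kraft [Nonempty A] {X : Set (ℤ → A)} {N : ℕ} {s : ℝ} 
    (hN : ∑' u : List A, (if N ≤ u.length ∧ IsLeftConstraint X u then
      ENNReal.ofReal (Real.exp (- (s * u.length))) else 0) ≤ 1 / 2) : IsKraft (W1 X N s) := by
  intro hist
  constructor
  · simp [W1, IsLeftConstraint]
  · unfold W1
    rw [ENNReal.tsum_add, tsum_length]
    have h1 : ∑ w : Fin 1 → A, ENNReal.ofReal (1 / (2 * Fintype.card A)) = 1 / 2 := by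
      rw [Finset.sum_const]
      simp only [Finset.card_univ, Fintype.card_pi, Finset.prod_const, Fintype.card_fin, pow_one, nsmul_eq_mul]
      have hc : (0 : ℝ) < Fintype.card A := by exact_mod_cast Fintype.card_pos
      rw [← ENNReal.ofReal_natCast, ← ENNReal.ofReal_mul (by positivity)]
      have : (Fintype.card A : ℝ) * (1 / (2 * Fintype.card A)) = 1 / 2 := by field_simp
      rw [this, ENNReal.ofReal_div_of_pos (by norm_num)]; simp
    rw [h1]
    calc _ ≤ (1 / 2 : ℝ≥0∞) + 1 / 2 := by gcongr
      _ = 1 := ENNReal.add_halves 1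

/-- letters only -/
lemma codes_letters {W : List A → List A → ℝ≥0∞} {b : ℝ} (hW : ∀ h a, ENNReal.ofReal (Real.exp (-b)) ≤ W h [a])
    {v : List A} {c : ℝ} (hv : Codes W v c) (u : List A) : Codes W (v ++ u) (c + u.length * b) := by
  induction u using List.reverseRecOn with
  | nil => simpa using hv
  | append_singleton u a ih =>
    have := ih.append (hW (v ++ u) a)
    rw [← List.append_assoc]
    refine this.mono ?_
    simp; linarith

lemma tight_chain [Nonempty A] {X : Set (ℤ → A)} {N L : ℕ} {s : ℝ} (hs : 0 ≤ s) (hN1 : 1 ≤ N) (x : ℤ → A) 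
    (Bad : Set (ℤ → A)) (hBad : Bad = {x | ∀ m ∈ Finset.Icc N L, ¬ IsLeftConstraint X (past x m)}) (n : ℕ) :
    Codes (W1 X N s) (blk x 1 n) (s * n + Real.log (2 * Fintype.card A) * L + Real.log (2 * Fintype.card A) *
      (cnt Bad (n + 1) x)) := by
  have hc : (1 : ℝ) ≤ Fintype.card A := by exact_mod_cast Fintype.card_pos
  set b := Real.log (2 * Fintype.card A) with hb
  have hb0 : 0 ≤ b := Real.log_nonneg (by linarith)
  have hlet : ∀ h a, ENNReal.ofReal (Real.exp (-b)) ≤ W1 X N s h [a] := by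
    intro h a
    unfold W1
    rw [hb, Real.exp_neg, Real.exp_log (by linarith)]
    simp
  induction n using Nat.strong_induction_on with
  | _ n ih =>
  have hcn := cnt_nonneg Bad (n + 1) x
  rcases Nat.eq_zero_or_pos n with h0 | h0
  · subst h0
    simp only [blk_zero]
    exact (Codes.nil _).mono (by positivity)
  by_cases hx : sh n x ∈ Bad
  · obtain ⟨k, rfl⟩ : ∃ k, n = k + 1 := ⟨n - 1, by omega⟩
    have h1 := (ih k (by omega)).append (hlet _ (x (1 + k)))
    rw [blk_succ]
    refine h1.mono ?_
    rw [cnt_succ Bad (k + 1), Set.indicator_of_mem hx]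
    push_cast
    nlinarith
  · rw [hBad] at hx
    simp only [mem_ofPred_eq, not_forall, not_not] at hx
    obtain ⟨m, hm, hx⟩ := hx
    rw [Finset.mem_Icc] at hm
    by_cases hmn : m ≤ n
    · obtain ⟨k, rfl⟩ : ∃ k, n = k + m := ⟨n - m, by omega⟩
      rw [blk_add]
      have e : past (sh ((k + m : ℕ) : ℤ) x) m = blk x (1 + k) m := by
        unfold past; rw [blk_sh]; congr 1; push_cast; ring
      rw [e] at hx
      have h1 : ENNReal.ofReal (Real.exp (-(s * m))) ≤ W1 X N s (blk x 1 k) (blk x (1 + k) m) := by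
        unfold W1
        rw [blk_length, if_pos (show N ≤ m ∧ _ from ⟨hm.1, hx⟩)]
        exact le_add_self
      refine ((ih k (by omega)).append h1).mono ?_
      have h2 := cnt_mono Bad (show k + 1 ≤ k + m + 1 by omega) x
      push_cast
      nlinarith
    · have := codes_letters hlet (Codes.nil _) (blk x 1 n)
      rw [List.nil_append] at this
      refine this.mono ?_
      simp only [blk_length, zero_add]
      have : (n : ℝ) ≤ L := by exact_mod_cast (by omega : n ≤ L)
      have h3 : (n : ℝ) * b ≤ b * L := by nlinarith
      have : 0 ≤ s * n := by positivity
      nlinarith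

open Classical in
lemma tight {μ : Measure (ℤ → A)} (hμ : Inv μ) {X : Set (ℤ → A)} {N : ℕ} {s h : ℝ} (hs : 0 ≤ s) (hN1 : 1 ≤ N)
    (hN : ∑' u : List A, (if N ≤ u.length ∧ IsLeftConstraint X u then
      ENNReal.ofReal (Real.exp (- (s * u.length))) else 0) ≤ 1 / 2)
    (hcov : ∀ᵐ x ∂μ, ∃ m, N ≤ m ∧ IsLeftConstraint X (past x m))
    (hlow : ∀ n : ℕ, n * h ≤ blockEntropy μ n) : h ≤ s := by
  have := hμ.prob
  have hne : Nonempty A := by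
    obtain ⟨x⟩ := nonempty_of_isProbabilityMeasure μ
    exact ⟨x 0⟩
  set Bad : ℕ → Set (ℤ → A) := fun L => {x | ∀ m ∈ Finset.Icc N L, ¬ IsLeftConstraint X (past x m)} with hBad
  have hBm : ∀ L, MeasurableSet (Bad L) := by
    intro L
    have : Bad L = ⋂ m ∈ Finset.Icc N L, {x | ¬ IsLeftConstraint X (past x m)} := by
      ext x; simp [hBad]
    rw [this]
    exact Finset.measurableSet_biInter _ (fun m _ => measurableSet_blk _ m (fun w => ¬ IsLeftConstraint X w))
  have hlim : Tendsto (fun L => μ (Bad L)) atTop (nhds 0) := by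
    have h1 := tendsto_measure_iInter_atTop (μ := μ) (s := Bad) (fun L => (hBm L).nullMeasurableSet) ?_ ⟨0, measure_ne_top _ _⟩
    · have h2 : μ (⋂ L, Bad L) = 0 := by
        refine measure_mono_null ?_ (ae_iff.1 hcov)
        intro x hx
        simp only [mem_iInter, hBad, mem_ofPred_eq, Finset.mem_Icc] at hx ⊢
        rintro ⟨m, hm, hm2⟩
        exact hx m m ⟨hm, le_rfl⟩ hm2
      rwa [h2] at h1
    · intro L L' hLL x hx m hm
      apply hx m
      simp only [Finset.mem_Icc] at hm ⊢
      omega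
  have hlim' : Tendsto (fun L => s + Real.log (2 * Fintype.card A) * μ.real (Bad L)) atTop (nhds (s + Real.log (2 * Fintype.card A) * 0)) := by
    apply Tendsto.const_add
    apply Tendsto.const_mul
    have := (ENNReal.tendsto_toReal ENNReal.zero_ne_top).comp hlim
    simpa [Measure.real, Function.comp_def] using this
  rw [mul_zero, add_zero] at hlim'
  refine ge_of_tendsto' hlim' ?_
  intro L
  apply le_of_forall_nat_mul (c := Real.log (2 * Fintype.card A) * L + Real.log (2 * Fintype.card A) * μ.real (Bad L))
  intro n
  refine (hlow n).trans ?_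
  rw [He_inv hμ 1]
  have h1 := code_bound μ 1 n (W1 X N s) (W1_kraft hN) (fun x => s * n + Real.log (2 * Fintype.card A) * L + Real.log (2 * Fintype.card A) *
      (cnt (Bad L) (n + 1) x)) ?_ (ae_of_all _ fun x => tight_chain hs hN1 x (Bad L) rfl n)
  · rw [integral_add (integrable_const _) ((cnt_integrable hμ (hBm L) _).const_mul _), integral_const_mul, cnt_integral hμ (hBm L)] at h1
    simp at h1
    linarith
  · exact (integrable_const _).add ((cnt_integrable hμ (hBm L) _).const_mul _)

end meas

end Part3

section Part4
open scoped ENNReal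
set_option linter.unusedSectionVars false
variable {A : Type*}

/-- Points whose past eventually has follower set `S`. -/
def Ev (X : Set (ℤ → A)) (S : Set (ℕ → A)) : Set (ℤ → A) :=
  {x | ∃ n0, ∀ n, n0 ≤ n → fol X (past x n) = S}

lemma Ev_sh {X : Set (ℤ → A)} {S : Set (ℕ → A)} {x : ℤ → A} (hx : x ∈ Ev X S) (m : ℕ) (T : Set (ℕ → A)) :
    sh m x ∈ Ev X T ↔ der S (blk x 1 m) = T := by
  obtain ⟨n0, h0⟩ := hx
  have key : ∀ n, n0 ≤ n → fol X (past (sh m x) (n + m)) = der S (blk x 1 m) := by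
    intro n hn
    rw [past_sh, fol_append, h0 n hn]
  constructor
  · rintro ⟨n1, h1⟩
    rw [← key (max n0 n1) (le_max_left _ _)]
    exact h1 _ (by have := le_max_right n0 n1; omega)
  · intro h
    refine ⟨n0 + m, fun n hn => ?_⟩
    obtain ⟨k, rfl⟩ : ∃ k, n = k + m := ⟨n - m, by omega⟩
    rw [key k (by omega), h]

section meas
variable [Fintype A] [TopologicalSpace A] [DiscreteTopology A] [MeasurableSpace A] [BorelSpace A]

lemma Ev_eq (X : Set (ℤ → A)) (S : Set (ℕ → A)) :
    Ev X S = ⋃ n0 : ℕ, ⋂ n : ℕ, ⋂ (_ : n0 ≤ n), {x | fol X (past x n) = S} := by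
  ext x; simp [Ev]

lemma measurableSet_Ev (X : Set (ℤ → A)) (S : Set (ℕ → A)) : MeasurableSet (Ev X S) := by
  rw [Ev_eq]
  refine MeasurableSet.iUnion fun n0 => MeasurableSet.iInter fun n => MeasurableSet.iInter fun _ => ?_
  exact measurableSet_blk (1 - (n : ℤ)) n (fun w => fol X w = S)

open Classical in
lemma charge {μ : Measure (ℤ → A)} (hμ : Inv μ) {X : Set (ℤ → A)} (hX : IsSubshift X) (hμX : μ Xᶜ = 0) 
    {N : ℕ} {s : ℝ} (hs : 0 ≤ s) (hN1 : 1 ≤ N)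
    (hN : ∑' u : List A, (if N ≤ u.length ∧ IsLeftConstraint X u then
      ENNReal.ofReal (Real.exp (- (s * u.length))) else 0) ≤ 1 / 2)
    (hsh : s < hTop X)
    (hlow : ∀ n : ℕ, n * hTop X ≤ blockEntropy μ n) :
    ∃ w : List A, w.length ≤ N ∧ μ (Ev X (fol X w)) ≠ 0 := by
  by_contra hcon
  push Not at hcon
  apply absurd (tight hμ hs hN1 hN ?_ hlow) (by linarith)
  have h1 : ∀ᵐ x ∂μ, x ∈ X := hμX
  have h2 : ∀ᵐ x ∂μ, ∀ w ∈ {w : List A | w.length ≤ N}, x ∉ Ev X (fol X w) := by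
    rw [ae_ball_iff (List.finite_length_le A N).countable]
    intro w hw
    exact measure_eq_zero_iff_ae_notMem.1 (hcon w hw)
  filter_upwards [h1, h2] with x hx1 hx2
  by_contra hno
  push Not at hno
  apply hx2 (past x (N - 1)) (by simp)
  refine ⟨N - 1, fun n hn => ?_⟩
  induction n, hn using Nat.le_induction with
  | base => rfl
  | succ n hn ih =>
    rw [← ih]
    have h3 := hno (n + 1) (by omega)
    have h4 := fol_cons_subset hX (past x (n + 1))
    rw [past_succ_tail] at h4
    by_contra h5
    apply h3
    refine ⟨?_, ?_, ?_⟩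
    · intro h; have := congrArg List.length h; simp at this
    · exact (fol_past_nonempty hX hx1 _).ne_empty
    · rw [past_succ_tail]
      exact h4.ssubset_of_ne h5
end meas

end Part4

section Part5
open scoped ENNReal
set_option linter.unusedSectionVars false
variable {A : Type*}

/-- loops at `S` -/
def Loop (S : Set (ℕ → A)) (u : List A) : Prop := der S u = S

/-- prime loops at `S` -/
def PL (S : Set (ℕ → A)) (u : List A) : Prop :=
  u ≠ [] ∧ Loop S u ∧ ∀ v, v <+: u → v ≠ [] → Loop S v → v = u

lemma Loop.nil (S : Set (ℕ → A)) : Loop S [] := der_nil S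

lemma Loop.append {S : Set (ℕ → A)} {u v : List A} (hu : Loop S u) : Loop S (u ++ v) ↔ Loop S v := by
  unfold Loop at *
  rw [der_append, hu]

lemma PL.unique {S : Set (ℕ → A)} {u v u' v' : List A} (hu : PL S u) (hu' : PL S u') (h : u ++ v = u' ++ v') : u = u' := by
  have h1 : u <+: u' ++ v' := ⟨v, h⟩
  have h2 : u' <+: u' ++ v' := ⟨v', rfl⟩
  rcases List.prefix_or_prefix_of_prefix h1 h2 with h3 | h3
  · exact hu'.2.2 u h3 hu.1 hu.2.1
  · exact (hu.2.2 u' h3 hu'.1 hu'.2.1).symm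

/-- exponential weight -/
noncomputable def ew (h : ℝ) (u : List A) : ℝ≥0∞ := ENNReal.ofReal (Real.exp (- (h * u.length)))

lemma ew_append (h : ℝ) (u v : List A) : ew h (u ++ v) = ew h u * ew h v := by
  unfold ew
  rw [← ENNReal.ofReal_mul (by positivity), ← Real.exp_add]
  congr 2; push_cast [List.length_append]; ring

lemma ew_nil (h : ℝ) : ew h ([] : List A) = 1 := by simp [ew]

lemma ew_ne_top (h : ℝ) (u : List A) : ew h u ≠ ∞ := ENNReal.ofReal_ne_top

open Classical in
lemma loops_step (S : Set (ℕ → A)) (s : ℝ) :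
    (∑' u, if PL S u then ew s u else 0) * (∑' u, if Loop S u then ew s u else 0) + 1 ≤ ∑' u, if Loop S u then ew s u else 0 := by
  set Λ := ∑' u, if Loop S u then ew s u else 0 with hΛ
  have h1 : Λ = 1 + ∑' u, (if Loop S u ∧ u ≠ [] then ew s u else 0) := by
    rw [hΛ, ENNReal.tsum_eq_add_tsum_ite []]
    congr 1
    · simp [Loop.nil, ew_nil]
    · congr 1; funext u
      by_cases hu : u = []
      · simp [hu]
      · simp [hu]
  have h2 : (∑' u, if PL S u then ew s u else 0) * Λ ≤ ∑' u, (if Loop S u ∧ u ≠ [] then ew s u else 0) := by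
    rw [← ENNReal.tsum_mul_right]
    simp_rw [hΛ, ← ENNReal.tsum_mul_left]
    rw [← ENNReal.tsum_prod (f := fun u v => (if PL S u then ew s u else 0) * (if Loop S v then ew s v else 0))]
    set T : Set (List A × List A) := {p | PL S p.1 ∧ Loop S p.2}
    have h3 : (fun p : List A × List A => (if PL S p.1 then ew s p.1 else 0) * (if Loop S p.2 then ew s p.2 else 0))
        = T.indicator (fun p => if Loop S (p.1 ++ p.2) ∧ p.1 ++ p.2 ≠ [] then ew s (p.1 ++ p.2) else 0) := by
      funext p
      by_cases hp1 : PL S p.1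
      · by_cases hp2 : Loop S p.2
        · have : p ∈ T := ⟨hp1, hp2⟩
          rw [Set.indicator_of_mem this, if_pos hp1, if_pos hp2, if_pos, ew_append]
          refine ⟨(Loop.append hp1.2.1).2 hp2, ?_⟩
          have := hp1.1; simp [this]
        · have : p ∉ T := fun h => hp2 h.2
          rw [Set.indicator_of_notMem this, if_neg hp2, mul_zero]
      · have : p ∉ T := fun h => hp1 h.1
        rw [Set.indicator_of_notMem this, if_neg hp1, zero_mul]
    rw [h3, ← tsum_subtype]
    refine ENNReal.tsum_comp_le_tsum_of_injective (f := fun p : T => p.1.1 ++ p.1.2) ?_ (fun w => if Loop S w ∧ w ≠ [] then ew s w else 0)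
    rintro ⟨⟨u, v⟩, h1, h2⟩ ⟨⟨u', v'⟩, h1', h2'⟩ h
    simp only at h h1 h1'
    have := h1.unique h1' h
    subst this
    have := List.append_cancel_left h
    subst this
    rfl
  calc _ ≤ (∑' u, (if Loop S u ∧ u ≠ [] then ew s u else 0)) + 1 := by gcongr
    _ = Λ := by rw [h1, add_comm]

open Classical in
lemma loops_finite [Fintype A] {X : Set (ℤ → A)} {S : Set (ℕ → A)} (hL : ∀ u, Loop S u → u ∈ Lang X u.length) {s : ℝ}
    (hs : hTop X < s) : ∑' u, (if Loop S u then ew s u else 0) ≠ ∞ := by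
  have hle : ∑' u, (if Loop S u then ew s u else 0) ≤ ∑' n : ℕ, ENNReal.ofReal (Nat.card (Lang X n) * Real.exp (-(s * n))) := by
    rw [tsum_by_length]
    apply ENNReal.tsum_le_tsum
    intro n
    calc _ ≤ ∑' u : List A, (if u ∈ Lang X n then ENNReal.ofReal (Real.exp (- (s * n))) else 0) := by
            apply ENNReal.tsum_le_tsum
            intro u
            by_cases h1 : u.length = n
            · by_cases h4 : Loop S u
              · have := hL u h4
                rw [h1] at this
                simp [this, h1, h4, ew]
              · simp [h4]
            · simp [h1]
      _ = _ := by
        rw [tsum_set_const _ (finite_of_length n _ (Lang_len n)), ENNReal.ofReal_mul (by positivity), ENNReal.ofReal_natCast]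
  refine ne_top_of_le_ne_top ?_ hle
  rw [← ENNReal.ofReal_tsum_of_nonneg]
  · exact ENNReal.ofReal_ne_top
  · intro n; positivity
  · set ε := (s - hTop X) / 2 with hε
    have hε0 : 0 < ε := by rw [hε]; linarith
    have hg : Summable (fun n : ℕ => Real.exp (-ε) ^ n) := by
      apply summable_geometric_of_lt_one (by positivity)
      rw [Real.exp_lt_one_iff]; linarith
    refine Summable.of_norm_bounded_eventually_nat hg ?_
    filter_upwards [Lang_upper X hε0] with n hn
    rw [Real.norm_of_nonneg (by positivity), ← Real.exp_nat_mul]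
    rcases Nat.eq_zero_or_pos (Nat.card (Lang X n)) with h0 | h0
    · rw [h0]; simp; positivity
    · rw [Real.log_le_iff_le_exp (by exact_mod_cast h0)] at hn
      calc _ ≤ Real.exp ((hTop X + ε) * n) * Real.exp (-(s * n)) := by gcongr
        _ = _ := by
          rw [← Real.exp_add]; congr 1; rw [hε]; ring

open Classical in
lemma prime_kraft [Fintype A] {X : Set (ℤ → A)} {S : Set (ℕ → A)} (hL : ∀ u, Loop S u → u ∈ Lang X u.length) :
    ∑' u, (if PL S u then ew (hTop X) u else 0) ≤ 1 := by
  have hs : ∀ s, hTop X < s → ∑' u, (if PL S u then ew s u else 0) ≤ 1 := by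
    intro s hs
    by_contra hcon
    push Not at hcon
    have h1 := loops_step S s
    have h2 := loops_finite hL hs
    set Λ := ∑' u, if Loop S u then ew s u else 0
    have h3 : Λ + 1 ≤ Λ := by
      refine le_trans ?_ h1
      gcongr
      calc Λ = 1 * Λ := by simp
        _ ≤ _ := by gcongr
    exact absurd h3 (not_le.2 (ENNReal.lt_add_right h2 one_ne_zero))
  rw [ENNReal.tsum_eq_iSup_sum]
  refine iSup_le fun F => ?_
  have ht : Tendsto (fun s : ℝ => ∑ u ∈ F, (if PL S u then ew s u else 0)) (nhdsWithin (hTop X) (Ioi (hTop X)))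
      (nhds (∑ u ∈ F, (if PL S u then ew (hTop X) u else 0))) := by
    apply tendsto_finsetSum
    intro u _
    split_ifs
    · unfold ew
      apply ENNReal.tendsto_ofReal
      apply Tendsto.mono_left _ nhdsWithin_le_nhds
      apply Continuous.tendsto (f := fun s : ℝ => Real.exp (-(s * u.length)))
      fun_prop
    · exact tendsto_const_nhds
  refine le_of_tendsto ht ?_
  filter_upwards [self_mem_nhdsWithin] with s hs'
  exact (ENNReal.sum_le_tsum F).trans (hs s hs')


end Part5

section Part6
open scoped ENNReal
set_option linter.unusedSectionVars false
variable {A : Type*}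

lemma exists_last (p : ℕ → Prop) (n : ℕ) (h : ∃ m, m < n ∧ p m) : ∃ m, m < n ∧ p m ∧ ∀ k, m < k → k < n → ¬ p k := by
  classical
  induction n with
  | zero => obtain ⟨m, hm, -⟩ := h; omega
  | succ n ih =>
    by_cases hp : p n
    · exact ⟨n, by omega, hp, fun k h1 h2 => by omega⟩
    · obtain ⟨m, hm, hpm⟩ := h
      have hmn : m ≠ n := by rintro rfl; exact hp hpm
      obtain ⟨m', h1, h2, h3⟩ := ih ⟨m, by omega, hpm⟩
      refine ⟨m', by omega, h2, fun k hk1 hk2 => ?_⟩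
      rcases Nat.lt_succ_iff_lt_or_eq.1 hk2 with h | h
      · exact h3 k hk1 h
      · rw [h]; exact hp

section meas
variable [Fintype A] [TopologicalSpace A] [DiscreteTopology A] [MeasurableSpace A] [BorelSpace A]

lemma recur {μ : Measure (ℤ → A)} (hμ : Inv μ) {E : Set (ℤ → A)} (hE : MeasurableSet E) :
    ∀ᵐ x ∂μ, ∀ t : ℤ, sh t x ∈ E → (∀ M : ℤ, ∃ s, M < s ∧ sh s x ∈ E) ∧ (∀ M : ℤ, ∃ s, s < M ∧ sh s x ∈ E) := by
  have := hμ.prob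
  have h1 := ((hμ.sh 1).conservative).ae_mem_imp_frequently_image_mem hE.nullMeasurableSet
  have h2 := ((hμ.sh (-1)).conservative).ae_mem_imp_frequently_image_mem hE.nullMeasurableSet
  rw [ae_all_iff]
  intro t
  filter_upwards [(hμ.sh t).quasiMeasurePreserving.ae h1, (hμ.sh t).quasiMeasurePreserving.ae h2] with x hx1 hx2 hx
  constructor
  · intro M
    obtain ⟨n, hn, hn2⟩ := (frequently_atTop.1 (hx1 hx)) (M - t + 1).toNat
    rw [sh_iter', sh_sh] at hn2
    refine ⟨_, ?_, hn2⟩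
    have := Int.self_le_toNat (M - t + 1); have : ((M - t + 1).toNat : ℤ) ≤ n := by exact_mod_cast hn
    linarith
  · intro M
    obtain ⟨n, hn, hn2⟩ := (frequently_atTop.1 (hx2 hx)) (t - M + 1).toNat
    rw [sh_iter', sh_sh] at hn2
    refine ⟨_, ?_, hn2⟩
    have := Int.self_le_toNat (t - M + 1); have : ((t - M + 1).toNat : ℤ) ≤ n := by exact_mod_cast hn
    linarith

lemma cnt_zero_of (B : Set (ℤ → A)) (n : ℕ) (x : ℤ → A) (h : ∀ s : ℕ, s < n → sh s x ∉ B) : cnt B n x = 0 := by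
  unfold cnt
  apply Finset.sum_eq_zero
  intro s hs
  rw [Set.indicator_of_notMem (h s (by simpa using hs))]

lemma cnt_gap (B : Set (ℤ → A)) (m n : ℕ) (hmn : m < n) (x : ℤ → A) (h : ∀ s : ℕ, m < s → s < n → sh s x ∉ B) :
    cnt B n x = cnt B m x + B.indicator (fun _ => (1 : ℝ)) (sh m x) := by
  induction n, (Nat.succ_le_of_lt hmn) using Nat.le_induction with
  | base => exact cnt_succ B m x
  | succ n hn ih =>
    rw [cnt_succ, ih (by omega) (fun s h1 h2 => h s h1 (by omega)), Set.indicator_of_notMem (h n (by omega) (by omega)), add_zero]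

lemma cnt_ge (B : Set (ℤ → A)) (p q n : ℕ) (hq : q ≤ n) (x : ℤ → A) (h : ∀ s : ℕ, p ≤ s → s < q → sh s x ∈ B) :
    (q : ℝ) - p ≤ cnt B n x := by
  refine le_trans ?_ (cnt_mono B hq x)
  induction q with
  | zero => have := cnt_nonneg B 0 x; have : (0 : ℝ) ≤ p := by positivity
            push_cast; linarith
  | succ q ih =>
    by_cases hpq : p ≤ q
    · rw [cnt_succ, Set.indicator_of_mem (h q hpq (by omega))]
      have := ih (by omega) (fun s h1 h2 => h s h1 (by omega))
      push_cast; linarith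
    · have := cnt_nonneg B (q + 1) x
      have : ((q + 1 : ℕ) : ℝ) ≤ p := by exact_mod_cast (by omega : q + 1 ≤ p)
      linarith

/-- first return is a prime loop -/
lemma PL_first {X : Set (ℤ → A)} {S : Set (ℕ → A)} {x : ℤ → A} (hx : x ∈ Ev X S) {k : ℕ} (hk : 0 < k) :
    (sh k x ∈ Ev X S ∧ ∀ j : ℕ, 0 < j → j < k → sh j x ∉ Ev X S) ↔ PL S (blk x 1 k) := by
  constructor
  · rintro ⟨h1, h2⟩
    refine ⟨?_, (Ev_sh hx k S).1 h1, ?_⟩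
    · intro h; have := congrArg List.length h; simp at this; omega
    · intro v hv hv0 hv1
      have hvl := hv.length_le
      rw [blk_length] at hvl
      have e : v = blk x 1 v.length := by
        rw [List.prefix_iff_eq_take, blk_take _ _ _ _ hvl] at hv
        exact hv
      have h3 : sh v.length x ∈ Ev X S := by
        rw [Ev_sh hx, ← e]; exact hv1
      rcases hvl.lt_or_eq with h | h
      · exact absurd h3 (h2 _ (List.length_pos_of_ne_nil hv0) h)
      · rw [e, h]
  · rintro ⟨h1, h2, h3⟩
    refine ⟨(Ev_sh hx k S).2 h2, fun j hj hjk hcon => ?_⟩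
    have := h3 (blk x 1 j) (by rw [List.prefix_iff_eq_take, blk_length, blk_take _ _ _ _ hjk.le]) 
      (by intro h; have := congrArg List.length h; simp at this; omega) ((Ev_sh hx j S).1 hcon)
    have := congrArg List.length this
    simp at this; omega

end meas

end Part6

section Part7
open scoped ENNReal
set_option linter.unusedSectionVars false
variable {A : Type*}

open Classical in
/-- density modification -/
noncomputable def md (v us : List A) (q θ : ℝ) (hist u : List A) : ℝ :=
  if v <:+ hist then (if u = us then 1 + θ * (1 - q) else 1 - θ * q) else 1

open Classical in
/-- weights for the loop coding -/
noncomputable def W2 [Fintype A] (S : Set (ℕ → A)) (v us : List A) (h q θ η : ℝ) (hist u : List A) : ℝ≥0∞ :=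
  (if u.length = 1 then ENNReal.ofReal (η / Fintype.card A) else 0) +
  ENNReal.ofReal (1 - η) * (if PL S u then ew h u * ENNReal.ofReal (md v us q θ hist u) else 0)

open Classical in
lemma W2_kraft [Fintype A] [Nonempty A] {S : Set (ℕ → A)} {v us : List A} {h q θ η : ℝ}
    (hus : PL S us) (hq : q = Real.exp (-(h * us.length))) (hq1 : q ≤ 1) (hθ0 : 0 ≤ θ) (hθ1 : θ ≤ 1 / 2) (hη0 : 0 ≤ η) (hη1 : η ≤ 1)
    (hK : ∑' u, (if PL S u then ew h u else 0) ≤ 1) : IsKraft (W2 S v us h q θ η) := by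
  have hq0 : 0 < q := by rw [hq]; positivity
  have hqe : ew h us = ENNReal.ofReal q := by rw [hq]; rfl
  intro hist
  constructor
  · simp [W2, PL]
  unfold W2
  rw [ENNReal.tsum_add, tsum_length]
  have h1 : ∑ w : Fin 1 → A, ENNReal.ofReal (η / Fintype.card A) = ENNReal.ofReal η := by
    rw [Finset.sum_const]
    simp only [Finset.card_univ, Fintype.card_pi, Finset.prod_const, Fintype.card_fin, pow_one, nsmul_eq_mul]
    have hc : (0 : ℝ) < Fintype.card A := by exact_mod_cast Fintype.card_pos
    rw [← ENNReal.ofReal_natCast, ← ENNReal.ofReal_mul (by positivity)]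
    congr 1; field_simp
  have h2 : ∑' u, ENNReal.ofReal (1 - η) * (if PL S u then ew h u * ENNReal.ofReal (md v us q θ hist u) else 0)
     = ENNReal.ofReal (1 - η) * ∑' u, (if PL S u then ew h u * ENNReal.ofReal (md v us q θ hist u) else 0) := ENNReal.tsum_mul_left
  have h3 : ∑' u, (if PL S u then ew h u * ENNReal.ofReal (md v us q θ hist u) else 0) ≤ 1 := by
    by_cases hv : v <:+ hist
    · have hK' := hK
      rw [ENNReal.tsum_eq_add_tsum_ite us] at hK' ⊢
      rw [if_pos hus] at hK' ⊢
      set R := ∑' u, (if u = us then 0 else (if PL S u then ew h u else 0)) with hR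
      have h4 : ∑' u, (if u = us then 0 else (if PL S u then ew h u * ENNReal.ofReal (md v us q θ hist u) else 0)) = R * ENNReal.ofReal (1 - θ * q) := by
        rw [hR, ← ENNReal.tsum_mul_right]
        congr 1; funext u
        by_cases h5 : u = us
        · simp [h5]
        · simp [h5, md, hv]
      have hK'' : ew h us + R ≤ 1 := by convert hK'
      have h4' : ew h us * ENNReal.ofReal (md v us q θ hist us) + R * ENNReal.ofReal (1 - θ * q) ≤ 1 → _ := fun hh => by
        rw [← h4] at hh; exact hh
      refine le_trans (le_of_eq ?_) (h4' ?_)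
      · congr!
      clear h4' hK'
      have h6 : md v us q θ hist us = 1 + θ * (1 - q) := by simp [md, hv]
      rw [h6, hqe]
      rw [hqe] at hK''
      have hR1 : R ≤ ENNReal.ofReal (1 - q) := by
        rw [ENNReal.ofReal_sub _ hq0.le, ENNReal.ofReal_one]
        exact ENNReal.le_sub_of_add_le_left ENNReal.ofReal_ne_top hK''
      calc _ ≤ ENNReal.ofReal q * ENNReal.ofReal (1 + θ * (1 - q)) + ENNReal.ofReal (1 - q) * ENNReal.ofReal (1 - θ * q) := by gcongr
        _ = ENNReal.ofReal (q * (1 + θ * (1 - q)) + (1 - q) * (1 - θ * q)) := by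
          rw [← ENNReal.ofReal_mul hq0.le, ← ENNReal.ofReal_mul (by linarith), ← ENNReal.ofReal_add]
          · have : 0 ≤ θ * (1 - q) := mul_nonneg hθ0 (by linarith)
            positivity
          · have : 0 ≤ 1 - θ * q := by nlinarith
            exact mul_nonneg (by linarith) this
        _ = 1 := by
          have : q * (1 + θ * (1 - q)) + (1 - q) * (1 - θ * q) = 1 := by ring
          rw [this, ENNReal.ofReal_one]
    · simpa [md, hv] using hK
  rw [h1, h2]
  calc _ ≤ ENNReal.ofReal η + ENNReal.ofReal (1 - η) * 1 := by gcongr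
    _ = 1 := by
      rw [mul_one, ← ENNReal.ofReal_add hη0 (by linarith)]; simp

section meas
variable [Fintype A] [TopologicalSpace A] [DiscreteTopology A] [MeasurableSpace A] [BorelSpace A]

lemma suffix_blk (x : ℤ → A) (m : ℕ) (v : List A) : v <:+ blk x 1 m ↔ v.length ≤ m ∧ past (sh m x) v.length = v := by
  constructor
  · intro h
    have hl := h.length_le
    rw [blk_length] at hl
    refine ⟨hl, ?_⟩
    rw [List.suffix_iff_eq_drop, blk_length] at h
    rw [← past_sh_self, past_drop _ _ _ hl] at h
    exact h.symm
  · rintro ⟨h1, h2⟩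
    rw [List.suffix_iff_eq_drop, blk_length, ← past_sh_self, past_drop _ _ _ h1, h2]

variable {X : Set (ℤ → A)} {S : Set (ℕ → A)} {v us : List A} {h q θ η b ε : ℝ}

/-- past word -/
def Fv (X : Set (ℤ → A)) (S : Set (ℕ → A)) (v : List A) : Set (ℤ → A) := Ev X S ∩ {x | past x v.length = v}

/-- past word followed by a loop -/
def Gv (X : Set (ℤ → A)) (S : Set (ℕ → A)) (v us : List A) : Set (ℤ → A) := Fv X S v ∩ {x | blk x 1 us.length = us}

lemma md_cost (hus : PL S us) (hq0 : 0 < q) (hq1 : q ≤ 1) (hθ0 : 0 ≤ θ) (hθ1 : θ ≤ 1 / 2)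
    {x : ℤ → A} {m k : ℕ} (hk : 0 < k) (hm : sh m x ∈ Ev X S) (hm2 : PL S (blk (sh m x) 1 k)) :
    Real.log (1 + θ * (1 - q)) * (Gv X S v us).indicator (fun _ => (1 : ℝ)) (sh m x) +
      Real.log (1 - θ * q) * (Fv X S v \ Gv X S v us).indicator (fun _ => (1 : ℝ)) (sh m x) ≤ 
    Real.log (md v us q θ (blk x 1 m) (blk (sh m x) 1 k)) + (if m < v.length then 1 else 0) := by
  have hE : blk (sh m x) 1 k = us ↔ blk (sh m x) 1 us.length = us := by
    constructor
    · intro h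
      have := congrArg List.length h
      rw [blk_length] at this; rw [← this]; exact h
    · intro h
      have h1 : blk (sh m x) 1 (k + us.length) = blk (sh m x) 1 k ++ blk (sh m x) (1 + k) us.length := blk_add _ _ _ _
      have h2 : blk (sh m x) 1 (us.length + k) = us ++ blk (sh m x) (1 + us.length) k := by
        rw [blk_add, h]
      rw [add_comm, h2] at h1
      exact (hus.unique hm2 h1).symm
  have hpos1 : 0 ≤ θ * (1 - q) := mul_nonneg hθ0 (by linarith)
  have hpos2 : 0 < 1 - θ * q := by nlinarith
  have hq2 : 0 ≤ θ * q := by positivity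
  have hl1 : Real.log (1 + θ * (1 - q)) ≤ 1 := by
    have := Real.log_le_sub_one_of_pos (show 0 < 1 + θ * (1 - q) by linarith)
    nlinarith
  have hl2 : Real.log (1 - θ * q) ≤ 0 := Real.log_nonpos hpos2.le (by linarith)
  by_cases hF : past (sh m x) v.length = v
  · have hF' : sh m x ∈ Fv X S v := ⟨hm, hF⟩
    by_cases hmv : m < v.length
    · have hns : ¬ v <:+ blk x 1 m := by rw [suffix_blk]; omega
      simp only [md, hns, if_false, hmv, if_true, Real.log_one]
      by_cases hG : sh m x ∈ Gv X S v us
      · rw [Set.indicator_of_mem hG, Set.indicator_of_notMem (fun h => h.2 hG)]; linarith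
      · rw [Set.indicator_of_notMem hG, Set.indicator_of_mem (show sh m x ∈ Fv X S v \ Gv X S v us from ⟨hF', hG⟩)]; linarith
    · have hs : v <:+ blk x 1 m := by rw [suffix_blk]; exact ⟨by omega, hF⟩
      simp only [md, hs, if_true, hmv, if_false]
      by_cases hG : sh m x ∈ Gv X S v us
      · rw [Set.indicator_of_mem hG, Set.indicator_of_notMem (fun h => h.2 hG), if_pos (hE.2 hG.2)]; linarith
      · rw [Set.indicator_of_notMem hG, Set.indicator_of_mem (show sh m x ∈ Fv X S v \ Gv X S v us from ⟨hF', hG⟩), if_neg (fun h => hG ⟨hF', hE.1 h⟩)]; linarith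
  · have hF' : sh m x ∉ Fv X S v := fun h => hF h.2
    have hns : ¬ v <:+ blk x 1 m := by rw [suffix_blk]; tauto
    rw [Set.indicator_of_notMem (fun h => hF' h.1), Set.indicator_of_notMem (fun h => hF' h.1)]
    simp only [md, hns, if_false, Real.log_one]
    split_ifs <;> simp

/-- total gain -/
noncomputable def gain (X : Set (ℤ → A)) (S : Set (ℕ → A)) (v us : List A) (q θ : ℝ) (n : ℕ) (x : ℤ → A) : ℝ :=
  Real.log (1 + θ * (1 - q)) * cnt (Gv X S v us) n x + Real.log (1 - θ * q) * cnt (Fv X S v \ Gv X S v us) n x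

/-- no visits before -/
def bad1 (E : Set (ℤ → A)) (L : ℕ) : Set (ℤ → A) := {x | ∀ j : ℕ, j ≤ L → sh (-(j : ℤ)) x ∉ E}
/-- no visits after -/
def bad2 (E : Set (ℤ → A)) (L : ℕ) : Set (ℤ → A) := {x | ∀ j : ℕ, j ≤ L → sh (j : ℤ) x ∉ E}

lemma gain_zero {n : ℕ} {x : ℤ → A} (hno : ∀ s : ℕ, s < n → sh s x ∉ Ev X S) : gain X S v us q θ n x = 0 := by
  unfold gain
  rw [cnt_zero_of _ _ _ fun s hs h => hno s hs h.1.1, cnt_zero_of _ _ _ fun s hs h => hno s hs h.1.1]; ring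

lemma gain_gap {m n : ℕ} (hmn : m < n) {x : ℤ → A} (hno : ∀ s : ℕ, m < s → s < n → sh s x ∉ Ev X S) : 
    gain X S v us q θ n x = gain X S v us q θ m x + (Real.log (1 + θ * (1 - q)) * (Gv X S v us).indicator (fun _ => (1 : ℝ)) (sh m x) +
      Real.log (1 - θ * q) * (Fv X S v \ Gv X S v us).indicator (fun _ => (1 : ℝ)) (sh m x)) := by
  unfold gain
  rw [cnt_gap _ m n hmn _ fun s h1 h2 h => hno s h1 h2 h.1.1, cnt_gap _ m n hmn _ fun s h1 h2 h => hno s h1 h2 h.1.1]; ring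

lemma bad1_count {E : Set (ℤ → A)} (L : ℕ) {n : ℕ} {x : ℤ → A} (hno : ∀ s : ℕ, s < n → sh s x ∉ E) : (n : ℝ) ≤ L + cnt (bad1 E L) n x := by
  have := cnt_ge (bad1 E L) L n n le_rfl x ?_
  · linarith
  · intro s hs hsn j hj
    rw [sh_sh]
    have := hno (s - j) (by omega)
    rw [Nat.cast_sub (by omega)] at this
    rwa [show -(j : ℤ) + s = s - j by ring]

lemma bad2_count {E : Set (ℤ → A)} (L : ℕ) {m n : ℕ} {x : ℤ → A} (hno : ∀ s : ℕ, m < s → s ≤ n → sh s x ∉ E) : 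
    (n : ℝ) - m ≤ L + cnt (bad2 E L) (n + 1) x := by
  by_cases hL : L ≤ n
  · have := cnt_ge (bad2 E L) (m + 1) (n - L + 1) (n + 1) (by omega) x ?_
    · push_cast [Nat.cast_sub hL] at this; linarith
    · intro s hs hsn j hj
      rw [sh_sh]
      have := hno (j + s) (by omega) (by omega)
      push_cast at this
      exact this
  · have h1 : (n : ℝ) ≤ L := by exact_mod_cast (by omega : n ≤ L)
    have := cnt_nonneg (bad2 E L) (n + 1) x
    have : (0 : ℝ) ≤ m := by positivity
    linarith

end meas

end Part7

section Part8
open scoped ENNReal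
set_option linter.unusedSectionVars false
variable {A : Type*}
section meas
variable [Fintype A] [TopologicalSpace A] [DiscreteTopology A] [MeasurableSpace A] [BorelSpace A]
variable {X : Set (ℤ → A)} {S : Set (ℕ → A)} {v us : List A} {h q θ η b ε : ℝ}

lemma br_le (hq0 : 0 < q) (hq1 : q ≤ 1) (hθ0 : 0 ≤ θ) (hθ1 : θ ≤ 1 / 2) (y : ℤ → A) :
    Real.log (1 + θ * (1 - q)) * (Gv X S v us).indicator (fun _ => (1 : ℝ)) y +
      Real.log (1 - θ * q) * (Fv X S v \ Gv X S v us).indicator (fun _ => (1 : ℝ)) y ≤ 1 := by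
  have hpos1 : 0 ≤ θ * (1 - q) := mul_nonneg hθ0 (by linarith)
  have hpos2 : 0 < 1 - θ * q := by nlinarith
  have hq2 : 0 ≤ θ * q := by positivity
  have hl1 : Real.log (1 + θ * (1 - q)) ≤ 1 := by
    have := Real.log_le_sub_one_of_pos (show 0 < 1 + θ * (1 - q) by linarith)
    nlinarith
  have hl2 : Real.log (1 - θ * q) ≤ 0 := Real.log_nonpos hpos2.le (by linarith)
  by_cases h1 : y ∈ Gv X S v us <;> by_cases h2 : y ∈ Fv X S v \ Gv X S v us <;>
    simp only [h1, h2, Set.indicator_of_mem, Set.indicator_of_notMem, not_false_eq_true] <;> linarith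

lemma W2_letter (hb : Real.exp (-b) = η / Fintype.card A) (hist : List A) (a : A) :
    ENNReal.ofReal (Real.exp (-b)) ≤ W2 S v us h q θ η hist [a] := by
  unfold W2
  rw [if_pos (by simp), hb]
  exact le_self_add

lemma chainA (hus : PL S us) (hh : 0 ≤ h) (hb0 : 0 ≤ b) (hε0 : 0 ≤ ε) (hq0 : 0 < q) (hq1 : q ≤ 1) (hθ0 : 0 ≤ θ) (hθ1 : θ ≤ 1 / 2)
    (hb : Real.exp (-b) = η / Fintype.card A) (hε : Real.exp (-ε) = 1 - η) (L : ℕ) (x : ℤ → A) (n : ℕ) (hn : sh n x ∈ Ev X S) :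
    Codes (W2 S v us h q θ η) (blk x 1 n) 
      (b * (L + cnt (bad1 (Ev X S) L) n x) + (h + ε) * n - gain X S v us q θ n x + (min n v.length : ℕ)) := by
  induction n using Nat.strong_induction_on with
  | _ n ih =>
  by_cases hex : ∃ m : ℕ, m < n ∧ sh m x ∈ Ev X S
  · obtain ⟨m, hmn, hm, hno⟩ := exists_last (fun m : ℕ => sh m x ∈ Ev X S) n hex
    have h1 := ih m hmn hm
    obtain ⟨k, rfl⟩ : ∃ k, n = m + k := ⟨n - m, by omega⟩
    have hk : 0 < k := by omega
    have hpl : PL S (blk (sh m x) 1 k) := by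
      rw [← PL_first hm hk]
      refine ⟨?_, ?_⟩
      · rw [sh_sh]; convert hn using 2; push_cast; ring
      · intro j hj hjk
        rw [sh_sh]
        have := hno (m + j) (by omega) (by omega)
        convert this using 2; push_cast; ring_nf
    have hcost := md_cost (v := v) (X := X) hus hq0 hq1 hθ0 hθ1 hk hm hpl
    rw [blk_add]
    have e : blk x (1 + m) k = blk (sh m x) 1 k := by rw [blk_sh]
    rw [e]
    have hmd : 0 < md v us q θ (blk x 1 m) (blk (sh m x) 1 k) := by
      unfold md
      have hpos1 : 0 ≤ θ * (1 - q) := mul_nonneg hθ0 (by linarith)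
      have hpos2 : 0 < 1 - θ * q := by nlinarith
      split_ifs <;> linarith
    have h2 : ENNReal.ofReal (Real.exp (-(ε + h * k - Real.log (md v us q θ (blk x 1 m) (blk (sh m x) 1 k))))) 
        ≤ W2 S v us h q θ η (blk x 1 m) (blk (sh m x) 1 k) := by
      unfold W2 ew
      rw [if_pos hpl, blk_length]
      refine le_trans (le_of_eq ?_) le_add_self
      rw [← hε, ← ENNReal.ofReal_mul (by positivity), ← ENNReal.ofReal_mul (by positivity), 
        ← Real.exp_log hmd, ← Real.exp_add, ← Real.exp_add, Real.log_exp]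
      congr 2; ring
    refine (h1.append h2).mono ?_
    rw [gain_gap hmn hno]
    have h3 := cnt_mono (bad1 (Ev X S) L) hmn.le x
    have h4 : ((min m v.length : ℕ) : ℝ) + (if m < v.length then 1 else 0) ≤ (min (m + k) v.length : ℕ) := by
      split_ifs with hc
      · exact_mod_cast (by omega : min m v.length + 1 ≤ min (m + k) v.length)
      · rw [add_zero]; exact_mod_cast (by omega : min m v.length ≤ min (m + k) v.length)
    have h5 : b * cnt (bad1 (Ev X S) L) m x ≤ b * cnt (bad1 (Ev X S) L) (m + k) x := by gcongr
    have h6 : ε ≤ ε * k := by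
      have : (1 : ℝ) ≤ k := by exact_mod_cast hk
      nlinarith
    push_cast at h4 ⊢
    linarith
  · push Not at hex
    have h1 := codes_letters (W2_letter (S := S) (v := v) (us := us) (h := h) (q := q) (θ := θ) hb) (Codes.nil _) (blk x 1 n)
    rw [List.nil_append] at h1
    refine h1.mono ?_
    rw [gain_zero hex, blk_length]
    have h2 := bad1_count L hex
    have h3 : b * n ≤ b * (L + cnt (bad1 (Ev X S) L) n x) := by gcongr
    have h4 : 0 ≤ (h + ε) * n := by positivity
    have h5 : (0 : ℝ) ≤ (min n v.length : ℕ) := by positivity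
    linarith

lemma chainB (hus : PL S us) (hh : 0 ≤ h) (hb0 : 0 ≤ b) (hε0 : 0 ≤ ε) (hq0 : 0 < q) (hq1 : q ≤ 1) (hθ0 : 0 ≤ θ) (hθ1 : θ ≤ 1 / 2)
    (hb : Real.exp (-b) = η / Fintype.card A) (hε : Real.exp (-ε) = 1 - η) (L : ℕ) (x : ℤ → A) (n : ℕ) :
    Codes (W2 S v us h q θ η) (blk x 1 n) 
      ((h + ε) * n + (2 * b * L + v.length + 1) + (b * cnt (bad1 (Ev X S) L) n x + b * cnt (bad2 (Ev X S) L) (n + 1) x) - gain X S v us q θ n x) := by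
  have hlet := W2_letter (S := S) (v := v) (us := us) (h := h) (q := q) (θ := θ) hb
  have hbL : 0 ≤ b * L := by positivity
  have hc2 := cnt_nonneg (bad2 (Ev X S) L) (n + 1) x
  have hc2' : 0 ≤ b * cnt (bad2 (Ev X S) L) (n + 1) x := by positivity
  have hvl : (0 : ℝ) ≤ v.length := by positivity
  by_cases hex : ∃ m : ℕ, m < n + 1 ∧ sh m x ∈ Ev X S
  · obtain ⟨m, hmn, hm, hno⟩ := exists_last (fun m : ℕ => sh m x ∈ Ev X S) (n + 1) hex
    have h1 := chainA (v := v) hus hh hb0 hε0 hq0 hq1 hθ0 hθ1 hb hε L x m hm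
    obtain ⟨k, rfl⟩ : ∃ k, n = m + k := ⟨n - m, by omega⟩
    rw [blk_add]
    refine (codes_letters hlet h1 _).mono ?_
    rw [blk_length]
    have h2 := bad2_count (E := Ev X S) L (m := m) (n := m + k) (x := x) (fun s h1 h2 => hno s h1 (by omega))
    have h3 : b * k ≤ b * (L + cnt (bad2 (Ev X S) L) (m + k + 1) x) := by
      gcongr; push_cast at h2; linarith
    have h4 := cnt_mono (bad1 (Ev X S) L) (show m ≤ m + k by omega) x
    have h5 : b * cnt (bad1 (Ev X S) L) m x ≤ b * cnt (bad1 (Ev X S) L) (m + k) x := by gcongr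
    have h6 : gain X S v us q θ (m + k) x ≤ gain X S v us q θ m x + 1 := by
      rcases Nat.eq_zero_or_pos k with h0 | h0
      · subst h0; simp
      · rw [gain_gap (m := m) (by omega) (fun s h1 h2 => hno s h1 (by omega))]
        have := br_le (X := X) (S := S) (v := v) (us := us) hq0 hq1 hθ0 hθ1 (sh m x)
        linarith
    have h7 : ((min m v.length : ℕ) : ℝ) ≤ v.length := by exact_mod_cast min_le_right _ _
    have h8 : 0 ≤ (h + ε) * k := by positivity
    push_cast at h7 ⊢
    linarith
  · push Not at hex
    have h1 := codes_letters hlet (Codes.nil _) (blk x 1 n)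
    rw [List.nil_append] at h1
    refine h1.mono ?_
    have hex' : ∀ s : ℕ, s < n → sh s x ∉ Ev X S := fun s hs => hex s (by omega)
    rw [gain_zero hex', blk_length]
    have h2 := bad1_count L hex'
    have h3 : b * n ≤ b * (L + cnt (bad1 (Ev X S) L) n x) := by gcongr
    have h4 : 0 ≤ (h + ε) * n := by positivity
    linarith

lemma measurableSet_bad1 {E : Set (ℤ → A)} (hE : MeasurableSet E) (L : ℕ) : MeasurableSet (bad1 E L) := by
  have : bad1 E L = ⋂ j : ℕ, ⋂ (_ : j ≤ L), (sh (-(j : ℤ)) ⁻¹' E)ᶜ := by ext x; simp [bad1]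
  rw [this]
  exact MeasurableSet.iInter fun j => MeasurableSet.iInter fun _ => (measurable_sh _ hE).compl

lemma measurableSet_bad2 {E : Set (ℤ → A)} (hE : MeasurableSet E) (L : ℕ) : MeasurableSet (bad2 E L) := by
  have : bad2 E L = ⋂ j : ℕ, ⋂ (_ : j ≤ L), (sh (j : ℤ) ⁻¹' E)ᶜ := by ext x; simp [bad2]
  rw [this]
  exact MeasurableSet.iInter fun j => MeasurableSet.iInter fun _ => (measurable_sh _ hE).compl

lemma tendsto_real_bad {μ : Measure (ℤ → A)} [IsProbabilityMeasure μ] (B : ℕ → Set (ℤ → A)) (hBm : ∀ L, MeasurableSet (B L))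
    (hanti : Antitone B) (hnull : ∀ᵐ x ∂μ, ∃ L, x ∉ B L) : Tendsto (fun L => μ.real (B L)) atTop (nhds 0) := by
  have h1 := tendsto_measure_iInter_atTop (μ := μ) (s := B) (fun L => (hBm L).nullMeasurableSet) hanti ⟨0, measure_ne_top _ _⟩
  have h2 : μ (⋂ L, B L) = 0 := by
    refine measure_mono_null ?_ (ae_iff.1 hnull)
    intro x hx
    simp only [mem_iInter] at hx
    simpa using hx
  rw [h2] at h1
  have := (ENNReal.tendsto_toReal ENNReal.zero_ne_top).comp h1
  simpa [Measure.real, Function.comp_def] using this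

lemma measurableSet_Fv : MeasurableSet (Fv X S v) :=
  (measurableSet_Ev X S).inter (measurableSet_blk_eq _ _ _)
lemma measurableSet_Gv : MeasurableSet (Gv X S v us) :=
  measurableSet_Fv.inter (measurableSet_blk_eq _ _ _)

/-- orbit saturation -/
def Sat (X : Set (ℤ → A)) (S : Set (ℕ → A)) : Set (ℤ → A) := {x | ∃ t : ℤ, sh t x ∈ Ev X S}

/-- standing hypotheses for the uniqueness part -/
structure Good (X : Set (ℤ → A)) (S : Set (ℕ → A)) (μ : Measure (ℤ → A)) : Prop where
  inv : Inv μ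
  loops : ∀ u, Loop S u → u ∈ Lang X u.length
  hnn : 0 ≤ hTop X
  low : ∀ n : ℕ, n * hTop X ≤ blockEntropy μ n
  sat : ∀ᵐ x ∂μ, x ∈ Sat X S

lemma Good.visits {μ : Measure (ℤ → A)} (hμ : Good X S μ) :
    ∀ᵐ x ∂μ, (∀ M : ℤ, ∃ s, M < s ∧ sh s x ∈ Ev X S) ∧ (∀ M : ℤ, ∃ s, s < M ∧ sh s x ∈ Ev X S) := by
  filter_upwards [recur hμ.inv (measurableSet_Ev X S), hμ.sat] with x h1 ⟨t, ht⟩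
  exact h1 t ht

lemma Good.key1 {μ : Measure (ℤ → A)} (hμ : Good X S μ) (v : List A) (hus : PL S us) (hθ0 : 0 ≤ θ) (hθ1 : θ ≤ 1 / 2) (hε0 : 0 < ε)
    (hq : q = Real.exp (-(hTop X * us.length))) :
    Real.log (1 + θ * (1 - q)) * μ.real (Gv X S v us) + Real.log (1 - θ * q) * μ.real (Fv X S v \ Gv X S v us) ≤ ε := by
  have := hμ.inv.prob
  have hne : Nonempty A := by
    obtain ⟨x⟩ := nonempty_of_isProbabilityMeasure μ
    exact ⟨x 0⟩
  have hc : (1 : ℝ) ≤ Fintype.card A := by exact_mod_cast Fintype.card_pos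
  have hq0 : 0 < q := by rw [hq]; positivity
  have hq1 : q ≤ 1 := by
    rw [hq, Real.exp_le_one_iff]
    have := hμ.hnn
    have : 0 ≤ hTop X * us.length := by positivity
    linarith
  obtain ⟨η, hη⟩ : ∃ η, Real.exp (-ε) = 1 - η := ⟨1 - Real.exp (-ε), by ring⟩
  have hη0 : 0 < η := by
    have : Real.exp (-ε) < 1 := by rw [Real.exp_lt_one_iff]; linarith
    linarith
  have hη1 : η ≤ 1 := by have := Real.exp_pos (-ε); linarith
  set b := - Real.log (η / Fintype.card A) with hbdef
  have hb : Real.exp (-b) = η / Fintype.card A := by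
    rw [hbdef, neg_neg, Real.exp_log (by positivity)]
  have hb0 : 0 ≤ b := by
    rw [hbdef]
    have : Real.log (η / Fintype.card A) ≤ 0 := Real.log_nonpos (by positivity) (by rw [div_le_one (by linarith)]; linarith)
    linarith
  have hE := measurableSet_Ev X S
  have hG := measurableSet_Gv (X := X) (S := S) (v := v) (us := us)
  have hFG := (measurableSet_Fv (X := X) (S := S) (v := v)).diff hG
  have hbound : ∀ L : ℕ, hTop X ≤ hTop X + ε + b * μ.real (bad1 (Ev X S) L) + b * μ.real (bad2 (Ev X S) L) - 
      (Real.log (1 + θ * (1 - q)) * μ.real (Gv X S v us) + Real.log (1 - θ * q) * μ.real (Fv X S v \ Gv X S v us)) := by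
    intro L
    apply le_of_forall_nat_mul (c := 2 * b * L + v.length + 1 + b * μ.real (bad2 (Ev X S) L))
    intro n
    refine (hμ.low n).trans ?_
    rw [He_inv hμ.inv 1]
    have i1 := cnt_integrable hμ.inv (measurableSet_bad1 hE L) n
    have i2 := cnt_integrable hμ.inv (measurableSet_bad2 hE L) (n + 1)
    have i3 := cnt_integrable hμ.inv hG n
    have i4 := cnt_integrable hμ.inv hFG n
    have ig : Integrable (gain X S v us q θ n) μ := (i3.const_mul _).add (i4.const_mul _)
    have i12 : Integrable (fun x => b * cnt (bad1 (Ev X S) L) n x + b * cnt (bad2 (Ev X S) L) (n + 1) x) μ := (i1.const_mul _).add (i2.const_mul _)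
    have i5 : Integrable (fun x => (hTop X + ε) * n + (2 * b * L + v.length + 1) + (b * cnt (bad1 (Ev X S) L) n x + b * cnt (bad2 (Ev X S) L) (n + 1) x)) μ :=
      (integrable_const _).add i12
    have h1 := code_bound μ 1 n (W2 S v us (hTop X) q θ η) (W2_kraft hus hq hq1 hθ0 hθ1 hη0.le hη1 (prime_kraft hμ.loops)) 
      (fun x => (hTop X + ε) * n + (2 * b * L + v.length + 1) + (b * cnt (bad1 (Ev X S) L) n x + b * cnt (bad2 (Ev X S) L) (n + 1) x) - gain X S v us q θ n x)
      (i5.sub ig)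
      (ae_of_all _ fun x => chainB hus hμ.hnn hb0 hε0.le hq0 hq1 hθ0 hθ1 hb hη L x n)
    refine h1.trans (le_of_eq ?_)
    rw [integral_sub i5 ig, integral_add (integrable_const _) i12, integral_add (i1.const_mul _) (i2.const_mul _)]
    unfold gain
    rw [integral_add (i3.const_mul _) (i4.const_mul _)]
    simp only [integral_const_mul, cnt_integral hμ.inv hG, cnt_integral hμ.inv hFG, cnt_integral hμ.inv (measurableSet_bad1 hE L),
      cnt_integral hμ.inv (measurableSet_bad2 hE L)]
    simp
    ring
  have t1 := tendsto_real_bad (μ := μ) (bad1 (Ev X S)) (measurableSet_bad1 hE) (fun L L' h x hx j hj => hx j (hj.trans h)) (by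
    filter_upwards [hμ.visits] with x hx
    obtain ⟨s, hs, hs2⟩ := hx.2 0
    refine ⟨s.natAbs, fun hcon => hcon s.natAbs le_rfl ?_⟩
    convert hs2 using 2; omega)
  have t2 := tendsto_real_bad (μ := μ) (bad2 (Ev X S)) (measurableSet_bad2 hE) (fun L L' h x hx j hj => hx j (hj.trans h)) (by
    filter_upwards [hμ.visits] with x hx
    obtain ⟨s, hs, hs2⟩ := hx.1 0
    refine ⟨s.natAbs, fun hcon => hcon s.natAbs le_rfl ?_⟩
    convert hs2 using 2; omega)
  have t3 := ((t1.const_mul b).add (t2.const_mul b)).const_add ε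
  simp only [mul_zero, add_zero] at t3
  refine ge_of_tendsto' t3 fun L => ?_
  have := hbound L
  linarith

lemma log_quad {y : ℝ} (hy : -1 / 2 ≤ y) : y - 2 * y ^ 2 ≤ Real.log (1 + y) := by
  have h0 : 0 < 1 + y := by linarith
  refine le_trans ?_ (Real.one_sub_inv_le_log_of_pos h0)
  have : 1 - (1 + y)⁻¹ = y / (1 + y) := by field_simp; ring
  rw [this, le_div_iff₀ h0]
  nlinarith [mul_nonneg (sq_nonneg y) (show 0 ≤ 1 + 2 * y by linarith)]

lemma Good.key2 {μ : Measure (ℤ → A)} (hμ : Good X S μ) (v : List A) (hus : PL S us) :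
    μ (Gv X S v us) ≤ ew (hTop X) us * μ (Fv X S v) := by
  have := hμ.inv.prob
  set q := Real.exp (-(hTop X * us.length)) with hq
  have hq0 : 0 < q := by rw [hq]; positivity
  have hq1 : q ≤ 1 := by
    rw [hq, Real.exp_le_one_iff]
    have := hμ.hnn
    have : 0 ≤ hTop X * us.length := by positivity
    linarith
  set P := μ.real (Gv X S v us) with hP
  set R := μ.real (Fv X S v \ Gv X S v us) with hR
  have hP0 : 0 ≤ P := measureReal_nonneg
  have hR0 : 0 ≤ R := measureReal_nonneg
  have hP1 : P ≤ 1 := measureReal_le_one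
  have hR1 : R ≤ 1 := measureReal_le_one
  have hPR : μ.real (Fv X S v) = P + R := by
    rw [hP, hR, add_comm, measureReal_sdiff_add_inter measurableSet_Gv |>.symm]
    congr 2
    rw [Set.inter_eq_right.2]
    exact Set.inter_subset_left
  have h1 : ∀ θ : ℝ, 0 < θ → θ ≤ 1 / 2 → (1 - q) * P - q * R ≤ 4 * θ := by
    intro θ hθ0 hθ1
    have h2 : Real.log (1 + θ * (1 - q)) * P + Real.log (1 - θ * q) * R ≤ 0 := by
      apply le_of_forall_pos_le_add
      intro ε hε
      rw [zero_add]
      exact hμ.key1 v hus hθ0.le hθ1 hε hq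
    have h3 := log_quad (y := θ * (1 - q)) (by have := mul_nonneg hθ0.le (show 0 ≤ 1 - q by linarith); linarith)
    have h4 := log_quad (y := -(θ * q)) (by nlinarith)
    rw [← sub_eq_add_neg] at h4
    have h5 : θ * (1 - q) - 2 * θ ^ 2 ≤ Real.log (1 + θ * (1 - q)) := by
      refine le_trans ?_ h3
      have : (θ * (1 - q)) ^ 2 ≤ θ ^ 2 := by
        rw [mul_pow]; nlinarith [sq_nonneg θ, mul_nonneg hq0.le (show 0 ≤ 2 - q by linarith)]
      linarith
    have h6 : -(θ * q) - 2 * θ ^ 2 ≤ Real.log (1 - θ * q) := by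
      refine le_trans ?_ h4
      have : (-(θ * q)) ^ 2 ≤ θ ^ 2 := by
        rw [neg_sq, mul_pow]; nlinarith [sq_nonneg θ, mul_nonneg hq0.le (show 0 ≤ 1 - q by linarith)]
      linarith
    have h7 := mul_le_mul_of_nonneg_right h5 hP0
    have h8 := mul_le_mul_of_nonneg_right h6 hR0
    have h9 : θ * ((1 - q) * P - q * R) ≤ θ * (4 * θ) := by
      nlinarith [sq_nonneg θ, mul_nonneg (sq_nonneg θ) (show 0 ≤ 1 - P by linarith), mul_nonneg (sq_nonneg θ) (show 0 ≤ 1 - R by linarith)]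
    exact le_of_mul_le_mul_left h9 hθ0
  have h2 : (1 - q) * P - q * R ≤ 0 := by
    by_contra hcon
    push Not at hcon
    set D := (1 - q) * P - q * R with hD
    have h3 := h1 (min (D / 8) (1 / 2)) (by positivity) (min_le_right _ _)
    have h4 := min_le_left (D / 8) (1 / 2)
    linarith
  have h3 : P ≤ q * μ.real (Fv X S v) := by rw [hPR]; linarith
  have h4 : μ (Gv X S v us) = ENNReal.ofReal P := by rw [hP, ofReal_measureReal]
  have h5 : μ (Fv X S v) = ENNReal.ofReal (μ.real (Fv X S v)) := by rw [ofReal_measureReal]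
  rw [h4, h5]
  unfold ew
  rw [← ENNReal.ofReal_mul (by positivity)]
  exact ENNReal.ofReal_le_ofReal h3

end meas

end Part8

section Part9
open scoped ENNReal
set_option linter.unusedSectionVars false
variable {A : Type*}

lemma pi_nested {Ω β : Type*} (win : ℕ → Ω → β) (f : ℕ → ℕ → β → β)
    (hf : ∀ n m, n ≤ m → ∀ x, win n x = f n m (win m x)) :
    IsPiSystem {D : Set Ω | D = ∅ ∨ ∃ n v, D = {x | win n x = v}} := by
  have key : ∀ n m v w, n ≤ m → {x | win n x = v} ∩ {x | win m x = w} ∈ {D : Set Ω | D = ∅ ∨ ∃ n v, D = {x | win n x = v}} := by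
    intro n m v w hnm
    by_cases h : f n m w = v
    · right
      refine ⟨m, w, ?_⟩
      ext x
      simp only [mem_inter_iff, mem_ofPred_eq]
      constructor
      · exact fun h => h.2
      · intro h2; refine ⟨?_, h2⟩; rw [hf n m hnm, h2, h]
    · left
      ext x
      simp only [mem_inter_iff, mem_ofPred_eq, mem_empty_iff_false, iff_false, not_and]
      intro h1 h2
      apply h; rw [← h2, ← hf n m hnm, h1]
  rintro s (rfl | ⟨n, v, rfl⟩) t (rfl | ⟨m, w, rfl⟩) _
  · left; simp
  · left; simp
  · left; simp
  · rcases le_total n m with h | h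
    · exact key n m v w h
    · rw [inter_comm]; exact key m n w v h

/-- generators of the past -/
def pastGen (A : Type*) : Set (Set (ℤ → A)) := {D | D = ∅ ∨ ∃ n v, D = {x | past x n = v}}

lemma pastGen_pi : IsPiSystem (pastGen A) :=
  pi_nested (fun n x => past x n) (fun n m w => w.drop (m - n)) (fun n m h x => (past_drop x n m h).symm)

/-- the past sigma-algebra -/
@[reducible] def pastM (A : Type*) : MeasurableSpace (ℤ → A) := MeasurableSpace.generateFrom (pastGen A)

section meas
variable [Fintype A] [TopologicalSpace A] [DiscreteTopology A] [MeasurableSpace A] [BorelSpace A]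
variable {X : Set (ℤ → A)} {S : Set (ℕ → A)} {v us : List A}

lemma pastM_le : pastM A ≤ (inferInstance : MeasurableSpace (ℤ → A)) := by
  apply MeasurableSpace.generateFrom_le
  rintro t (rfl | ⟨n, v, rfl⟩)
  · exact MeasurableSet.empty
  · exact measurableSet_blk_eq _ _ _

lemma pastM_set (n : ℕ) (P : List A → Prop) : MeasurableSet[pastM A] {x : ℤ → A | P (past x n)} := by
  have : {x : ℤ → A | P (past x n)} = ⋃ v : List A, ⋃ (_ : P v), {x | past x n = v} := by
    ext x; simp
  rw [this]
  refine MeasurableSet.iUnion fun v => MeasurableSet.iUnion fun _ => ?_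
  exact MeasurableSpace.measurableSet_generateFrom (Or.inr ⟨n, v, rfl⟩)

lemma pastM_Ev (X : Set (ℤ → A)) (S : Set (ℕ → A)) : MeasurableSet[pastM A] (Ev X S) := by
  rw [Ev_eq]
  refine MeasurableSet.iUnion fun n0 => MeasurableSet.iInter fun n => MeasurableSet.iInter fun _ => ?_
  exact pastM_set n (fun w => fol X w = S)

lemma past_take (x : ℤ → A) (n k : ℕ) : past (sh (-(k : ℤ)) x) n = (past x (n + k)).take n := by
  have := past_sh (sh (-(k : ℤ)) x) n k
  rw [sh_sh, add_neg_cancel, sh_zero] at this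
  rw [this, List.take_left' (by simp)]

lemma pastM_sh (k : ℕ) {D : Set (ℤ → A)} (hD : MeasurableSet[pastM A] D) :
    MeasurableSet[pastM A] {x | sh (-(k : ℤ)) x ∈ D} := by
  have : @Measurable _ _ (pastM A) (pastM A) (sh (-(k : ℤ)) : (ℤ → A) → (ℤ → A)) := by
    refine @measurable_generateFrom _ _ (pastM A) (pastGen A) _ ?_
    rintro t (rfl | ⟨n, v, rfl⟩)
    · exact @MeasurableSet.empty _ (pastM A)
    · have : sh (-(k : ℤ)) ⁻¹' {x : ℤ → A | past x n = v} = {x | (past x (n + k)).take n = v} := by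
        ext x; simp [past_take]
      rw [this]
      exact pastM_set _ (fun w => w.take n = v)
  exact this hD

/-- the cylinder after the origin -/
def cy (u : List A) : Set (ℤ → A) := {x | blk x 1 u.length = u}

lemma measurableSet_cy (u : List A) : MeasurableSet (cy u) := measurableSet_blk_eq _ _ _

open Classical in
lemma Good.key3 {μ : Measure (ℤ → A)} (hμ : Good X S μ) (v : List A) (hus : PL S us) :
    μ (Gv X S v us) = ew (hTop X) us * μ (Fv X S v) := by
  have := hμ.inv.prob
  refine le_antisymm (hμ.key2 v hus) ?_
  have h1 : μ (Fv X S v) ≤ ∑' u, (if PL S u then μ (Gv X S v u) else 0) := by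
    have h2 : μ (Fv X S v) ≤ μ (⋃ u : List A, if PL S u then Gv X S v u else ∅) := by
      apply measure_mono_ae
      filter_upwards [hμ.visits] with x hx hF
      obtain ⟨s, hs, hs2⟩ := hx.1 0
      have hex : ∃ k : ℕ, 0 < k ∧ sh k x ∈ Ev X S := ⟨s.toNat, by omega, by rwa [Int.toNat_of_nonneg hs.le]⟩
      have hk := Nat.find_spec hex
      set k := Nat.find hex with hkdef
      have hpl : PL S (blk x 1 k) := by
        rw [← PL_first hF.1 hk.1]
        refine ⟨hk.2, fun j hj hjk hcon => Nat.find_min hex hjk ⟨hj, hcon⟩⟩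
      refine Set.mem_iUnion.2 ⟨blk x 1 k, ?_⟩
      rw [if_pos hpl]
      refine ⟨hF, ?_⟩
      simp
    refine (h2.trans (measure_iUnion_le _)).trans (le_of_eq ?_)
    congr 1; funext u
    split_ifs <;> simp
  have h2 : ∑' u, (if PL S u then μ (Gv X S v u) else 0) + ew (hTop X) us * μ (Fv X S v) ≤ μ (Gv X S v us) + μ (Fv X S v) := by
    have hK := prime_kraft hμ.loops
    rw [ENNReal.tsum_eq_add_tsum_ite us] at hK ⊢
    rw [if_pos hus] at hK ⊢
    calc _ ≤ μ (Gv X S v us) + (∑' u, (if u = us then 0 else (if PL S u then ew (hTop X) u else 0))) * μ (Fv X S v) + ew (hTop X) us * μ (Fv X S v) := by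
          gcongr
          rw [← ENNReal.tsum_mul_right]
          apply ENNReal.tsum_le_tsum
          intro u
          split_ifs with h1 h2
          · simp
          · exact hμ.key2 v h2
          · simp
      _ = μ (Gv X S v us) + (ew (hTop X) us + ∑' u, (if u = us then 0 else (if PL S u then ew (hTop X) u else 0))) * μ (Fv X S v) := by ring
      _ ≤ μ (Gv X S v us) + 1 * μ (Fv X S v) := by gcongr; exact le_of_eq_of_le (by congr!) hK
      _ = _ := by rw [one_mul]
  have h3 : μ (Fv X S v) + ew (hTop X) us * μ (Fv X S v) ≤ μ (Fv X S v) + μ (Gv X S v us) := by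
    rw [add_comm _ (μ (Gv X S v us))]
    refine le_trans ?_ h2
    gcongr
  exact (ENNReal.add_le_add_iff_left (measure_ne_top _ _)).1 h3

lemma Good.prime {μ : Measure (ℤ → A)} (hμ : Good X S μ) (hus : PL S us) {D : Set (ℤ → A)} (hD : MeasurableSet[pastM A] D) :
    μ (D ∩ Ev X S ∩ cy us) = ew (hTop X) us * μ (D ∩ Ev X S) := by
  have := hμ.inv.prob
  have hE := measurableSet_Ev X S
  set ρ1 := (μ.restrict (Ev X S ∩ cy us)).trim (pastM_le (A := A)) with h1
  set ρ2 := (ew (hTop X) us • μ.restrict (Ev X S)).trim (pastM_le (A := A)) with h2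
  have hfin1 : IsFiniteMeasure ρ1 := isFiniteMeasure_trim _
  have hval : ∀ D, MeasurableSet[pastM A] D → ρ1 D = μ (D ∩ Ev X S ∩ cy us) ∧ ρ2 D = ew (hTop X) us * μ (D ∩ Ev X S) := by
    intro D hD
    have hD' := pastM_le D hD
    rw [h1, h2, trim_measurableSet_eq _ hD, trim_measurableSet_eq _ hD, Measure.restrict_apply hD', Measure.smul_apply, Measure.restrict_apply hD', inter_assoc]
    exact ⟨rfl, rfl⟩
  have hgen : ∀ n v, μ ({x | past x n = v} ∩ Ev X S ∩ cy us) = ew (hTop X) us * μ ({x | past x n = v} ∩ Ev X S) := by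
    intro n v
    by_cases hn : v.length = n
    · subst hn
      have := hμ.key3 v hus
      unfold Gv Fv at this
      rw [inter_comm (Ev X S)] at this
      exact this
    · have : {x : ℤ → A | past x n = v} = ∅ := by
        ext x; simp only [mem_ofPred_eq, mem_empty_iff_false, iff_false]
        rintro rfl; simp at hn
      rw [this]; simp
  have heq : ρ1 = ρ2 := by
    refine @ext_of_generate_finite _ (pastM A) ρ1 ρ2 (pastGen A) rfl pastGen_pi hfin1 ?_ ?_
    · rintro s (rfl | ⟨n, v, rfl⟩)
      · simp
      · have h := hval _ (pastM_set n (fun w => w = v))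
        rw [h.1, h.2]
        exact hgen n v
    · have h := hval _ (pastM_set 0 (fun w => w = []))
      have e : {x : ℤ → A | past x 0 = []} = univ := by
        ext x; simp [past, blk_zero]
      rw [e] at h
      rw [h.1, h.2]
      have := hgen 0 []
      rwa [e] at this
  have h := hval D hD
  rw [← h.1, ← h.2, heq]

lemma Loop.split {u : List A} (hu : Loop S u) (hne : u ≠ []) : ∃ u1 u2, u = u1 ++ u2 ∧ PL S u1 ∧ Loop S u2 := by
  classical
  have hex : ∃ k, 0 < k ∧ k ≤ u.length ∧ Loop S (u.take k) := ⟨u.length, List.length_pos_of_ne_nil hne, le_rfl, by simpa using hu⟩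
  obtain ⟨h1, h2, h3⟩ := Nat.find_spec hex
  set k := Nat.find hex with hk
  refine ⟨u.take k, u.drop k, (List.take_append_drop k u).symm, ⟨?_, h3, ?_⟩, ?_⟩
  · intro h; have := congrArg List.length h; simp at this; rcases this with h | h
    · omega
    · exact hne h
  · intro v hv hv0 hvl
    by_contra hcon
    have hl := hv.length_le
    have hvt : v = u.take v.length := by
      have := hv.trans (List.take_prefix k u)
      rwa [List.prefix_iff_eq_take] at this
    rw [List.length_take, min_eq_left h2] at hl
    have hlt : v.length < k := by
      rcases hl.lt_or_eq with h | h
      · exact h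
      · exact absurd (by rw [hvt, h]) hcon
    exact Nat.find_min hex hlt ⟨List.length_pos_of_ne_nil hv0, by omega, by rw [← hvt]; exact hvl⟩
  · rw [← List.take_append_drop k u] at hu
    exact (Loop.append h3).1 hu

lemma Good.loop {μ : Measure (ℤ → A)} (hμ : Good X S μ) (u : List A) (hu : Loop S u) {D : Set (ℤ → A)} (hD : MeasurableSet[pastM A] D) :
    μ (D ∩ Ev X S ∩ cy u) = ew (hTop X) u * μ (D ∩ Ev X S) := by
  induction hl : u.length using Nat.strong_induction_on generalizing u D with
  | _ n ih =>
  by_cases hne : u = []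
  · subst hne
    have : (cy [] : Set (ℤ → A)) = univ := by ext x; simp [cy, blk_zero]
    rw [this, ew_nil, one_mul, inter_univ]
  obtain ⟨u1, u2, rfl, h1, h2⟩ := hu.split hne
  have hpos : 0 < u1.length := List.length_pos_of_ne_nil h1.1
  set k := u1.length with hk
  set D2 : Set (ℤ → A) := {y | sh (-(k : ℤ)) y ∈ D ∩ Ev X S} ∩ {y | past y k = u1} with hD2
  have hD2m : MeasurableSet[pastM A] D2 := 
    MeasurableSet.inter (pastM_sh k (MeasurableSet.inter hD (pastM_Ev X S))) (pastM_set k (fun w => w = u1))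
  have e1 : ∀ y : ℤ → A, sh k (sh (-(k : ℤ)) y) = y := fun y => by rw [sh_sh, add_neg_cancel, sh_zero]
  have e2 : ∀ y : ℤ → A, sh (-(k : ℤ)) (sh k y) = y := fun y => by rw [sh_sh, neg_add_cancel, sh_zero]
  have hA : D ∩ Ev X S ∩ cy (u1 ++ u2) = {x | sh k x ∈ D2 ∩ Ev X S ∩ cy u2} := by
    ext x
    simp only [mem_inter_iff, mem_ofPred_eq, hD2, e2, cy]
    rw [past_sh_self, List.length_append, blk_add, ← hk]
    have happ : blk x 1 k ++ blk x (1 + k) u2.length = u1 ++ u2 ↔ blk x 1 k = u1 ∧ blk x (1 + k) u2.length = u2 :=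
      ⟨fun h => List.append_inj h (by simp [hk]), fun h => by rw [h.1, h.2]⟩
    rw [happ, blk_sh]
    constructor
    · rintro ⟨⟨h3, h4⟩, h5, h6⟩
      refine ⟨⟨⟨⟨h3, h4⟩, h5⟩, ?_⟩, h6⟩
      rw [Ev_sh h4, h5]; exact h1.2.1
    · rintro ⟨⟨⟨⟨h3, h4⟩, h5⟩, -⟩, h6⟩
      exact ⟨⟨h3, h4⟩, h5, h6⟩
  have hB : D ∩ Ev X S ∩ cy u1 = {x | sh k x ∈ D2 ∩ Ev X S} := by
    ext x
    simp only [mem_inter_iff, mem_ofPred_eq, hD2, e2, cy]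
    rw [past_sh_self, ← hk]
    constructor
    · rintro ⟨⟨h3, h4⟩, h5⟩
      refine ⟨⟨⟨h3, h4⟩, h5⟩, ?_⟩
      rw [Ev_sh h4, h5]; exact h1.2.1
    · rintro ⟨⟨⟨h3, h4⟩, h5⟩, -⟩
      exact ⟨⟨h3, h4⟩, h5⟩
  have hm1 : MeasurableSet (D2 ∩ Ev X S) := (pastM_le _ hD2m).inter (measurableSet_Ev X S)
  rw [hA, hμ.inv.measure_sh k (hm1.inter (measurableSet_cy u2)), ih u2.length (by rw [← hl]; simp; omega) u2 h2 hD2m rfl,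
    ← hμ.inv.measure_sh k hm1, ← hB, hμ.prime h1 hD, ew_append]
  ring

end meas

end Part9

section Part10
open scoped ENNReal
set_option linter.unusedSectionVars false
variable {A : Type*}

section meas
variable [Fintype A] [TopologicalSpace A] [DiscreteTopology A] [MeasurableSpace A] [BorelSpace A]
variable {X : Set (ℤ → A)} {S : Set (ℕ → A)}

/-- proportional sets -/
def Bal (μ ν : Measure (ℤ → A)) (a b : ℝ≥0∞) (G : Set (ℤ → A)) : Prop :=
  MeasurableSet G ∧ μ G * b = ν G * a

lemma meas_union {μ : Measure (ℤ → A)} {G : Set (ℤ → A)} {ι : Type*} [Countable ι] {F : ι → Set (ℤ → A)}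
    (hm : ∀ i, MeasurableSet (F i)) (hsub : ∀ i, F i ⊆ G) (hdis : Pairwise (Function.onFun Disjoint F))
    (hc : ∀ᵐ x ∂μ, x ∈ G → ∃ i, x ∈ F i) : μ G = ∑' i, μ (F i) := by
  rw [← measure_iUnion hdis hm]
  apply le_antisymm
  · apply measure_mono_ae
    filter_upwards [hc] with x hx hG
    exact mem_iUnion.2 (hx hG)
  · exact measure_mono (iUnion_subset hsub)

lemma Bal.union {μ ν : Measure (ℤ → A)} {a b : ℝ≥0∞} {G : Set (ℤ → A)} {ι : Type*} [Countable ι] (F : ι → Set (ℤ → A))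
    (hG : MeasurableSet G)
    (hF : ∀ i, Bal μ ν a b (F i)) (hsub : ∀ i, F i ⊆ G) (hdis : Pairwise (Function.onFun Disjoint F))
    (hc : ∀ᵐ x ∂μ, x ∈ G → ∃ i, x ∈ F i) (hd : ∀ᵐ x ∂ν, x ∈ G → ∃ i, x ∈ F i) : Bal μ ν a b G := by
  refine ⟨hG, ?_⟩
  rw [meas_union (fun i => (hF i).1) hsub hdis hc, meas_union (fun i => (hF i).1) hsub hdis hd,
    ← ENNReal.tsum_mul_right, ← ENNReal.tsum_mul_right]
  exact tsum_congr fun i => (hF i).2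

lemma Bal.words {μ ν : Measure (ℤ → A)} {a b : ℝ≥0∞} {E : Set (ℤ → A)} (hE : MeasurableSet E) (n : ℕ) (Q : List A → Prop)
    (h : ∀ u, u.length = n → Q u → Bal μ ν a b (E ∩ cy u)) : Bal μ ν a b (E ∩ {x | Q (blk x 1 n)}) := by
  have hcy : ∀ (u : List A) (x : ℤ → A), u.length = n → (x ∈ cy u ↔ blk x 1 n = u) := by
    intro u x hu; unfold cy; rw [hu]; rfl
  refine Bal.union (ι := {u : List A // u.length = n ∧ Q u}) (fun u => E ∩ cy u.1)
    (hE.inter (measurableSet_blk 1 n Q)) (fun u => h u.1 u.2.1 u.2.2) ?_ ?_ ?_ ?_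
  · rintro ⟨u, hu, hQ⟩ x ⟨hx, hxu⟩
    refine ⟨hx, ?_⟩
    rw [hcy u x hu] at hxu
    simpa [hxu] using hQ
  · rintro ⟨u, hu, hQ⟩ ⟨u', hu', hQ'⟩ hne
    rw [Function.onFun, Set.disjoint_left]
    rintro x ⟨-, h1⟩ ⟨-, h2⟩
    rw [hcy u x hu] at h1
    rw [hcy u' x hu'] at h2
    exact hne (Subtype.ext (h1.symm.trans h2))
  all_goals
    refine Eventually.of_forall fun x hx => ⟨⟨blk x 1 n, by simp, hx.2⟩, hx.1, ?_⟩
    simp only [hcy _ x (blk_length x 1 n)]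

lemma Bal.sh {μ ν : Measure (ℤ → A)} {a b : ℝ≥0∞} {G : Set (ℤ → A)} (hμ : Inv μ) (hν : Inv ν) (h : Bal μ ν a b G) (t : ℤ) :
    Bal μ ν a b {x | QFTPaper.sh t x ∈ G} :=
  ⟨measurable_sh t h.1, by rw [hμ.measure_sh t h.1, hν.measure_sh t h.1, h.2]⟩

lemma Bal.loop {μ ν : Measure (ℤ → A)} (hμ : Good X S μ) (hν : Good X S ν) {u : List A} (hu : Loop S u) :
    Bal μ ν (μ (Ev X S)) (ν (Ev X S)) (Ev X S ∩ cy u) := by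
  refine ⟨(measurableSet_Ev X S).inter (measurableSet_cy u), ?_⟩
  have h1 := hμ.loop u hu (@MeasurableSet.univ _ (pastM A))
  have h2 := hν.loop u hu (@MeasurableSet.univ _ (pastM A))
  rw [univ_inter] at h1 h2
  rw [h1, h2]; ring

lemma Bal.cyl {μ ν : Measure (ℤ → A)} (hμ : Good X S μ) (hν : Good X S ν) (c : List A) :
    Bal μ ν (μ (Ev X S)) (ν (Ev X S)) (Ev X S ∩ cy c) := by
  have hE := measurableSet_Ev X S
  set F : ℕ → Set (ℤ → A) := fun k => {x | x ∈ Ev X S ∧ x ∈ cy c ∧ c.length ≤ k ∧ QFTPaper.sh k x ∈ Ev X S ∧ ∀ j : ℕ, c.length ≤ j → j < k → QFTPaper.sh j x ∉ Ev X S} with hF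
  have hFeq : ∀ k, F k = Ev X S ∩ {x | (fun u : List A => c.length ≤ k ∧ u.take c.length = c ∧ Loop S u ∧ ∀ j : ℕ, c.length ≤ j → j < k → ¬ Loop S (u.take j)) (blk x 1 k)} := by
    intro k
    ext x
    simp only [hF, mem_inter_iff, mem_ofPred_eq]
    constructor
    · rintro ⟨h1, h2, h3, h4, h5⟩
      refine ⟨h1, h3, ?_, (Ev_sh h1 k S).1 h4, fun j hj hjk hcon => h5 j hj hjk ?_⟩
      · rw [blk_take _ _ _ _ h3]; exact h2
      · rw [blk_take _ _ _ _ hjk.le] at hcon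
        exact (Ev_sh h1 j S).2 hcon
    · rintro ⟨h1, h3, h2, h4, h5⟩
      refine ⟨h1, ?_, h3, (Ev_sh h1 k S).2 h4, fun j hj hjk hcon => h5 j hj hjk ?_⟩
      · rw [blk_take _ _ _ _ h3] at h2; exact h2
      · rw [blk_take _ _ _ _ hjk.le]
        exact (Ev_sh h1 j S).1 hcon
  have hcov : ∀ (ρ : Measure (ℤ → A)), Good X S ρ → ∀ᵐ x ∂ρ, x ∈ Ev X S ∩ cy c → ∃ k, x ∈ F k := by
    intro ρ hρ
    classical
    filter_upwards [hρ.visits] with x hx hxE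
    obtain ⟨s, hs, hs2⟩ := hx.1 c.length
    have hex : ∃ k : ℕ, c.length ≤ k ∧ QFTPaper.sh k x ∈ Ev X S := ⟨s.toNat, by omega, by
      rwa [Int.toNat_of_nonneg (by omega)]⟩
    have hk := Nat.find_spec hex
    exact ⟨Nat.find hex, hxE.1, hxE.2, hk.1, hk.2, fun j hj hjk hcon => Nat.find_min hex hjk ⟨hj, hcon⟩⟩
  refine Bal.union F (hE.inter (measurableSet_cy c)) ?_ ?_ ?_ (hcov μ hμ) (hcov ν hν)
  · intro k
    rw [hFeq]
    exact Bal.words hE k (fun u : List A => c.length ≤ k ∧ u.take c.length = c ∧ Loop S u ∧ ∀ j : ℕ, c.length ≤ j → j < k → ¬ Loop S (u.take j))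
      (fun u _ hu => Bal.loop hμ hν hu.2.2.1)
  · intro k x hx; exact ⟨hx.1, hx.2.1⟩
  · intro i j hij
    rw [Function.onFun, Set.disjoint_left]
    rintro x ⟨-, -, h1, h2, h3⟩ ⟨-, -, h4, h5, h6⟩
    rcases lt_or_gt_of_ne hij with h | h
    · exact h6 i h1 h h2
    · exact h3 j h4 h h5

lemma Bal.cy {μ ν : Measure (ℤ → A)} (hμ : Good X S μ) (hν : Good X S ν) (c : List A) :
    Bal μ ν (μ (Ev X S)) (ν (Ev X S)) (QFTPaper.cy c) := by
  have hE := measurableSet_Ev X S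
  set F : ℕ → Set (ℤ → A) := fun k => {x | x ∈ QFTPaper.cy c ∧ QFTPaper.sh (-(k : ℤ)) x ∈ Ev X S ∧ ∀ j : ℕ, j < k → QFTPaper.sh (-(j : ℤ)) x ∉ Ev X S} with hF
  have hFeq : ∀ k : ℕ, F k = {x | QFTPaper.sh (-(k : ℤ)) x ∈ Ev X S ∩ {y | (fun u : List A => u.drop k = c ∧ ∀ i : ℕ, 0 < i → i ≤ k → ¬ Loop S (u.take i)) (blk y 1 (k + c.length))}} := by
    intro k
    ext x
    simp only [hF, mem_inter_iff, mem_ofPred_eq, QFTPaper.cy]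
    rw [blk_drop, blk_sh]
    have e : (1 : ℤ) + k + -k = 1 := by ring
    rw [e]
    constructor
    · rintro ⟨h1, h2, h3⟩
      refine ⟨h2, h1, fun i hi hik hcon => ?_⟩
      rw [blk_take _ _ _ _ (by omega)] at hcon
      have := (Ev_sh h2 i S).2 hcon
      rw [sh_sh] at this
      apply h3 (k - i) (by omega)
      convert this using 2
      omega
    · rintro ⟨h2, h1, h3⟩
      refine ⟨h1, h2, fun j hj hcon => ?_⟩
      apply h3 (k - j) (by omega) (by omega)
      rw [blk_take _ _ _ _ (by omega)]
      apply (Ev_sh h2 (k - j) S).1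
      rw [sh_sh]
      convert hcon using 2
      omega
  have hcov : ∀ (ρ : Measure (ℤ → A)), Good X S ρ → ∀ᵐ x ∂ρ, x ∈ QFTPaper.cy c → ∃ k, x ∈ F k := by
    intro ρ hρ
    classical
    filter_upwards [hρ.visits] with x hx hxE
    obtain ⟨s, hs, hs2⟩ := hx.2 0
    have hex : ∃ k : ℕ, QFTPaper.sh (-(k : ℤ)) x ∈ Ev X S := ⟨s.natAbs, by
      convert hs2 using 2; omega⟩
    have hk := Nat.find_spec hex
    exact ⟨Nat.find hex, hxE, hk, fun j hjk hcon => Nat.find_min hex hjk hcon⟩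
  refine Bal.union F (measurableSet_cy c) ?_ ?_ ?_ (hcov μ hμ) (hcov ν hν)
  · intro k
    rw [hFeq]
    exact (Bal.words hE (k + c.length) (fun u : List A => u.drop k = c ∧ ∀ i : ℕ, 0 < i → i ≤ k → ¬ Loop S (u.take i)) (fun u _ hu => Bal.cyl hμ hν u)).sh hμ.inv hν.inv _
  · intro k x hx; exact hx.1
  · intro i j hij
    rw [Function.onFun, Set.disjoint_left]
    rintro x ⟨-, h2, h3⟩ ⟨-, h5, h6⟩
    rcases lt_or_gt_of_ne hij with h | h
    · exact h6 i h h2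
    · exact h3 j h h5

lemma ext_win {μ ν : Measure (ℤ → A)} [IsProbabilityMeasure μ] [IsProbabilityMeasure ν]
    (h : ∀ a n v, μ {x | blk x a n = v} = ν {x | blk x a n = v}) : μ = ν := by
  set win : ℕ → (ℤ → A) → List A := fun n x => blk x (-(n : ℤ)) (2 * n + 1) with hwin
  have hw : ∀ n m : ℕ, n ≤ m → ∀ x, win n x = ((win m x).drop (m - n)).take (2 * n + 1) := by
    intro n m hnm x
    simp only [hwin]
    have e : 2 * m + 1 = (m - n) + (m + n + 1) := by omega
    rw [e, blk_drop, blk_take _ _ _ _ (by omega)]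
    congr 1; omega
  have hset : ∀ n v, μ {x | win n x = v} = ν {x | win n x = v} := fun n v => h _ _ _
  have hms : ∀ n v, MeasurableSet {x | win n x = v} := fun n v => measurableSet_blk_eq _ _ _
  refine @ext_of_generate_finite _ _ μ ν {D | D = ∅ ∨ ∃ n v, D = {x | win n x = v}} ?_
    (pi_nested win (fun n m w => (w.drop (m - n)).take (2 * n + 1)) hw) _ ?_ (by simp)
  · apply le_antisymm
    · refine iSup_le fun i => ?_
      rw [MeasurableSpace.comap_le_iff_le_map]
      intro s hs
      rw [MeasurableSpace.map_def]
      have e : (fun x : ℤ → A => x i) ⁻¹' s = ⋃ v : List A, ⋃ (_ : ∃ x : ℤ → A, win i.natAbs x = v ∧ x i ∈ s), {x | win i.natAbs x = v} := by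
        ext x
        simp only [mem_preimage, mem_iUnion, mem_ofPred_eq, exists_prop]
        constructor
        · intro hx; exact ⟨_, ⟨x, rfl, hx⟩, rfl⟩
        · rintro ⟨v, ⟨y, hy, hys⟩, hx⟩
          have h1 : win i.natAbs x = win i.natAbs y := hx.trans hy.symm
          simp only [hwin] at h1
          rw [blk_eq_blk_iff] at h1
          have h2 := h1 (i + i.natAbs).toNat (by omega)
          have e2 : -(i.natAbs : ℤ) + ((i + i.natAbs).toNat : ℤ) = i := by omega
          rw [e2] at h2
          rwa [h2]
      rw [e]
      refine MeasurableSet.iUnion fun v => MeasurableSet.iUnion fun _ => ?_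
      exact MeasurableSpace.measurableSet_generateFrom (Or.inr ⟨_, v, rfl⟩)
    · apply MeasurableSpace.generateFrom_le
      rintro t (rfl | ⟨n, v, rfl⟩)
      · exact MeasurableSet.empty
      · exact hms n v
  · rintro s (rfl | ⟨n, v, rfl⟩)
    · simp
    · exact hset n v

lemma ext_blk {μ ν : Measure (ℤ → A)} (hμ : Inv μ) (hν : Inv ν) (h : ∀ c, μ (cy c) = ν (cy c)) : μ = ν := by
  have := hμ.prob
  have := hν.prob
  refine ext_win fun a n v => ?_
  by_cases hl : v.length = n
  · have e : {x | blk x a n = v} = {x : ℤ → A | sh (a - 1) x ∈ cy v} := by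
      ext x
      simp only [cy, mem_ofPred_eq, blk_sh, hl]
      rw [show (1 : ℤ) + (a - 1) = a by ring]
    rw [e, hμ.measure_sh _ (measurableSet_cy v), hν.measure_sh _ (measurableSet_cy v), h]
  · have : {x : ℤ → A | blk x a n = v} = ∅ := by
      ext x; simp only [mem_ofPred_eq, mem_empty_iff_false, iff_false]
      rintro rfl; simp at hl
    rw [this]; simp

lemma Good.unique {μ ν : Measure (ℤ → A)} (hμ : Good X S μ) (hν : Good X S ν) : μ = ν := by
  have := hμ.inv.prob
  have := hν.inv.prob
  have huniv : (cy [] : Set (ℤ → A)) = univ := by ext x; simp [cy, blk_zero]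
  have h0 := (Bal.cy hμ hν []).2
  rw [huniv, measure_univ, measure_univ, one_mul, one_mul] at h0
  have hne : μ (Ev X S) ≠ 0 := by
    intro hz
    have h1 : ∀ᵐ x ∂μ, ∀ t : ℤ, sh t x ∉ Ev X S := by
      rw [ae_all_iff]
      intro t
      have := hμ.inv.measure_sh t (measurableSet_Ev X S)
      rw [hz] at this
      exact measure_eq_zero_iff_ae_notMem.1 this
    obtain ⟨x, hx1, t, hx2⟩ := (h1.and hμ.sat).exists
    exact hx1 t hx2
  refine ext_blk hμ.inv hν.inv fun c => ?_
  have h1 := (Bal.cy hμ hν c).2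
  rw [h0] at h1
  exact (ENNReal.mul_left_inj hne (measure_ne_top _ _)).1 h1

end meas

end Part10

section Part11
open scoped ENNReal
set_option linter.unusedSectionVars false
variable {A : Type*}

section meas
variable [Fintype A] [TopologicalSpace A] [DiscreteTopology A] [MeasurableSpace A] [BorelSpace A]

lemma integrable_blk (μ : Measure (ℤ → A)) [IsProbabilityMeasure μ] (a : ℤ) (n : ℕ) (g : List A → ℝ) :
    Integrable (fun x => g (blk x a n)) μ := by
  refine Integrable.of_bound (C := ∑ w : Fin n → A, |g (List.ofFn w)|) ?_ (Eventually.of_forall fun x => ?_)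
  · apply Measurable.aestronglyMeasurable
    intro s hs
    exact measurableSet_blk a n (fun v => g v ∈ s)
  · rw [Real.norm_eq_abs]
    exact Finset.single_le_sum (f := fun w : Fin n → A => |g (List.ofFn w)|) (fun _ _ => abs_nonneg _)
      (Finset.mem_univ (fun i : Fin n => x (a + (i : ℕ))))

lemma integral_blk (μ : Measure (ℤ → A)) [IsProbabilityMeasure μ] (a : ℤ) (n : ℕ) (g : List A → ℝ) :
    ∫ x, g (blk x a n) ∂μ = ∑ w : Fin n → A, μ.real {x | blk x a n = List.ofFn w} * g (List.ofFn w) := by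
  rw [← sum_real_blk μ a n _ (integrable_blk μ a n g)]
  refine Finset.sum_congr rfl fun w _ => ?_
  have : ∫ x in {x | blk x a n = List.ofFn w}, g (blk x a n) ∂μ = ∫ x in {x | blk x a n = List.ofFn w}, g (List.ofFn w) ∂μ := by
    refine setIntegral_congr_fun (measurableSet_blk_eq a n _) ?_
    intro x hx
    simp only [mem_ofPred_eq] at hx
    simp only [hx]
  rw [this]; simp

lemma He_int (μ : Measure (ℤ → A)) [IsProbabilityMeasure μ] (a : ℤ) (n : ℕ) :
    He μ a n = ∫ x, - Real.log (μ.real {y | blk y a n = blk x a n}) ∂μ := by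
  rw [integral_blk μ a n (fun v => - Real.log (μ.real {y | blk y a n = v}))]
  unfold He
  refine Finset.sum_congr rfl fun w _ => ?_
  unfold Real.negMulLog; ring

lemma ae_pos (μ : Measure (ℤ → A)) (a : ℤ) (n : ℕ) : ∀ᵐ x ∂μ, μ {y | blk y a n = blk x a n} ≠ 0 := by
  have : ∀ᵐ x ∂μ, ∀ v : List A, μ {y | blk y a n = v} = 0 → blk x a n ≠ v := by
    rw [ae_all_iff]
    intro v
    by_cases h : μ {y | blk y a n = v} = 0
    · have := measure_eq_zero_iff_ae_notMem.1 h
      filter_upwards [this] with x hx _ using hx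
    · exact Eventually.of_forall fun x hx => absurd hx h
  filter_upwards [this] with x hx h0
  exact hx _ h0 rfl

open Classical in
lemma sum_blk_ennreal (μ : Measure (ℤ → A)) [IsProbabilityMeasure μ] (a : ℤ) (n : ℕ) :
    ∑' v : List A, (if v.length = n then μ {y | blk y a n = v} else 0) = 1 := by
  rw [← measure_univ (μ := μ), meas_union (μ := μ) (G := univ) (F := fun v : List A => {y : ℤ → A | blk y a n = v})
    (fun v => measurableSet_blk_eq _ _ _) (fun _ => subset_univ _) ?_ (Eventually.of_forall fun x _ => ⟨_, rfl⟩)]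
  · refine tsum_congr fun v => ?_
    split_ifs with h
    · rfl
    · have : {x : ℤ → A | blk x a n = v} = ∅ := by
        ext x; simp only [mem_ofPred_eq, mem_empty_iff_false, iff_false]
        rintro rfl; simp at h
      rw [this]; simp
  · intro v w hvw
    rw [Function.onFun, Set.disjoint_left]
    intro x h1 h2
    exact hvw (h1.symm.trans h2)

lemma He_add (μ : Measure (ℤ → A)) [IsProbabilityMeasure μ] (a : ℤ) (m n : ℕ) :
    He μ a (m + n) ≤ He μ a m + He μ (a + m) n := by
  classical
  rw [He_int μ a m, He_int μ (a + m) n]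
  have i1 := integrable_blk μ a m (fun v => - Real.log (μ.real {y | blk y a m = v}))
  have i2 := integrable_blk μ (a + m) n (fun v => - Real.log (μ.real {y | blk y (a + m) n = v}))
  rw [← integral_add i1 i2]
  refine gibbs μ a (m + n) (fun v => μ {y | blk y a m = v.take m} * μ {y | blk y (a + m) n = v.drop m}) ?_ _ (i1.add i2) ?_
  · have hinj : Function.Injective (fun v : List A => (v.take m, v.drop m)) := by
      intro v v' h
      simp only [Prod.mk.injEq] at h
      rw [← List.take_append_drop m v, h.1, h.2, List.take_append_drop]
    have h1 := ENNReal.tsum_comp_le_tsum_of_injective hinj (fun p : List A × List A =>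
          (if p.1.length = m then μ {y | blk y a m = p.1} else 0) *
          (if p.2.length = n then μ {y | blk y (a + m) n = p.2} else 0))
    rw [ENNReal.tsum_prod'] at h1
    simp only [ENNReal.tsum_mul_left, ENNReal.tsum_mul_right, sum_blk_ennreal, mul_one] at h1
    refine le_trans (ENNReal.tsum_le_tsum fun v => ?_) h1
    split_ifs with h h2 h3 h3
    · exact le_rfl
    · exfalso; apply h3; simp [h]
    · exfalso; apply h2; simp [h]
    · exfalso; apply h2; simp [h]
    all_goals simp
  · filter_upwards [ae_pos μ a m, ae_pos μ (a + m) n] with x h1 h2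
    have e1 : (blk x a (m + n)).take m = blk x a m := blk_take _ _ _ _ (by omega)
    rw [e1, blk_drop]
    have h1' : 0 < μ.real {y | blk y a m = blk x a m} := ENNReal.toReal_pos h1 (measure_ne_top _ _)
    have h2' : 0 < μ.real {y | blk y (a + m) n = blk x (a + m) n} := ENNReal.toReal_pos h2 (measure_ne_top _ _)
    rw [neg_add, neg_neg, neg_neg, Real.exp_add, Real.exp_log h1', Real.exp_log h2', ENNReal.ofReal_mul h1'.le]
    simp [Measure.real]

lemma He_card (μ : Measure (ℤ → A)) [IsProbabilityMeasure μ] (a : ℤ) (n : ℕ) (s : Set (List A)) (hs : s.Finite)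
    (h : ∀ᵐ x ∂μ, blk x a n ∈ s) : He μ a n ≤ Real.log (Nat.card s) := by
  classical
  have hne : Nonempty s := by
    obtain ⟨x, hx⟩ := h.exists
    exact ⟨_, hx⟩
  have := hs.to_subtype
  have hc : 0 < Nat.card s := Nat.card_pos
  have hI : ∫ x : ℤ → A, Real.log (Nat.card s) ∂μ = Real.log (Nat.card s) := by simp
  rw [← hI]
  refine gibbs μ a n (fun v => if v ∈ s then (Nat.card s : ℝ≥0∞)⁻¹ else 0) ?_ _ (integrable_const _) ?_
  · refine le_trans (ENNReal.tsum_le_tsum (g := fun v : List A => if v ∈ s then (Nat.card s : ℝ≥0∞)⁻¹ else 0) fun v => ?_) ?_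
    · split_ifs <;> simp
    · have := tsum_set_const s hs (Nat.card s : ℝ≥0∞)⁻¹
      refine le_of_eq_of_le ?_ (ENNReal.mul_inv_le_one (Nat.card s : ℝ≥0∞))
      rw [← this]
  · filter_upwards [h] with x hx
    rw [if_pos hx, Real.exp_neg, Real.exp_log (by exact_mod_cast hc), ENNReal.ofReal_inv_of_pos (by exact_mod_cast hc)]
    simp

lemma He_le (μ : Measure (ℤ → A)) [IsProbabilityMeasure μ] (a : ℤ) (n : ℕ) : He μ a n ≤ n * Real.log (Fintype.card A) :=
  (He_card μ a n {l | l.length = n} (List.finite_length_eq A n) (Eventually.of_forall fun x => by simp)).trans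
    (log_card_le n _ (fun _ h => h))

lemma He_nonneg (μ : Measure (ℤ → A)) [IsProbabilityMeasure μ] (a : ℤ) (n : ℕ) : 0 ≤ He μ a n :=
  Finset.sum_nonneg fun _ _ => Real.negMulLog_nonneg measureReal_nonneg measureReal_le_one

lemma He_mul (μ : Measure (ℤ → A)) [IsProbabilityMeasure μ] (a : ℤ) (m K : ℕ) :
    He μ a (K * m) ≤ ∑ i ∈ Finset.range K, He μ (a + (i * m : ℕ)) m := by
  induction K with
  | zero => simpa using He_le μ a 0
  | succ K ih =>
    rw [Finset.sum_range_succ, Nat.succ_mul]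
    exact (He_add μ a (K * m) m).trans (by gcongr)

lemma sum_blocks (g : ℕ → ℝ) (m K : ℕ) :
    ∑ j ∈ Finset.range m, ∑ i ∈ Finset.range K, g (j + i * m) = ∑ t ∈ Finset.range (K * m), g t := by
  rw [Finset.sum_comm]
  induction K with
  | zero => simp
  | succ K ih =>
    rw [Finset.sum_range_succ, ih, Nat.succ_mul, Finset.sum_range_add]
    congr 1
    exact Finset.sum_congr rfl fun j _ => by rw [add_comm]

lemma He_mis (μ : Measure (ℤ → A)) [IsProbabilityMeasure μ] (m n : ℕ) (hmn : m ≤ n) (hm : 0 < m) :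
    m * He μ 0 n ≤ ∑ t ∈ Finset.range n, He μ t m + 2 * m * m * Real.log (Fintype.card A) := by
  set c := Real.log (Fintype.card A) with hc
  have hc0 : 0 ≤ c := log_card_nonneg _
  obtain ⟨K, hK⟩ : ∃ K, n / m = K + 1 := ⟨n / m - 1, by have := Nat.div_pos hmn hm; omega⟩
  have hdm := Nat.div_add_mod n m
  have hlt := Nat.mod_lt n hm
  have hn : n = K * m + m + n % m := by rw [hK] at hdm; nlinarith
  have h1 : ∀ j ∈ Finset.range m, He μ 0 n ≤ ∑ i ∈ Finset.range K, He μ ((j + i * m : ℕ) : ℤ) m + 2 * m * c := by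
    intro j hj
    rw [Finset.mem_range] at hj
    have e : n = j + K * m + (n - K * m - j) := by omega
    have h2 : (j : ℝ) + ((n - K * m - j : ℕ) : ℝ) ≤ 2 * m := by
      have : j + (n - K * m - j) ≤ 2 * m := by omega
      exact_mod_cast this
    calc He μ 0 n = He μ 0 (j + K * m + (n - K * m - j)) := by rw [← e]
      _ ≤ (He μ 0 j + He μ (0 + j) (K * m)) + He μ (0 + (j + K * m : ℕ)) (n - K * m - j) :=
          (He_add _ _ _ _).trans (by gcongr; exact He_add _ _ _ _)
      _ ≤ (j * c + ∑ i ∈ Finset.range K, He μ ((0 : ℤ) + j + (i * m : ℕ)) m) + (n - K * m - j : ℕ) * c := by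
          gcongr
          · exact He_le _ _ _
          · exact He_mul _ _ _ _
          · exact He_le _ _ _
      _ = ∑ i ∈ Finset.range K, He μ ((j + i * m : ℕ) : ℤ) m + ((j : ℝ) + ((n - K * m - j : ℕ) : ℝ)) * c := by
          have : ∀ i : ℕ, (0 : ℤ) + j + (i * m : ℕ) = ((j + i * m : ℕ) : ℤ) := by intro i; push_cast; ring
          simp only [this]; ring
      _ ≤ _ := by gcongr
  have h2 := Finset.sum_le_sum h1
  rw [Finset.sum_const, Finset.card_range, nsmul_eq_mul, Finset.sum_add_distrib, sum_blocks (fun t : ℕ => He μ (t : ℤ) m),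
    Finset.sum_const, Finset.card_range, nsmul_eq_mul] at h2
  have h3 : ∑ t ∈ Finset.range (K * m), He μ (t : ℤ) m ≤ ∑ t ∈ Finset.range n, He μ (t : ℤ) m := by
    apply Finset.sum_le_sum_of_subset_of_nonneg
    · intro i hi; simp at hi ⊢; omega
    · intro i _ _; exact He_nonneg _ _ _
  nlinarith

lemma He_concave {ν μ : Measure (ℤ → A)} (m n : ℕ) (hn : 0 < n)
    (h : ∀ v, μ.real {x | blk x 0 m = v} = ∑ t ∈ Finset.range n, (1 / n : ℝ) * ν.real {x | blk x (t : ℤ) m = v}) :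
    ∑ t ∈ Finset.range n, He ν t m ≤ n * He μ 0 m := by
  have hn' : (0 : ℝ) < n := by exact_mod_cast hn
  unfold He
  rw [Finset.sum_comm, Finset.mul_sum]
  refine Finset.sum_le_sum fun w _ => ?_
  have := Real.concaveOn_negMulLog.le_map_sum (t := Finset.range n) (w := fun _ => (1 / n : ℝ))
    (p := fun t : ℕ => ν.real {x | blk x (t : ℤ) m = List.ofFn w}) (fun _ _ => by positivity)
    (by simp; field_simp) (fun _ _ => by simp)
  simp only [smul_eq_mul] at this
  rw [← h, ← Finset.mul_sum, one_div, inv_mul_le_iff₀ hn'] at this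
  exact this

lemma negMulLog_add_le {x y : ℝ} (hx : 0 ≤ x) (hy : 0 ≤ y) : Real.negMulLog (x + y) ≤ Real.negMulLog x + Real.negMulLog y := by
  have key : ∀ x y : ℝ, 0 ≤ x → 0 ≤ y → x * Real.log x ≤ x * Real.log (x + y) := by
    intro x y hx hy
    rcases hx.eq_or_lt with h | h
    · rw [← h]; simp
    · gcongr; linarith
  have h1 := key x y hx hy
  have h2 := key y x hy hx
  rw [add_comm y x] at h2
  unfold Real.negMulLog
  linarith

lemma He_mix {μ μ1 μ2 : Measure (ℤ → A)} [IsProbabilityMeasure μ1] [IsProbabilityMeasure μ2] {a b : ℝ} (ha : 0 ≤ a) (hb : 0 ≤ b)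
    (h : ∀ G, MeasurableSet G → μ.real G = a * μ1.real G + b * μ2.real G) (p : ℤ) (n : ℕ) :
    He μ p n ≤ a * He μ1 p n + b * He μ2 p n + (Real.negMulLog a + Real.negMulLog b) := by
  have hs : ∀ (ρ : Measure (ℤ → A)) [IsProbabilityMeasure ρ], ∑ w : Fin n → A, ρ.real {x | blk x p n = List.ofFn w} = 1 := by
    intro ρ _
    have := integral_blk ρ p n (fun _ => 1)
    simpa using this.symm
  have h1 : ∀ w : Fin n → A, Real.negMulLog (μ.real {x | blk x p n = List.ofFn w}) ≤
    (a * Real.negMulLog (μ1.real {x | blk x p n = List.ofFn w}) + b * Real.negMulLog (μ2.real {x | blk x p n = List.ofFn w})) +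
    (μ1.real {x | blk x p n = List.ofFn w} * Real.negMulLog a + μ2.real {x | blk x p n = List.ofFn w} * Real.negMulLog b) := by
    intro w
    rw [h _ (measurableSet_blk_eq _ _ _)]
    refine (negMulLog_add_le (mul_nonneg ha measureReal_nonneg) (mul_nonneg hb measureReal_nonneg)).trans ?_
    rw [Real.negMulLog_mul, Real.negMulLog_mul]
    linarith
  unfold He
  refine (Finset.sum_le_sum fun w _ => h1 w).trans ?_
  rw [Finset.sum_add_distrib, Finset.sum_add_distrib, Finset.sum_add_distrib, ← Finset.sum_mul, ← Finset.sum_mul, hs, hs,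
    Finset.mul_sum, Finset.mul_sum]
  linarith

end meas

end Part11

section Part12
open scoped ENNReal
set_option linter.unusedSectionVars false
variable {A : Type*}

section meas
variable [Fintype A] [TopologicalSpace A] [DiscreteTopology A] [MeasurableSpace A] [BorelSpace A]

lemma stage0 {X : Set (ℤ → A)} (hX : IsSubshift X) (hne : X.Nonempty) (n : ℕ) :
    ∃ ν : Measure (ℤ → A), IsProbabilityMeasure ν ∧ ν Xᶜ = 0 ∧ Real.log (Nat.card (Lang X n)) ≤ He ν 0 n := by
  classical
  have hfin : (Lang X n).Finite := finite_of_length n _ (Lang_len n)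
  have hch : ∀ w : Lang X n, ∃ x ∈ X, blk x 0 n = w := fun w => ((Lang_iff n w.1).1 w.2).2
  choose pt hpt1 hpt2 using hch
  have := hfin.to_subtype
  have hneL : Nonempty (Lang X n) := by
    obtain ⟨x, hx⟩ := hne
    exact ⟨⟨_, mem_Lang hX hx 0 n⟩⟩
  set s := Set.range pt with hs
  have hsf : s.Finite := Set.finite_range pt
  have hinj : Function.Injective pt := by
    intro v w h
    apply Subtype.ext
    rw [← hpt2 v, ← hpt2 w, h]
  have hcard : s.ncard = Nat.card (Lang X n) := by
    rw [hs, ← Set.image_univ, Set.ncard_image_of_injective _ hinj, Set.ncard_univ]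
  set N := Nat.card (Lang X n) with hN
  have hNpos : 0 < N := Nat.card_pos
  have hcount : Measure.count s = (N : ℝ≥0∞) := by
    rw [Measure.count_apply_finite s hsf, ← Set.ncard_eq_toFinset_card s hsf, hcard]
  refine ⟨ProbabilityTheory.uniformOn s, ProbabilityTheory.isProbabilityMeasure_uniformOn hsf (Set.range_nonempty pt), ?_, ?_⟩
  · rw [ProbabilityTheory.uniformOn_eq_zero_iff hsf]
    ext x
    simp only [mem_inter_iff, mem_compl_iff, mem_empty_iff_false, iff_false, not_and, not_not]
    rintro ⟨w, rfl⟩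
    exact hpt1 w
  · have hprob := ProbabilityTheory.isProbabilityMeasure_uniformOn hsf (Set.range_nonempty pt)
    set ν := ProbabilityTheory.uniformOn s with hν
    have hle : ∀ v, ν.real {x | blk x 0 n = v} ≤ 1 / N := by
      intro v
      have h1 : ν {x | blk x 0 n = v} ≤ (N : ℝ≥0∞)⁻¹ := by
        rw [hν, ProbabilityTheory.uniformOn, ProbabilityTheory.cond_apply hsf.measurableSet, hcount]
        have h2 : (s ∩ {x | blk x 0 n = v}).Subsingleton := by
          rintro x ⟨⟨w, rfl⟩, hx⟩ y ⟨⟨w', rfl⟩, hy⟩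
          simp only [mem_ofPred_eq, hpt2] at hx hy
          congr 1
          exact Subtype.ext (hx.trans hy.symm)
        have h3 : Measure.count (s ∩ {x | blk x 0 n = v}) ≤ 1 := by
          rcases h2.eq_empty_or_singleton with h | ⟨x, h⟩
          · rw [h]; simp
          · rw [h, Measure.count_singleton]
        calc _ ≤ (N : ℝ≥0∞)⁻¹ * 1 := by gcongr
          _ = _ := mul_one _
      have := ENNReal.toReal_mono (by simp; omega) h1
      simpa [Measure.real] using this
    have hsum : ∑ w : Fin n → A, ν.real {x | blk x 0 n = List.ofFn w} = 1 := by
      have := integral_blk ν 0 n (fun _ => 1)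
      simpa using this.symm
    have hNr : (0 : ℝ) < N := by exact_mod_cast hNpos
    calc Real.log N = ∑ w : Fin n → A, ν.real {x | blk x 0 n = List.ofFn w} * Real.log N := by
          rw [← Finset.sum_mul, hsum, one_mul]
      _ ≤ _ := by
          refine Finset.sum_le_sum fun w _ => ?_
          have hp0 : 0 ≤ ν.real {x | blk x 0 n = List.ofFn w} := measureReal_nonneg
          have hp1 := hle (List.ofFn w)
          rcases hp0.eq_or_lt with h | h
          · rw [← h]; simp
          · have h5 : Real.log (ν.real {x | blk x 0 n = List.ofFn w}) ≤ Real.log (1 / N) := Real.log_le_log h hp1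
            rw [one_div, Real.log_inv] at h5
            unfold Real.negMulLog
            nlinarith

lemma stage1 {X : Set (ℤ → A)} (hX : IsSubshift X) (hne : X.Nonempty) (n : ℕ) (hn : 0 < n) :
    ∃ μ : Measure (ℤ → A), IsProbabilityMeasure μ ∧ μ Xᶜ = 0 ∧
      (∀ G, MeasurableSet G → |μ.real {x | sh 1 x ∈ G} - μ.real G| ≤ 1 / n) ∧
      (∀ m : ℕ, 0 < m → m ≤ n → m * Real.log (Nat.card (Lang X n)) ≤ n * He μ 0 m + 2 * m * m * Real.log (Fintype.card A)) := by
  obtain ⟨ν, hν, hνX, hνH⟩ := stage0 hX hne n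
  have hn' : (0 : ℝ) < n := by exact_mod_cast hn
  have hXm : MeasurableSet X := hX.1.measurableSet
  set μ : Measure (ℤ → A) := ∑ t ∈ Finset.range n, (n : ℝ≥0∞)⁻¹ • ν.map (sh (t : ℤ)) with hμ
  have hval : ∀ G, MeasurableSet G → μ G = ∑ t ∈ Finset.range n, (n : ℝ≥0∞)⁻¹ * ν {x | sh (t : ℤ) x ∈ G} := by
    intro G hG
    rw [hμ, Measure.finsetSum_apply]
    refine Finset.sum_congr rfl fun t _ => ?_
    rw [Measure.smul_apply, Measure.map_apply (measurable_sh _) hG]; rfl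
  have hvalr : ∀ G, MeasurableSet G → μ.real G = ∑ t ∈ Finset.range n, (1 / n : ℝ) * ν.real {x | sh (t : ℤ) x ∈ G} := by
    intro G hG
    rw [Measure.real, hval G hG, ENNReal.toReal_sum]
    · refine Finset.sum_congr rfl fun t _ => ?_
      rw [ENNReal.toReal_mul]; simp [Measure.real]
    · intro t _
      exact ENNReal.mul_ne_top (by simp; omega) (measure_ne_top _ _)
  refine ⟨μ, ⟨?_⟩, ?_, ?_, ?_⟩
  · rw [hval _ MeasurableSet.univ]
    simp
    exact ENNReal.mul_inv_cancel (by simp; omega) (by simp)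
  · rw [hval _ hXm.compl]
    refine Finset.sum_eq_zero fun t _ => ?_
    have : {x : ℤ → A | sh (t : ℤ) x ∈ Xᶜ} = Xᶜ := by
      ext x; simp [sh_mem hX]
    rw [this, hνX, mul_zero]
  · intro G hG
    rw [hvalr {x | sh 1 x ∈ G} (measurable_sh 1 hG), hvalr _ hG, ← Finset.mul_sum, ← Finset.mul_sum, ← mul_sub, ← Finset.sum_sub_distrib]
    have e : ∀ t : ℕ, {x : ℤ → A | sh (t : ℤ) x ∈ {x | sh 1 x ∈ G}} = {x | sh ((t + 1 : ℕ) : ℤ) x ∈ G} := by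
      intro t; ext x; simp only [mem_ofPred_eq, sh_sh]; rw [add_comm]; push_cast; rfl
    simp only [e]
    rw [Finset.sum_range_sub (fun t : ℕ => ν.real {x | sh (t : ℤ) x ∈ G}), abs_mul, abs_of_nonneg (by positivity : (0 : ℝ) ≤ 1 / n)]
    have h1 : ∀ G : Set (ℤ → A), 0 ≤ ν.real G ∧ ν.real G ≤ 1 := fun G => ⟨measureReal_nonneg, measureReal_le_one⟩
    have h2 : |ν.real {x | sh (n : ℤ) x ∈ G} - ν.real {x | sh ((0 : ℕ) : ℤ) x ∈ G}| ≤ 1 := by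
      rw [abs_le]; constructor <;> linarith [h1 {x | sh (n : ℤ) x ∈ G}, h1 {x | sh ((0 : ℕ) : ℤ) x ∈ G}]
    calc _ ≤ (1 / n : ℝ) * 1 := by gcongr
      _ = _ := mul_one _
  · intro m hm hmn
    have h1 := He_mis ν m n hmn hm
    have h2 : ∑ t ∈ Finset.range n, He ν t m ≤ n * He μ 0 m := by
      refine He_concave m n hn fun v => ?_
      rw [hvalr _ (measurableSet_blk_eq _ _ _)]
      simp [blk_sh]
    have h3 : m * Real.log (Nat.card (Lang X n)) ≤ m * He ν 0 n := by gcongr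
    linarith

lemma isClopen_blk (a : ℤ) (n : ℕ) (v : List A) : IsClopen {x : ℤ → A | blk x a n = v} := by
  have hc : Continuous (fun x : ℤ → A => fun i : Fin n => x (a + (i : ℕ))) := by fun_prop
  have : {x : ℤ → A | blk x a n = v} = (fun x : ℤ → A => fun i : Fin n => x (a + (i : ℕ))) ⁻¹' {w | List.ofFn w = v} := rfl
  rw [this]
  exact (isClopen_discrete _).preimage hc

lemma exists_pre {X : Set (ℤ → A)} (hX : IsSubshift X) (hne : X.Nonempty) :
    ∃ μ : Measure (ℤ → A), Inv μ ∧ μ Xᶜ = 0 ∧ ∀ m : ℕ, m * hTop X ≤ blockEntropy μ m := by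
  have hex : ∀ k : ℕ, ∃ n : ℕ, k < n ∧ (hTop X - 1 / (k + 1)) * n ≤ Real.log (Nat.card (Lang X n)) := by
    intro k
    obtain ⟨n, hn, h⟩ := frequently_atTop.1 (Lang_lower X (ε := 1 / ((k : ℝ) + 1)) (by positivity)) (k + 1)
    exact ⟨n, hn, h⟩
  choose nn hnk hnL using hex
  have hst := fun k => stage1 hX hne (nn k) (by have := hnk k; omega)
  choose P hP hPX hPinv hPH using hst
  set Q : ℕ → ProbabilityMeasure (ℤ → A) := fun k => ⟨P k, hP k⟩ with hQ
  obtain ⟨lam, -, hlam⟩ := (isCompact_univ (X := ProbabilityMeasure (ℤ → A))).ultrafilter_le_nhds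
    ((hyperfilter ℕ).map Q) (by simp)
  have hlim : Tendsto Q (hyperfilter ℕ : Filter ℕ) (nhds lam) := hlam
  have hat : (hyperfilter ℕ : Filter ℕ) ≤ atTop := by
    rw [← Nat.cofinite_eq_atTop]; exact hyperfilter_le_cofinite
  have hnn : Tendsto (fun k => (1 : ℝ) / (nn k : ℝ)) (hyperfilter ℕ : Filter ℕ) (nhds 0) := by
    have h1 : Tendsto nn atTop atTop := tendsto_atTop_mono (fun k => (hnk k).le) tendsto_id
    exact ((tendsto_one_div_atTop_nhds_zero_nat (𝕜 := ℝ)).comp h1).mono_left hat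
  have hcl : ∀ G : Set (ℤ → A), IsClopen G → Tendsto (fun k => (P k).real G) (hyperfilter ℕ : Filter ℕ) (nhds ((lam : Measure (ℤ → A)).real G)) := by
    intro G hG
    have := ProbabilityMeasure.tendsto_measure_of_null_frontier_of_tendsto' hlim (E := G) (by rw [hG.frontier_eq]; simp)
    exact (ENNReal.tendsto_toReal (measure_ne_top _ _)).comp this
  have hinv : Inv (lam : Measure (ℤ → A)) := by
    refine ⟨inferInstance, measurable_sh 1, ?_⟩
    have hpm : IsProbabilityMeasure ((lam : Measure (ℤ → A)).map shift) := Measure.isProbabilityMeasure_map (measurable_sh 1).aemeasurable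
    refine ext_win fun a n v => ?_
    rw [Measure.map_apply (show Measurable (shift : (ℤ → A) → (ℤ → A)) from measurable_sh 1) (measurableSet_blk_eq _ _ _)]
    have e : shift ⁻¹' {x : ℤ → A | blk x a n = v} = {x | blk x (a + 1) n = v} := by
      ext x; simp only [mem_preimage, mem_ofPred_eq, ← sh_one, blk_sh]
    have h1 := hcl _ (isClopen_blk (a + 1) n v)
    have h2 := hcl _ (isClopen_blk a n v)
    have h3 : Tendsto (fun k => (P k).real {x : ℤ → A | blk x (a + 1) n = v} - (P k).real {x : ℤ → A | blk x a n = v}) (hyperfilter ℕ : Filter ℕ) (nhds 0) := by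
      refine squeeze_zero_norm (fun k => ?_) hnn
      have := hPinv k {x | blk x a n = v} (measurableSet_blk_eq _ _ _)
      simp only [mem_ofPred_eq, blk_sh] at this
      exact this
    have h4 := tendsto_nhds_unique (h1.sub h2) h3
    rw [e]
    rw [sub_eq_zero] at h4
    exact (ENNReal.toReal_eq_toReal_iff' (measure_ne_top _ _) (measure_ne_top _ _)).1 h4
  refine ⟨lam, hinv, ?_, ?_⟩
  · have := ProbabilityMeasure.le_liminf_measure_open_of_tendsto hlim (G := Xᶜ) hX.1.isOpen_compl
    have e : ∀ k, (Q k : Measure (ℤ → A)) Xᶜ = 0 := hPX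
    simp only [e, liminf_const] at this
    exact le_antisymm this zero_le
  · intro m
    rcases Nat.eq_zero_or_pos m with rfl | hm
    · rw [He_zero]; simpa using He_nonneg _ _ _
    rw [He_zero]
    have hHe : Tendsto (fun k => He (P k) 0 m) (hyperfilter ℕ : Filter ℕ) (nhds (He (lam : Measure (ℤ → A)) 0 m)) := by
      unfold He
      refine tendsto_finsetSum _ fun w _ => ?_
      exact (Real.continuous_negMulLog.tendsto _).comp (hcl _ (isClopen_blk 0 m _))
    have h1 : Tendsto (fun k : ℕ => (1 : ℝ) / ((k : ℝ) + 1)) (hyperfilter ℕ : Filter ℕ) (nhds 0) :=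
      (tendsto_one_div_add_atTop_nhds_zero_nat (𝕜 := ℝ)).mono_left hat
    have hL : Tendsto (fun k : ℕ => (m : ℝ) * (hTop X - 1 / ((k : ℝ) + 1))) (hyperfilter ℕ : Filter ℕ) (nhds (m * (hTop X - 0))) :=
      (h1.const_sub _).const_mul _
    have hR := hHe.add (hnn.const_mul (2 * m * m * Real.log (Fintype.card A)))
    rw [sub_zero] at hL
    rw [mul_zero, add_zero] at hR
    refine le_of_tendsto_of_tendsto hL hR ?_
    have hev : ∀ᶠ k in (hyperfilter ℕ : Filter ℕ), m ≤ k := hat (eventually_ge_atTop m)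
    filter_upwards [hev] with k hk
    have h2 := hPH k m hm (by have := hnk k; omega)
    have h3 := hnL k
    have h4 : (0 : ℝ) < nn k := by have := hnk k; exact_mod_cast (by omega : 0 < nn k)
    have h5 : m * ((hTop X - 1 / ((k : ℝ) + 1)) * nn k) ≤ m * Real.log (Nat.card (Lang X (nn k))) := by gcongr
    have h6 : (m : ℝ) * (hTop X - 1 / ((k : ℝ) + 1)) * nn k ≤ (He (P k) 0 m + 2 * m * m * Real.log (Fintype.card A) * (1 / nn k)) * nn k := by
      have : (He (P k) 0 m + 2 * m * m * Real.log (Fintype.card A) * (1 / nn k)) * nn k = nn k * He (P k) 0 m + 2 * m * m * Real.log (Fintype.card A) := by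
        field_simp
      rw [this]; linarith
    exact le_of_mul_le_mul_right h6 h4

end meas

end Part12

section Part13
open scoped ENNReal
set_option linter.unusedSectionVars false
variable {A : Type*}

section meas
variable [Fintype A] [TopologicalSpace A] [DiscreteTopology A] [MeasurableSpace A] [BorelSpace A]

/-- Invariant measures carried by `X` with at least maximal block entropies. -/
structure Pre (X : Set (ℤ → A)) (μ : Measure (ℤ → A)) : Prop where
  inv : Inv μ
  supp : μ Xᶜ = 0
  low : ∀ n : ℕ, n * hTop X ≤ blockEntropy μ n

lemma le_of_eventually_nat_mul {a b c : ℝ} (h : ∀ᶠ k : ℕ in atTop, k * a ≤ k * b + c) : a ≤ b := by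
  by_contra hab
  push Not at hab
  have h1 : Tendsto (fun k : ℕ => (k : ℝ) * (a - b)) atTop atTop :=
    tendsto_natCast_atTop_atTop.atTop_mul_const (by linarith)
  obtain ⟨k, hk1, hk2⟩ := (h.and (h1.eventually_gt_atTop c)).exists
  linarith

lemma He_le_Lang {X : Set (ℤ → A)} (hX : IsSubshift X) (μ : Measure (ℤ → A)) [IsProbabilityMeasure μ]
    (hμ : μ Xᶜ = 0) (a : ℤ) (n : ℕ) : He μ a n ≤ Real.log (Nat.card (Lang X n)) := by
  refine He_card μ a n _ (finite_of_length n _ fun w hw => hw.1) ?_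
  have : ∀ᵐ x ∂μ, x ∈ X := by rw [ae_iff]; exact hμ
  filter_upwards [this] with x hx
  exact mem_Lang hX hx a n

lemma inv_cond {μ : Measure (ℤ → A)} (hμ : Inv μ) {D : Set (ℤ → A)} (hD : MeasurableSet D)
    (hinv : shift ⁻¹' D = D) (h0 : μ D ≠ 0) : Inv (ProbabilityTheory.cond μ D) := by
  have := hμ.prob
  refine ⟨ProbabilityTheory.cond_isProbabilityMeasure h0, ?_⟩
  have h1 := hμ.mp.restrict_preimage hD
  rw [hinv] at h1
  exact h1.smul_measure _

lemma Pre.cond {X : Set (ℤ → A)} (hX : IsSubshift X) {μ : Measure (ℤ → A)} (hμ : Pre X μ) {D : Set (ℤ → A)}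
    (hD : MeasurableSet D) (hinv : shift ⁻¹' D = D) (h0 : μ D ≠ 0) : Pre X (ProbabilityTheory.cond μ D) := by
  have hp := hμ.inv.prob
  have hI1 := inv_cond hμ.inv hD hinv h0
  have hp1 := hI1.prob
  have hs1 : ProbabilityTheory.cond μ D Xᶜ = 0 := ProbabilityTheory.cond_absolutelyContinuous hμ.supp
  by_cases h1 : μ Dᶜ = 0
  · have e : ProbabilityTheory.cond μ D = μ := by
      rw [ProbabilityTheory.cond, (prob_compl_eq_zero_iff hD).1 h1, inv_one, one_smul]
      exact Measure.restrict_eq_self_of_ae_mem (by rw [ae_iff]; exact h1)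
    rw [e]; exact hμ
  refine ⟨hI1, hs1, fun N => ?_⟩
  have hinv' : shift ⁻¹' Dᶜ = Dᶜ := by rw [preimage_compl, hinv]
  have hI2 := inv_cond hμ.inv hD.compl hinv' h1
  have hp2 := hI2.prob
  have hs2 : ProbabilityTheory.cond μ Dᶜ Xᶜ = 0 := ProbabilityTheory.cond_absolutelyContinuous hμ.supp
  set μ1 := ProbabilityTheory.cond μ D with hm1
  set μ2 := ProbabilityTheory.cond μ Dᶜ with hm2
  set a := μ.real D with ha
  set b := μ.real Dᶜ with hb
  have hab : a + b = 1 := by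
    have := measureReal_add_measureReal_compl (μ := μ) hD
    simpa using this
  have ha0 : 0 < a := ENNReal.toReal_pos h0 (measure_ne_top _ _)
  have hb0 : 0 ≤ b := measureReal_nonneg
  have hmix : ∀ G, MeasurableSet G → μ.real G = a * μ1.real G + b * μ2.real G := by
    intro G hG
    have := ProbabilityTheory.cond_add_cond_compl_eq (μ := μ) (t := G) hD
    rw [Measure.real, ← this, ENNReal.toReal_add (ENNReal.mul_ne_top (measure_ne_top _ _) (measure_ne_top _ _))
      (ENNReal.mul_ne_top (measure_ne_top _ _) (measure_ne_top _ _)), ENNReal.toReal_mul, ENNReal.toReal_mul]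
    simp only [Measure.real, ha, hb, hm1, hm2]
    ring
  rcases Nat.eq_zero_or_pos N with rfl | hN
  · have := He_nonneg μ1 0 0
    rw [He_zero]; simpa using this
  have key : ∀ ε : ℝ, 0 < ε → (N : ℝ) * hTop X ≤ a * He μ1 0 N + b * ((hTop X + ε) * N) := by
    intro ε hε
    refine le_of_eventually_nat_mul (c := Real.negMulLog a + Real.negMulLog b) ?_
    have hev : Tendsto (fun k : ℕ => k * N) atTop atTop := tendsto_id.atTop_mul_const' hN
    filter_upwards [hev.eventually (Lang_upper X hε)] with k hk
    have g1 := hμ.low (k * N)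
    rw [He_zero] at g1
    have g2 := He_mix ha0.le hb0 hmix 0 (k * N)
    have g3 : He μ1 0 (k * N) ≤ k * He μ1 0 N := by
      refine (He_mul μ1 0 N k).trans (le_of_eq ?_)
      rw [Finset.sum_congr rfl fun i _ => (He_inv hI1 (0 + ((i * N : ℕ) : ℤ)) N).symm]
      simp [He_zero]
    have g4 := (He_le_Lang hX μ2 hs2 0 (k * N)).trans hk
    push_cast at *
    have g5 := mul_le_mul_of_nonneg_left g3 ha0.le
    have g6 := mul_le_mul_of_nonneg_left g4 hb0
    linarith
  have key2 : (N : ℝ) * hTop X ≤ a * He μ1 0 N + b * (hTop X * N) := by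
    refine le_of_forall_pos_le_add fun δ hδ => ?_
    have hN' : (0 : ℝ) < N := by exact_mod_cast hN
    have := key (δ / N) (by positivity)
    have e : δ / N * N = δ := by field_simp
    have hb1 : b ≤ 1 := by linarith
    nlinarith
  rw [He_zero]
  have : a * (N * hTop X) ≤ a * He μ1 0 N := by
    have : b = 1 - a := by linarith
    rw [this] at key2; linarith
  exact le_of_mul_le_mul_left this ha0

lemma measurableSet_Sat (X : Set (ℤ → A)) (S : Set (ℕ → A)) : MeasurableSet (Sat X S) := by
  have : Sat X S = ⋃ t : ℤ, sh t ⁻¹' (Ev X S) := by ext x; simp [Sat]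
  rw [this]
  exact MeasurableSet.iUnion fun t => measurable_sh t (measurableSet_Ev X S)

lemma Sat_inv (X : Set (ℤ → A)) (S : Set (ℕ → A)) : shift ⁻¹' (Sat X S) = Sat X S := by
  ext x
  simp only [mem_preimage, Sat, mem_ofPred_eq, ← sh_one, sh_sh]
  constructor
  · rintro ⟨t, ht⟩; exact ⟨_, ht⟩
  · rintro ⟨t, ht⟩
    refine ⟨t - 1, ?_⟩
    convert ht using 2
    ring

lemma Ev_sub_Sat (X : Set (ℤ → A)) (S : Set (ℕ → A)) : Ev X S ⊆ Sat X S :=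
  fun x hx => ⟨0, by rwa [sh_zero]⟩

/-- A `Pre` measure carried by the saturation of `Ev X (fol X w)` is good. -/
lemma Pre.good {X : Set (ℤ → A)} (hX : IsSubshift X) (hnn : 0 ≤ hTop X) {μ : Measure (ℤ → A)} (hμ : Pre X μ)
    (w : List A) (hne : (fol X w).Nonempty) (hsat : ∀ᵐ x ∂μ, x ∈ Sat X (fol X w)) : Good X (fol X w) μ := by
  refine ⟨hμ.inv, fun u hu => ?_, hnn, hμ.low, hsat⟩
  refine Lang_of_fol_append hX w u ?_
  rw [fol_append, show der (fol X w) u = fol X w from hu]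
  exact hne

lemma fol_ne_of_charge {X : Set (ℤ → A)} (hX : IsSubshift X) {μ : Measure (ℤ → A)} (hs : μ Xᶜ = 0)
    {S : Set (ℕ → A)} (h : μ (Ev X S) ≠ 0) : S.Nonempty := by
  have : ¬ (Ev X S ⊆ Xᶜ) := fun hsub => h (measure_mono_null hsub hs)
  obtain ⟨x, hx, hxX⟩ := not_subset.1 this
  obtain ⟨n, hn⟩ := hx
  rw [← hn n le_rfl]
  exact fol_past_nonempty hX (by simpa using hxX) n

lemma KS_le {X : Set (ℤ → A)} (hX : IsSubshift X) {μ : Measure (ℤ → A)} (hμ : Pre X μ) : KSEntropy μ = hTop X := by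
  have hp := hμ.inv.prob
  have hbdd : BddBelow (range fun n : ℕ => blockEntropy μ (n + 1) / ((n : ℝ) + 1)) := by
    refine ⟨0, ?_⟩
    rintro _ ⟨n, rfl⟩
    simp only [He_zero]
    exact div_nonneg (He_nonneg μ 0 _) (by positivity)
  refine le_antisymm ?_ ?_
  · refine le_of_forall_pos_le_add fun ε hε => ?_
    obtain ⟨n, hn, hn0⟩ := ((Lang_upper X hε).and (eventually_ge_atTop 1)).exists
    obtain ⟨m, rfl⟩ : ∃ m, n = m + 1 := ⟨n - 1, by omega⟩
    refine (ciInf_le hbdd m).trans ?_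
    rw [div_le_iff₀ (by positivity), He_zero]
    have := (He_le_Lang hX μ hμ.supp 0 (m + 1)).trans hn
    push_cast at this; exact this
  · refine le_ciInf fun n => ?_
    rw [le_div_iff₀ (by positivity)]
    have := hμ.low (n + 1)
    push_cast at this; linarith

lemma IsMaxMeasure.pre {X : Set (ℤ → A)} {μ : Measure (ℤ → A)} (h : IsMaxMeasure X μ) : Pre X μ := by
  have hp := h.1
  refine ⟨⟨h.1, h.2.2.1.toMeasurePreserving⟩, h.2.1, fun n => ?_⟩
  rcases n with _ | n
  · rw [He_zero]; simpa using He_nonneg μ 0 0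
  have hbdd : BddBelow (range fun n : ℕ => blockEntropy μ (n + 1) / ((n : ℝ) + 1)) := by
    refine ⟨0, ?_⟩
    rintro _ ⟨n, rfl⟩
    simp only [He_zero]
    exact div_nonneg (He_nonneg μ 0 _) (by positivity)
  have h1 : KSEntropy μ ≤ _ := ciInf_le hbdd n
  rw [h.2.2.2, le_div_iff₀ (by positivity)] at h1
  push_cast; linarith

lemma main_left (X : Set (ℤ → A)) (hX : IsSubshift X) (h : hC X < hTop X) :
    {μ : Measure (ℤ → A) | IsMaxMeasure X μ}.Nonempty ∧ {μ : Measure (ℤ → A) | IsMaxMeasure X μ}.Finite := by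
  obtain ⟨s, hs1, hs2⟩ := exists_between h
  obtain ⟨r, hr1, hr2⟩ := exists_between hs1
  have hr0 := (LC_upper X hr1).1
  have hs0 : 0 ≤ s := by linarith
  have hT : 0 ≤ hTop X := by linarith
  obtain ⟨N, hN1, hN⟩ := exists_N X hr1 hr2
  have hch : ∀ μ : Measure (ℤ → A), Pre X μ → ∃ w : List A, w.length ≤ N ∧ μ (Ev X (fol X w)) ≠ 0 :=
    fun μ hμ => charge hμ.inv hX hμ.supp hs0 hN1 hN hs2 hμ.low
  constructor
  · have hne : X.Nonempty := by
      by_contra hemp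
      rw [not_nonempty_iff_eq_empty] at hemp
      obtain ⟨n, hn, hn0⟩ := ((Lang_lower X (ε := hTop X / 2) (by linarith)).and_eventually (eventually_ge_atTop 1)).exists
      have e : Lang X n = ∅ := by
        ext w; simp [Lang, hemp]
      rw [e] at hn
      simp at hn
      have : (1 : ℝ) ≤ n := by exact_mod_cast hn0
      nlinarith
    obtain ⟨lam, hl1, hl2, hl3⟩ := exists_pre hX hne
    have hlam : Pre X lam := ⟨hl1, hl2, hl3⟩
    obtain ⟨w, -, hw⟩ := hch lam hlam
    have hSne := fol_ne_of_charge hX hl2 hw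
    have hSm := measurableSet_Sat X (fol X w)
    have hS0 : lam (Sat X (fol X w)) ≠ 0 := fun h0 => hw (measure_mono_null (Ev_sub_Sat _ _) h0)
    have hmu := hlam.cond hX hSm (Sat_inv X (fol X w)) hS0
    have hmuS : ∀ᵐ x ∂(ProbabilityTheory.cond lam (Sat X (fol X w))), x ∈ Sat X (fol X w) := by
      exact ProbabilityTheory.ae_cond_mem hSm
    set μ := ProbabilityTheory.cond lam (Sat X (fol X w)) with hμd
    have hp := hmu.inv.prob
    have hgood : ∀ D : Set (ℤ → A), MeasurableSet D → shift ⁻¹' D = D → μ D ≠ 0 →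
        Good X (fol X w) (ProbabilityTheory.cond μ D) := by
      intro D hD hDi h0
      refine (hmu.cond hX hD hDi h0).good hX hT w hSne ?_
      exact ProbabilityTheory.cond_absolutelyContinuous.ae_le hmuS
    refine ⟨μ, hp, hmu.supp, ⟨hmu.inv.mp, ⟨fun D hD hDi => ?_⟩⟩, KS_le hX hmu⟩
    by_cases h0 : μ D = 0
    · rw [eventuallyConst_set']
      left
      exact ae_eq_empty.2 h0
    by_cases h1 : μ Dᶜ = 0
    · rw [eventuallyConst_set']
      right
      exact ae_eq_univ.2 h1
    exfalso
    have e := (hgood D hD hDi h0).unique (hgood Dᶜ hD.compl (by rw [preimage_compl, hDi]) h1)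
    have e1 := congrArg (fun ν : Measure (ℤ → A) => ν D) e
    simp only [ProbabilityTheory.cond_apply hD, ProbabilityTheory.cond_apply hD.compl] at e1
    simp only [inter_self, compl_inter_self, measure_empty, mul_zero] at e1
    rw [ENNReal.inv_mul_cancel h0 (measure_ne_top _ _)] at e1
    exact one_ne_zero e1
  · have hw : ∀ μ : Measure (ℤ → A), ∃ w : List A, IsMaxMeasure X μ → w.length ≤ N ∧ Good X (fol X w) μ := by
      intro μ
      by_cases hμ : IsMaxMeasure X μ
      · obtain ⟨w, hw1, hw2⟩ := hch μ hμ.pre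
        have hp := hμ.1
        refine ⟨w, fun _ => ⟨hw1, hμ.pre.good hX hT w (fol_ne_of_charge hX hμ.2.1 hw2) ?_⟩⟩
        have hS0 : μ (Sat X (fol X w)) ≠ 0 := fun h0 => hw2 (measure_mono_null (Ev_sub_Sat _ _) h0)
        rcases hμ.2.2.1.toPreErgodic.prob_eq_zero_or_one (measurableSet_Sat X (fol X w)) (Sat_inv X _) with h | h
        · exact absurd h hS0
        · rw [ae_iff]
          exact (prob_compl_eq_zero_iff (measurableSet_Sat X (fol X w))).2 h
      · exact ⟨[], fun h => absurd h hμ⟩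
    choose f hf using hw
    refine Set.Finite.of_injOn (f := f) (t := {w | w.length ≤ N}) (fun μ hμ => (hf μ hμ).1) ?_ (List.finite_length_le A N)
    intro μ hμ ν hν e
    have g1 := (hf μ hμ).2
    have g2 := (hf ν hν).2
    rw [← e] at g2
    exact g1.unique g2

end meas

end Part13

section Part14
open scoped ENNReal
set_option linter.unusedSectionVars false
variable {A : Type*}

/-- Reversal of bi-infinite sequences. -/
def RR (x : ℤ → A) : ℤ → A := fun n => x (-n)

lemma RR_RR (x : ℤ → A) : RR (RR x) = x := by funext n; simp [RR]

lemma mem_rev {X : Set (ℤ → A)} {x : ℤ → A} : x ∈ rev X ↔ RR x ∈ X := by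
  constructor
  · rintro ⟨y, hy, rfl⟩
    have : RR (RR y) ∈ X := by rwa [RR_RR]
    exact this
  · intro h
    exact ⟨RR x, h, RR_RR x⟩

lemma rev_rev (X : Set (ℤ → A)) : rev (rev X) = X := by
  ext x; rw [mem_rev, mem_rev, RR_RR]

lemma RR_sh (t : ℤ) (x : ℤ → A) : RR (sh t x) = sh (-t) (RR x) := by
  funext n; simp only [RR, sh]; congr 1; ring

lemma blk_RR (x : ℤ → A) (a : ℤ) (n : ℕ) : blk (RR x) a n = (blk x (1 - a - n) n).reverse := by
  refine List.ext_getElem (by simp [blk_length]) fun i h1 h2 => ?_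
  have hi : i < n := by simpa [blk_length] using h1
  simp only [blk, List.getElem_reverse, List.getElem_ofFn, List.length_ofFn, RR]
  congr 1
  omega

lemma hTop_rev [TopologicalSpace A] {X : Set (ℤ → A)} (hX : IsSubshift X) : hTop (rev X) = hTop X := by
  have e : ∀ n, Lang (rev X) n = List.reverse '' Lang X n := by
    intro n
    ext w
    rw [Lang_iff]
    constructor
    · rintro ⟨h1, x, hx, h2⟩
      refine ⟨blk (RR x) (1 - n) n, mem_Lang hX (mem_rev.1 hx) _ _, ?_⟩
      rw [blk_RR, List.reverse_reverse, ← h2]; congr 1; ring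
    · rintro ⟨v, hv, rfl⟩
      rw [Lang_iff] at hv
      obtain ⟨h1, x, hx, rfl⟩ := hv
      refine ⟨by simp [blk_length], RR (sh (n - 1) x), ?_, ?_⟩
      · rw [mem_rev, RR_RR, sh_mem hX]; exact hx
      · rw [blk_RR, blk_sh]; congr 2; ring
  unfold hTop
  congr 1
  funext n
  rw [e, Nat.card_image_of_injective List.reverse_injective]

lemma rev_subshift [TopologicalSpace A] {X : Set (ℤ → A)} (hX : IsSubshift X) : IsSubshift (rev X) := by
  constructor
  · have : rev X = RR ⁻¹' X := by ext x; exact mem_rev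
    rw [this]
    refine hX.1.preimage ?_
    unfold RR; fun_prop
  · ext x
    constructor
    · rintro ⟨y, hy, rfl⟩
      rw [mem_rev] at *
      rw [← sh_one, RR_sh, sh_mem hX]; exact hy
    · intro hx
      refine ⟨sh (-1) x, ?_, ?_⟩
      · rw [mem_rev] at *
        rw [RR_sh, sh_mem hX]; exact hx
      · rw [← sh_one, sh_sh]; simp [sh_zero]

section meas
variable [Fintype A] [TopologicalSpace A] [DiscreteTopology A] [MeasurableSpace A] [BorelSpace A]

lemma measurable_RR : Measurable (RR : (ℤ → A) → (ℤ → A)) := by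
  unfold RR
  exact measurable_pi_lambda _ fun n => measurable_pi_apply _

/-- The shift as a measurable equivalence. -/
def shiftEquiv : (ℤ → A) ≃ᵐ (ℤ → A) where
  toFun := shift
  invFun := sh (-1)
  left_inv x := by rw [← sh_one, sh_sh]; simp [sh_zero]
  right_inv x := by rw [← sh_one, sh_sh]; simp [sh_zero]
  measurable_toFun := measurable_sh 1
  measurable_invFun := measurable_sh (-1)

lemma blockEntropy_RR {μ : Measure (ℤ → A)} (hμ : Inv μ) (n : ℕ) :
    blockEntropy (μ.map RR) n = blockEntropy μ n := by
  rw [He_zero, He_inv hμ (1 - n) n]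
  unfold He
  refine Fintype.sum_equiv (Equiv.arrowCongr Fin.revPerm (Equiv.refl A)) _ _ fun w => ?_
  congr 1
  rw [Measure.real, Measure.real, Measure.map_apply measurable_RR (measurableSet_blk_eq _ _ _)]
  congr 2
  ext x
  simp only [mem_preimage, mem_ofPred_eq, blk_RR, sub_zero]
  rw [List.reverse_eq_iff]
  have : (List.ofFn w).reverse = List.ofFn ((Equiv.arrowCongr Fin.revPerm (Equiv.refl A)) w) := by
    refine List.ext_getElem (by simp) fun i h1 h2 => ?_
    simp only [List.getElem_reverse, List.getElem_ofFn, List.length_ofFn, Equiv.arrowCongr_apply,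
      Function.comp_apply, Equiv.refl_apply]
    congr 1
    ext
    simp [Fin.revPerm]
    omega
  rw [this]

lemma max_RR {X : Set (ℤ → A)} (hX : IsSubshift X) {μ : Measure (ℤ → A)} (h : IsMaxMeasure X μ) :
    IsMaxMeasure (rev X) (μ.map RR) := by
  have hp := h.1
  have hXm : MeasurableSet (rev X) := (rev_subshift hX).1.measurableSet
  refine ⟨Measure.isProbabilityMeasure_map measurable_RR.aemeasurable, ?_, ?_, ?_⟩
  · rw [Measure.map_apply measurable_RR hXm.compl]
    have : RR ⁻¹' (rev X)ᶜ = Xᶜ := by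
      ext x; simp [mem_rev, RR_RR]
    rw [this]; exact h.2.1
  · have h1 : Ergodic (shiftEquiv (A := A)) μ := h.2.2.1
    have h2 : Ergodic (sh (-1) : (ℤ → A) → (ℤ → A)) μ := h1.symm
    have h3 : MeasurePreserving RR μ (μ.map RR) := ⟨measurable_RR, rfl⟩
    refine h3.ergodic_of_ergodic_semiconj h2 (show Measurable (shift : (ℤ → A) → (ℤ → A)) from measurable_sh 1) ?_
    intro x
    rw [RR_sh, ← sh_one, neg_neg]
  · rw [hTop_rev hX, ← h.2.2.2]
    unfold KSEntropy
    simp only [blockEntropy_RR ⟨h.1, h.2.2.1.toMeasurePreserving⟩]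

lemma map_RR_RR (μ : Measure (ℤ → A)) : (μ.map RR).map RR = μ := by
  rw [Measure.map_map measurable_RR measurable_RR]
  have : (RR ∘ RR : (ℤ → A) → (ℤ → A)) = id := by funext x; exact RR_RR x
  rw [this, Measure.map_id]

lemma main_all (X : Set (ℤ → A)) (h : IsQFT X) :
    {μ : Measure (ℤ → A) | IsMaxMeasure X μ}.Nonempty ∧ {μ : Measure (ℤ → A) | IsMaxMeasure X μ}.Finite := by
  obtain ⟨hX, hlt⟩ := h
  rcases min_lt_iff.1 hlt with h1 | h1
  · exact main_left X hX h1
  · have hX' := rev_subshift hX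
    obtain ⟨⟨μ, hμ⟩, hfin⟩ := main_left (rev X) hX' (by rwa [hTop_rev hX])
    constructor
    · refine ⟨μ.map RR, ?_⟩
      have := max_RR hX' hμ
      rwa [rev_rev] at this
    · refine Set.Finite.of_injOn (f := fun μ : Measure (ℤ → A) => μ.map RR) (fun μ hμ => max_RR hX hμ) ?_ hfin
      intro μ _ ν _ e
      have := congrArg (fun m : Measure (ℤ → A) => m.map RR) e
      simpa only [map_RR_RR] using this

end meas

end Part14

/-- A subshift of quasi-finite type admits at least one and
at most finitely many maximum measures. -/
theorem qft_finitely_many_max_measures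
    {A : Type*} [Fintype A] [TopologicalSpace A] [DiscreteTopology A]
    [MeasurableSpace A] [BorelSpace A]
    (X : Set (ℤ → A)) (h : IsQFT X) :
    {μ : Measure (ℤ → A) | IsMaxMeasure X μ}.Nonempty ∧
    {μ : Measure (ℤ → A) | IsMaxMeasure X μ}.Finite := by
  exact main_all X h

end QFTPaper
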